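/- arXiv:2402.02575 — 2 statements merged into one kernel-verified Lean document; each statement's English description precedes it below -/
import Mathlib

section
/- For every ε > 0 there exists an fiid labelling f : X → (V → Fin 4) of the 4-regular tree T_4 such that for μ-a.e. x ∈ X the labelling f(x) is a proper coloring of G (i.e. f(x)(u) ≠ f(x)(v) whenever u and v are adjacent), and such that for every vertex v ∈ V, μ({x : f(x)(v) = 3}) < ε. -/
/-!
Call a colouring unimprovable at scale `N` if no recolouring of at most `2 * N + 1` vertices in a
ball of radius `N` lowers the number of monochromatic edges. Performing improvements in disjoint
balls selected by the labels, every local proposal being made infinitely often, converges by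
mass transport to a factor-of-iid unimprovable colouring, and recolours little if there were few
monochromatic edges to begin with.

In an unimprovable colouring a monochromatic edge can be pushed along any chain of vertices each
of which is the only one of its colour among the further neighbours of its predecessor, so chains
of length at most `N` do not meet: at most one of them ends along the edges into a given vertex.
With `3` colours on the `4`-regular tree every chain extends in at least one way, so the density
of monochromatic edges is at most `1 / (N + 1)`; with `4` colours it extends in at least three
ways and the density is at most `3⁻ᴺ`. Starting from a good `3`-colouring and improving with
`4` colours at the scales `k, k + 1, …`, the total recolouring converges and is small, and no
monochromatic edge survives.
-/

open MeasureTheory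

namespace FiidColoring

variable {V : Type*} {G : SimpleGraph V}

section TreeGeometry

theorem dist_iso (hconn : G.Connected) (φ : G ≃g G) (u v : V) :
    G.dist (φ u) (φ v) = G.dist u v := by
  have dist_map_le (ψ : G ≃g G) (a b : V) : G.dist (ψ a) (ψ b) ≤ G.dist a b := by
    obtain ⟨p, hp⟩ := hconn.exists_walk_length_eq_dist a b
    rw [← hp, ← p.length_map ψ.toHom]
    exact SimpleGraph.dist_le _
  refine (dist_map_le φ u v).antisymm ?_
  simpa using dist_map_le φ.symm (φ u) (φ v)

theorem dist_eq_add_one_or_add_one_eq (hT : G.IsTree) {a w : V} (h : G.Adj a w) (b : V) :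
    G.dist w b = G.dist a b + 1 ∨ G.dist w b + 1 = G.dist a b := by
  have := hT.dist_eq_dist_add_one_of_adj b h
  rw [G.dist_comm (u := w), G.dist_comm (u := a)]
  omega

theorem eq_of_adj_of_dist_add_one_eq (hT : G.IsTree) {a w w' b : V} (h : G.Adj a w)
    (h' : G.Adj a w') (hd : G.dist w b + 1 = G.dist a b) (hd' : G.dist w' b + 1 = G.dist a b) :
    w = w' := by
  obtain ⟨p, hp⟩ := hT.connected.exists_walk_length_eq_dist w b
  obtain ⟨p', hp'⟩ := hT.connected.exists_walk_length_eq_dist w' b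
  have hpath : (p.cons h).IsPath := SimpleGraph.Walk.isPath_of_length_eq_dist _ (by simp [hp, hd])
  have hpath' : (p'.cons h').IsPath :=
    SimpleGraph.Walk.isPath_of_length_eq_dist _ (by simp [hp', hd'])
  have := (hT.isAcyclic.subsingleton_path _ _).elim ⟨_, hpath⟩ ⟨_, hpath'⟩
  simp only [Subtype.mk.injEq, SimpleGraph.Walk.cons.injEq] at this
  exact this.1

theorem exists_adj_dist_add_one_eq (hconn : G.Connected) {a b : V} (h : a ≠ b) :
    ∃ w, G.Adj a w ∧ G.dist w b + 1 = G.dist a b := by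
  obtain ⟨p, hp⟩ := hconn.exists_walk_length_eq_dist a b
  cases p with
  | nil => exact absurd rfl h
  | @cons _ w _ haw p =>
    have hle := SimpleGraph.dist_le p
    have htri := hconn.dist_triangle (u := a) (v := w) (w := b)
    rw [SimpleGraph.dist_eq_one_iff_adj.2 haw] at htri
    rw [SimpleGraph.Walk.length_cons] at hp
    exact ⟨w, haw, by omega⟩

end TreeGeometry

section Homogeneity

/-- A relation on the vertices that preserves distances and whose domain contains, with any two
points, the neighbour of the first in the direction of the second. These are the partial
automorphisms of a tree that extend to automorphisms. -/
structure IsPartialIsometry (G : SimpleGraph V) (P : Set (V × V)) : Prop where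
  dist_eq : ∀ p ∈ P, ∀ r ∈ P, G.dist p.1 r.1 = G.dist p.2 r.2
  step_mem : ∀ p ∈ P, ∀ r ∈ P, ∀ w, G.Adj p.1 w → G.dist w r.1 + 1 = G.dist p.1 r.1 →
    ∃ w', (w, w') ∈ P

namespace IsPartialIsometry

variable {P : Set (V × V)}

theorem adj_iff (hP : IsPartialIsometry G P) {p r : V × V} (hp : p ∈ P) (hr : r ∈ P) :
    G.Adj p.1 r.1 ↔ G.Adj p.2 r.2 := by
  rw [← SimpleGraph.dist_eq_one_iff_adj, hP.dist_eq p hp r hr, SimpleGraph.dist_eq_one_iff_adj]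

theorem eq_iff (hP : IsPartialIsometry G P) (hconn : G.Connected) {p r : V × V} (hp : p ∈ P)
    (hr : r ∈ P) : p.1 = r.1 ↔ p.2 = r.2 := by
  rw [← hconn.dist_eq_zero_iff, hP.dist_eq p hp r hr, hconn.dist_eq_zero_iff]

theorem sUnion {𝒞 : Set (Set (V × V))} (h𝒞 : ∀ P ∈ 𝒞, IsPartialIsometry G P)
    (hchain : IsChain (· ⊆ ·) 𝒞) : IsPartialIsometry G (⋃₀ 𝒞) := by
  have exists_common : ∀ p ∈ ⋃₀ 𝒞, ∀ r ∈ ⋃₀ 𝒞, ∃ P ∈ 𝒞, p ∈ P ∧ r ∈ P := by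
    rintro p ⟨P, hP, hp⟩ r ⟨R, hR, hr⟩
    rcases hchain.total hP hR with h | h
    exacts [⟨R, hR, h hp, hr⟩, ⟨P, hP, hp, h hr⟩]
  constructor
  · intro p hp r hr
    obtain ⟨P, hP, hpP, hrP⟩ := exists_common p hp r hr
    exact (h𝒞 P hP).dist_eq p hpP r hrP
  · intro p hp r hr w hpw hw
    obtain ⟨P, hP, hpP, hrP⟩ := exists_common p hp r hr
    exact ((h𝒞 P hP).step_mem p hpP r hrP w hpw hw).imp fun w' hw' => ⟨P, hP, hw'⟩

theorem exists_fresh_neighbor [G.LocallyFinite] (hP : IsPartialIsometry G P)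
    (hconn : G.Connected) {a a' w : V} (hdeg : G.degree a = G.degree a') (ha : (a, a') ∈ P)
    (haw : G.Adj a w) (hw : ∀ w', (w, w') ∉ P) : ∃ w', G.Adj a' w' ∧ ∀ y, (y, w') ∉ P := by
  classical
  by_contra! hcon
  choose! g hg using hcon
  have hmaps : Set.MapsTo g (G.neighborFinset a') ((G.neighborFinset a).erase w) := by
    intro y hy
    rw [SetLike.mem_coe, SimpleGraph.mem_neighborFinset] at hy
    simp only [SetLike.mem_coe, Finset.mem_erase, SimpleGraph.mem_neighborFinset]
    exact ⟨fun h => hw y (h ▸ hg y hy), (hP.adj_iff ha (hg y hy)).2 hy⟩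
  have hinj : Set.InjOn g (G.neighborFinset a') := by
    intro y hy y' hy' h
    rw [SetLike.mem_coe, SimpleGraph.mem_neighborFinset] at hy hy'
    exact (hP.eq_iff hconn (hg y hy) (hg y' hy')).1 h
  have hle := Finset.card_le_card_of_injOn g hmaps hinj
  have hlt := Finset.card_erase_lt_of_mem ((G.mem_neighborFinset a w).2 haw)
  simp only [SimpleGraph.card_neighborFinset_eq_degree] at hle hlt
  omega

theorem dist_of_notMem_domain (hP : IsPartialIsometry G P) (hT : G.IsTree) {a a' w : V}
    (ha : (a, a') ∈ P) (haw : G.Adj a w) (hw : ∀ w', (w, w') ∉ P) {p : V × V} (hp : p ∈ P) :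
    G.dist w p.1 = G.dist a p.1 + 1 := by
  refine (dist_eq_add_one_or_add_one_eq hT haw p.1).resolve_right fun h => ?_
  obtain ⟨w', hw'⟩ := hP.step_mem _ ha _ hp w haw h
  exact hw w' hw'

theorem dist_of_notMem_range (hP : IsPartialIsometry G P) (hT : G.IsTree) {a a' w' : V}
    (ha : (a, a') ∈ P) (haw' : G.Adj a' w') (hw' : ∀ w, (w, w') ∉ P) {p : V × V} (hp : p ∈ P) :
    G.dist w' p.2 = G.dist a' p.2 + 1 := by
  refine (dist_eq_add_one_or_add_one_eq hT haw' p.2).resolve_right fun h => ?_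
  have hne : a ≠ p.1 := by
    intro hap
    have := (hP.eq_iff hT.connected ha hp).1 hap
    simp [← this] at h
  obtain ⟨y, hay, hy⟩ := exists_adj_dist_add_one_eq hT.connected hne
  obtain ⟨y', hyP⟩ := hP.step_mem _ ha _ hp y hay hy
  rw [hP.dist_eq _ hyP _ hp, hP.dist_eq _ ha _ hp] at hy
  have : w' = y' := eq_of_adj_of_dist_add_one_eq hT haw' ((hP.adj_iff ha hyP).1 hay) h hy
  exact hw' y (this ▸ hyP)

theorem insert (hP : IsPartialIsometry G P) (hT : G.IsTree) {a a' w w' : V} (ha : (a, a') ∈ P)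
    (haw : G.Adj a w) (haw' : G.Adj a' w') (hw : ∀ y, (w, y) ∉ P) (hw' : ∀ y, (y, w') ∉ P) :
    IsPartialIsometry G (insert (w, w') P) := by
  have hdist {p : V × V} (hp : p ∈ P) : G.dist w p.1 = G.dist a p.1 + 1 :=
    hP.dist_of_notMem_domain hT ha haw hw hp
  have hdist_eq {p : V × V} (hp : p ∈ P) : G.dist w p.1 = G.dist w' p.2 := by
    rw [hdist hp, hP.dist_of_notMem_range hT ha haw' hw' hp, hP.dist_eq _ ha _ hp]
  have mem_of_mem {z : V} (hz : ∃ z', (z, z') ∈ P) : ∃ z', (z, z') ∈ Insert.insert (w, w') P :=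
    hz.imp fun z' => Set.mem_insert_of_mem _
  constructor
  · rintro p (rfl | hp) r (rfl | hr)
    · simp
    · exact hdist_eq hr
    · rw [G.dist_comm, G.dist_comm (u := p.2)]
      exact hdist_eq hp
    · exact hP.dist_eq p hp r hr
  · rintro p (rfl | hp) r (rfl | hr) z hpz hz
    · simp at hz
    · have : z = a := eq_of_adj_of_dist_add_one_eq hT hpz haw.symm hz (hdist hr).symm
      exact mem_of_mem ⟨a', this ▸ ha⟩
    · by_cases hpa : p.1 = a
      · simp only [hpa, SimpleGraph.dist_eq_one_iff_adj.2 haw, Nat.add_eq_right,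
          hT.connected.dist_eq_zero_iff] at hz
        exact ⟨w', hz ▸ Set.mem_insert _ _⟩
      · obtain ⟨y, hpy, hy⟩ := exists_adj_dist_add_one_eq hT.connected hpa
        have hyP := hP.step_mem _ hp _ ha y hpy hy
        have hyw : G.dist y w + 1 = G.dist p.1 w := by
          obtain ⟨y', hy'⟩ := hyP
          rw [G.dist_comm, G.dist_comm (u := p.1), hdist hp, hdist hy', G.dist_comm,
            G.dist_comm (u := a), hy]
        exact mem_of_mem (eq_of_adj_of_dist_add_one_eq hT hpz hpy hz hyw ▸ hyP)
    · exact mem_of_mem (hP.step_mem p hp r hr z hpz hz)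

theorem exists_total (hP : IsPartialIsometry G P) [G.LocallyFinite] (hT : G.IsTree) {d : ℕ}
    (hreg : G.IsRegularOfDegree d) (hne : P.Nonempty) :
    ∃ M, P ⊆ M ∧ IsPartialIsometry G M ∧ ∀ w, ∃ w', (w, w') ∈ M := by
  obtain ⟨M, hPM, hM⟩ := zorn_subset_nonempty {P | IsPartialIsometry G P}
    (fun 𝒞 h𝒞 hchain _ => ⟨⋃₀ 𝒞, sUnion h𝒞 hchain, fun _ => Set.subset_sUnion_of_mem⟩) P hP
  refine ⟨M, hPM, hM.prop, ?_⟩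
  by_contra! ⟨w, hw⟩
  obtain ⟨p, hp⟩ := hne
  obtain ⟨γ⟩ := hT.connected p.1 w
  obtain ⟨e, -, ⟨a', ha'⟩, he⟩ := γ.exists_boundary_dart {z | ∃ z', (z, z') ∈ M}
    ⟨p.2, hPM hp⟩ (by simpa using hw)
  have he : ∀ y, (e.snd, y) ∉ M := by simpa using he
  obtain ⟨w', haw', hw'⟩ := hM.prop.exists_fresh_neighbor hT.connected
    ((hreg _).trans (hreg _).symm) ha' e.adj he
  refine he w' ?_
  rw [hM.eq_of_subset (hM.prop.insert hT ha' e.adj haw' he hw') (Set.subset_insert _ _)]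
  exact Set.mem_insert _ _

end IsPartialIsometry

theorem surjective_of_adj_iff [G.LocallyFinite] (hconn : G.Connected) {d : ℕ}
    (hreg : G.IsRegularOfDegree d) {f : V → V} (hinj : f.Injective)
    (hadj : ∀ a b, G.Adj (f a) (f b) ↔ G.Adj a b) : f.Surjective := by
  classical
  intro w
  by_contra hw
  obtain ⟨γ⟩ := hconn (f w) w
  obtain ⟨e, -, ⟨a, ha⟩, he⟩ := γ.exists_boundary_dart (Set.range f) ⟨w, rfl⟩ hw
  have hsub : (G.neighborFinset a).image f ⊆ G.neighborFinset (f a) := by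
    intro b hb
    obtain ⟨c, hc, rfl⟩ := Finset.mem_image.1 hb
    simpa [hadj] using hc
  have himage := Finset.eq_of_subset_of_card_le hsub (by
    rw [Finset.card_image_of_injective _ hinj, G.card_neighborFinset_eq_degree,
      G.card_neighborFinset_eq_degree, hreg, hreg])
  have hmem : e.snd ∈ G.neighborFinset (f a) := by
    rw [G.mem_neighborFinset, ha]
    exact e.adj
  rw [← himage] at hmem
  obtain ⟨b, -, hb⟩ := Finset.mem_image.1 hmem
  exact he ⟨b, hb⟩

theorem IsPartialIsometry.exists_iso {P : Set (V × V)} (hP : IsPartialIsometry G P)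
    [G.LocallyFinite] (hT : G.IsTree) {d : ℕ} (hreg : G.IsRegularOfDegree d)
    (hne : P.Nonempty) : ∃ φ : G ≃g G, ∀ p ∈ P, φ p.1 = p.2 := by
  obtain ⟨M, hPM, hM, htotal⟩ := hP.exists_total hT hreg hne
  choose f hf using htotal
  have hadj a b : G.Adj (f a) (f b) ↔ G.Adj a b := (hM.adj_iff (hf a) (hf b)).symm
  have hinj : f.Injective := fun a b => (hM.eq_iff hT.connected (hf a) (hf b)).2
  have hbij : f.Bijective := ⟨hinj, surjective_of_adj_iff hT.connected hreg hinj hadj⟩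
  exact ⟨⟨.ofBijective f hbij, hadj _ _⟩, fun p hp =>
    (hM.eq_iff hT.connected (hf p.1) (hPM hp)).1 rfl⟩

theorem dist_getVert_getVert {u v : V} {γ : G.Walk u v} (hγ : γ.length = G.dist u v) {i j : ℕ}
    (hij : i ≤ j) (hj : j ≤ γ.length) : G.dist (γ.getVert i) (γ.getVert j) = j - i := by
  have hsub : ((γ.drop i).take (j - i)).IsSubwalk γ :=
    (SimpleGraph.Walk.isSubwalk_take _ _).trans (γ.isSubwalk_drop i)
  have hlen := SimpleGraph.length_eq_dist_of_subwalk hγ hsub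
  rw [SimpleGraph.Walk.take_length, SimpleGraph.Walk.drop_length,
    SimpleGraph.Walk.drop_getVert, Nat.add_sub_cancel' hij] at hlen
  omega

theorem isPartialIsometry_reversal (hT : G.IsTree) {u v : V} {γ : G.Walk u v}
    (hγ : γ.length = G.dist u v) : IsPartialIsometry G
      {p | ∃ i ≤ γ.length, p = (γ.getVert i, γ.getVert (γ.length - i))} := by
  have hdist {i j : ℕ} (hi : i ≤ γ.length) (hj : j ≤ γ.length) :
      G.dist (γ.getVert i) (γ.getVert j) = (j - i) + (i - j) := by
    rcases le_total i j with h | h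
    · rw [dist_getVert_getVert hγ h hj, Nat.sub_eq_zero_of_le h, Nat.add_zero]
    · rw [G.dist_comm, dist_getVert_getVert hγ h hi, Nat.sub_eq_zero_of_le h, Nat.zero_add]
  constructor
  · rintro _ ⟨i, hi, rfl⟩ _ ⟨j, hj, rfl⟩
    rw [hdist hi hj, hdist (Nat.sub_le _ _) (Nat.sub_le _ _)]
    omega
  · rintro _ ⟨i, hi, rfl⟩ _ ⟨j, hj, rfl⟩ w hadj hw
    obtain ⟨k, hk, hik, hkj⟩ : ∃ k ≤ γ.length, (k - i) + (i - k) = 1 ∧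
        ((j - k) + (k - j)) + 1 = (j - i) + (i - j) := by
      rw [hdist hi hj] at hw
      rcases le_total i j with h | h
      exacts [⟨i + 1, by omega, by omega, by omega⟩, ⟨i - 1, by omega, by omega, by omega⟩]
    rw [← hdist hi hk, SimpleGraph.dist_eq_one_iff_adj] at hik
    rw [← hdist hk hj, ← hdist hi hj] at hkj
    obtain rfl : w = γ.getVert k := eq_of_adj_of_dist_add_one_eq hT hadj hik hw hkj
    exact ⟨_, k, hk, rfl⟩

theorem exists_iso_swap [G.LocallyFinite] (hT : G.IsTree) {d : ℕ}
    (hreg : G.IsRegularOfDegree d) (u v : V) : ∃ φ : G ≃g G, φ u = v ∧ φ v = u := by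
  obtain ⟨γ, hγ⟩ := hT.connected.exists_walk_length_eq_dist u v
  have hu : (u, v) ∈ {p | ∃ i ≤ γ.length, p = (γ.getVert i, γ.getVert (γ.length - i))} :=
    ⟨0, by simp⟩
  have hv : (v, u) ∈ {p | ∃ i ≤ γ.length, p = (γ.getVert i, γ.getVert (γ.length - i))} :=
    ⟨γ.length, by simp⟩
  obtain ⟨φ, hφ⟩ := (isPartialIsometry_reversal hT hγ).exists_iso hT hreg ⟨_, hu⟩
  exact ⟨φ, hφ _ hu, hφ _ hv⟩

end Homogeneity

section Energy

open scoped Finset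

variable [G.LocallyFinite]

/-- The ball of radius `K` around `v` in the graph metric, as a finite set. -/
def closedBall [DecidableEq V] (G : SimpleGraph V) [G.LocallyFinite] (v : V) : ℕ → Finset V
  | 0 => {v}
  | K + 1 => closedBall G v K ∪ (closedBall G v K).biUnion fun w => G.neighborFinset w

theorem mem_closedBall [DecidableEq V] (hconn : G.Connected) {v u : V} {K : ℕ} :
    u ∈ closedBall G v K ↔ G.dist v u ≤ K := by
  induction K generalizing u with
  | zero => simp [closedBall, hconn.dist_eq_zero_iff, eq_comm]
  | succ K ih =>
    simp only [closedBall, Finset.mem_union, ih, Finset.mem_biUnion,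
      SimpleGraph.mem_neighborFinset]
    constructor
    · rintro (h | ⟨w, hw, hwu⟩)
      · omega
      · have := hconn.dist_triangle (u := v) (v := w) (w := u)
        rw [SimpleGraph.dist_eq_one_iff_adj.2 hwu] at this
        omega
    · intro h
      by_cases hvu : u = v
      · simp [hvu]
      · obtain ⟨w, huw, hw⟩ := exists_adj_dist_add_one_eq hconn hvu
        rw [G.dist_comm, G.dist_comm (u := u)] at hw
        exact .inr ⟨w, by omega, huw.symm⟩

theorem neighborFinset_subset_closedBall [DecidableEq V] (hconn : G.Connected) (v : V) (K : ℕ) :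
    G.neighborFinset v ⊆ closedBall G v (K + 1) := by
  intro w hw
  rw [SimpleGraph.mem_neighborFinset, ← SimpleGraph.dist_eq_one_iff_adj] at hw
  rw [mem_closedBall hconn]
  omega

variable {C : Type*} [DecidableEq C]

/-- The number of neighbours of `v` with colour `k`. -/
def colorCount (G : SimpleGraph V) [G.LocallyFinite] (c : V → C) (v : V) (k : C) : ℕ :=
  #{w ∈ G.neighborFinset v | c w = k}

/-- The number of monochromatic edges at `v`. -/
def monoDegree (G : SimpleGraph V) [G.LocallyFinite] (c : V → C) (v : V) : ℕ :=
  colorCount G c v (c v)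

/-- The number of pairs `(a, b)` with `a ∈ W` and `ab` a monochromatic edge; edges inside `W`
count twice. -/
def energy (G : SimpleGraph V) [G.LocallyFinite] (c : V → C) (W : Finset V) : ℕ :=
  ∑ a ∈ W, monoDegree G c a

theorem colorCount_congr {c d : V → C} {v : V} (h : ∀ w, G.Adj v w → c w = d w) (k : C) :
    colorCount G c v k = colorCount G d v k :=
  congrArg Finset.card <| Finset.filter_congr fun w hw => by
    rw [h w ((G.mem_neighborFinset v w).1 hw)]

theorem sum_colorCount [Fintype C] (c : V → C) (v : V) :
    ∑ k, colorCount G c v k = G.degree v :=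
  (Finset.card_eq_sum_card_fiberwise fun _ _ => Finset.mem_univ _).symm

theorem energy_eq_two_mul_monoDegree_add [DecidableEq V] (c : V → C) {v : V} {W : Finset V}
    (hv : v ∈ W) (hW : G.neighborFinset v ⊆ W) : energy G c W = 2 * monoDegree G c v +
      ∑ a ∈ W.erase v, #{b ∈ (G.neighborFinset a).erase v | c b = c a} := by
  have hsplit (a : V) : monoDegree G c a = #{b ∈ (G.neighborFinset a).erase v | c b = c a} +
      if v ∈ {b ∈ G.neighborFinset a | c b = c a} then 1 else 0 := by
    rw [monoDegree, colorCount, Finset.filter_erase, Finset.card_erase_eq_ite]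
    split_ifs with h
    · exact (Nat.sub_add_cancel (Finset.card_pos.2 ⟨v, h⟩)).symm
    · rfl
  have hcount : ∑ a ∈ W.erase v, (if v ∈ {b ∈ G.neighborFinset a | c b = c a} then 1 else 0) =
      monoDegree G c v := by
    rw [← Finset.card_filter, monoDegree, colorCount]
    congr 1
    ext a
    simp only [Finset.mem_filter, Finset.mem_erase, SimpleGraph.mem_neighborFinset]
    exact ⟨fun h => ⟨h.2.1.symm, h.2.2.symm⟩,
      fun h => ⟨⟨h.1.ne', hW (by simpa using h.1)⟩, h.1.symm, h.2.symm⟩⟩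
  rw [energy, ← Finset.add_sum_erase _ _ hv, Finset.sum_congr rfl fun a _ => hsplit a,
    Finset.sum_add_distrib, hcount]
  omega

theorem energy_add_two_mul_monoDegree {c d : V → C} {v : V} {W : Finset V}
    (hcd : ∀ u, u ≠ v → d u = c u) (hv : v ∈ W) (hW : G.neighborFinset v ⊆ W) :
    energy G d W + 2 * monoDegree G c v = energy G c W + 2 * monoDegree G d v := by
  classical
  have hrest : ∑ a ∈ W.erase v, #{b ∈ (G.neighborFinset a).erase v | d b = d a} =
      ∑ a ∈ W.erase v, #{b ∈ (G.neighborFinset a).erase v | c b = c a} :=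
    Finset.sum_congr rfl fun a ha => congrArg Finset.card <| Finset.filter_congr fun b hb => by
      rw [hcd a (Finset.ne_of_mem_erase ha), hcd b (Finset.ne_of_mem_erase hb)]
  rw [energy_eq_two_mul_monoDegree_add d hv hW, energy_eq_two_mul_monoDegree_add c hv hW, hrest]
  omega

theorem monoDegree_update [DecidableEq V] (c : V → C) (v : V) (k : C) :
    monoDegree G (Function.update c v k) v = colorCount G c v k := by
  rw [monoDegree, Function.update_self]
  exact colorCount_congr (fun w hw => Function.update_of_ne hw.ne' _ _) k

/-- `d` is obtained from `c` by recolouring at most `K'` vertices within distance `K` of `v`, and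
has strictly smaller energy there. -/
structure IsImprovement [DecidableEq V] (G : SimpleGraph V) [G.LocallyFinite] (K K' : ℕ)
    (c d : V → C) (v : V) : Prop where
  eq_of_lt_dist : ∀ u, K < G.dist v u → d u = c u
  card_le : #{u ∈ closedBall G v K | d u ≠ c u} ≤ K'
  energy_lt : energy G d (closedBall G v (K + 1)) < energy G c (closedBall G v (K + 1))

theorem IsImprovement.of_finset [DecidableEq V] {K K' : ℕ} {c d : V → C} {v : V}
    {S : Finset V} (hS : ∀ z ∈ S, G.dist v z ≤ K) (hcard : #S ≤ K') (hcd : ∀ z ∉ S, d z = c z)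
    (henergy : energy G d (closedBall G v (K + 1)) < energy G c (closedBall G v (K + 1))) :
    IsImprovement G K K' c d v where
  eq_of_lt_dist u hu := hcd u fun h => (hS u h).not_gt hu
  card_le := by
    refine (Finset.card_le_card fun u hu => ?_).trans hcard
    exact by_contra fun h => (Finset.mem_filter.1 hu).2 (hcd u h)
  energy_lt := henergy

/-- A colouring that cannot be improved around `v` satisfies the local optimality condition at
`v` even after a recolouring away from `v` that does not increase the energy. -/
theorem monoDegree_le_colorCount [DecidableEq V] (hconn : G.Connected) {K K' : ℕ} {c d : V → C}
    {v : V} (hc : ¬ ∃ d, IsImprovement G K K' c d v) {S : Finset V} (hS : ∀ z ∈ S, G.dist v z ≤ K)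
    (hcard : #S + 1 ≤ K') (hcd : ∀ z ∉ S, d z = c z)
    (henergy : energy G d (closedBall G v (K + 1)) ≤ energy G c (closedBall G v (K + 1)))
    (k : C) : monoDegree G d v ≤ colorCount G d v k := by
  by_contra! hlt
  have hupdate := energy_add_two_mul_monoDegree (W := closedBall G v (K + 1))
    (fun u hu => Function.update_of_ne hu k d) (by simp [mem_closedBall hconn])
    (neighborFinset_subset_closedBall hconn v K)
  rw [monoDegree_update] at hupdate
  refine hc ⟨Function.update d v k, .of_finset (S := insert v S) ?_
    ((Finset.card_insert_le v S).trans hcard) ?_ (by omega)⟩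
  · simpa using hS
  · intro z hz
    rw [Finset.mem_insert, not_or] at hz
    rw [Function.update_of_ne hz.1, hcd z hz.2]

end Energy

section Chains

open scoped Finset

theorem dist_lt_dist_of_adj_ne (hT : G.IsTree) {u v w z : V} (huv : G.Adj u v) (hvw : G.Adj v w)
    (hwu : w ≠ u) (hz : G.dist z u < G.dist z v) : G.dist z v < G.dist z w := by
  rw [G.dist_comm, G.dist_comm (v := v)] at hz
  rw [G.dist_comm, G.dist_comm (v := w)]
  have hu := dist_eq_add_one_or_add_one_eq hT huv.symm z
  have hw := dist_eq_add_one_or_add_one_eq hT hvw z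
  by_contra! hlt
  exact hwu (eq_of_adj_of_dist_add_one_eq hT (b := z) hvw huv.symm (by omega) (by omega))

theorem not_dist_lt_dist_of_adj_ne (hconn : G.Connected) {u v w : V} (hvw : G.Adj v w)
    (hwu : w ≠ u) : ¬ G.dist w u < G.dist w v := by
  rw [SimpleGraph.dist_eq_one_iff_adj.2 hvw.symm, Nat.lt_one_iff, hconn.dist_eq_zero_iff]
  exact hwu

variable {C : Type*}

/-- The oriented edge `(v, w)` ends a chain of length `n`: a path whose first edge is
monochromatic and each of whose later vertices is, among the neighbours of its predecessor other
than the one before, the only one of its colour. The colours can then be shifted back along the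
chain to move the monochromatic edge to its end. -/
def IsChainEnd (G : SimpleGraph V) (c : V → C) : ℕ → V → V → Prop
  | 0, v, w => G.Adj v w ∧ c v = c w
  | n + 1, v, w => ∃ u, IsChainEnd G c n u v ∧ G.Adj v w ∧ w ≠ u ∧ c w ≠ c v ∧
      ∀ w', G.Adj v w' → w' ≠ u → c w' = c w → w' = w

theorem IsChainEnd.adj {c : V → C} {n : ℕ} {v w : V} (h : IsChainEnd G c n v w) :
    G.Adj v w := by
  cases n with
  | zero => exact h.1
  | succ n =>
    obtain ⟨_, _, hvw, _⟩ := h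
    exact hvw

theorem IsChainEnd.congr (hT : G.IsTree) {c b : V → C} {n : ℕ} {v w : V}
    (h : IsChainEnd G c n v w) (hw : b w = c w)
    (hside : ∀ z, G.dist z v < G.dist z w → b z = c z) : IsChainEnd G b n v w := by
  induction n generalizing v w with
  | zero =>
    refine ⟨h.1, ?_⟩
    rw [hw, hside v (by simp [SimpleGraph.dist_eq_one_iff_adj.2 h.1])]
    exact h.2
  | succ n ih =>
    obtain ⟨u, hu, hvw, hwu, hc, huniq⟩ := h
    have hv : b v = c v := hside v (by simp [SimpleGraph.dist_eq_one_iff_adj.2 hvw])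
    have hnbr (w' : V) (hw' : G.Adj v w') : b w' = c w' := by
      by_cases hww : w' = w
      · rw [hww, hw]
      · exact hside _ (dist_lt_dist_of_adj_ne hT hw'.symm hvw (Ne.symm hww)
          (by simp [SimpleGraph.dist_eq_one_iff_adj.2 hw'.symm]))
    refine ⟨u, ih hu hv fun z hz => hside z (dist_lt_dist_of_adj_ne hT hu.adj hvw hwu hz),
      hvw, hwu, by rwa [hv, hw], fun w' hw' hne => ?_⟩
    rw [hnbr w hvw, hnbr w' hw']
    exact huniq w' hw' hne

variable [DecidableEq C] [G.LocallyFinite] [DecidableEq V]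

/-- `d` is obtained from `c` by recolouring at most `n` vertices `S` beyond `u` as seen from `v`,
so that `u` receives the colour of `v` and the energy does not increase. -/
structure IsShift (G : SimpleGraph V) [G.LocallyFinite] (c d : V → C) (n : ℕ) (u v : V)
    (S : Finset V) : Prop where
  dist_lt : ∀ z ∈ S, G.dist z u < G.dist z v
  dist_le : ∀ z ∈ S, G.dist v z ≤ n
  card_le : #S ≤ n
  eq_of_notMem : ∀ z ∉ S, d z = c z
  apply_eq : d u = c v
  energy_le : ∀ W, closedBall G v (n + 1) ⊆ W → energy G d W ≤ energy G c W

theorem IsShift.apply_right {c d : V → C} {n : ℕ} {u v : V} {S : Finset V}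
    (h : IsShift G c d n u v S) : d v = c v :=
  h.eq_of_notMem v fun hv => by simpa using h.dist_lt v hv

theorem IsShift.apply_of_adj_ne (hconn : G.Connected) {c d : V → C} {n : ℕ} {u v w : V}
    {S : Finset V} (h : IsShift G c d n u v S) (hvw : G.Adj v w) (hwu : w ≠ u) : d w = c w :=
  h.eq_of_notMem w fun hw => not_dist_lt_dist_of_adj_ne hconn hvw hwu (h.dist_lt w hw)

theorem IsShift.monoDegree_pos {c d : V → C} {n : ℕ} {u v : V} {S : Finset V}
    (h : IsShift G c d n u v S) (huv : G.Adj u v) : 0 < monoDegree G d v :=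
  Finset.card_pos.2 ⟨u, by simp [huv.symm, h.apply_eq, h.apply_right]⟩

theorem IsShift.update (hT : G.IsTree) {c d : V → C} {n : ℕ} {u v w : V} {S : Finset V}
    (h : IsShift G c d n u v S) (huv : G.Adj u v) (hvw : G.Adj v w) (hwu : w ≠ u)
    (hc : c w ≠ c v) (huniq : ∀ w', G.Adj v w' → w' ≠ u → c w' = c w → w' = w) :
    IsShift G c (Function.update d v (c w)) (n + 1) v w (insert v S) where
  dist_lt := by
    simp only [Finset.forall_mem_insert, SimpleGraph.dist_self,
      SimpleGraph.dist_eq_one_iff_adj.2 hvw]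
    exact ⟨one_pos, fun z hz => dist_lt_dist_of_adj_ne hT huv hvw hwu (h.dist_lt z hz)⟩
  dist_le := by
    simp only [Finset.forall_mem_insert, SimpleGraph.dist_eq_one_iff_adj.2 hvw.symm]
    refine ⟨by omega, fun z hz => ?_⟩
    have := hT.connected.dist_triangle (u := w) (v := v) (w := z)
    have := SimpleGraph.dist_eq_one_iff_adj.2 hvw.symm
    have := h.dist_le z hz
    omega
  card_le := (Finset.card_insert_le v S).trans (Nat.succ_le_succ h.card_le)
  eq_of_notMem z hz := by
    rw [Finset.mem_insert, not_or] at hz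
    rw [Function.update_of_ne hz.1, h.eq_of_notMem z hz.2]
  apply_eq := Function.update_self ..
  energy_le W hW := by
    have hsub : closedBall G v (n + 1) ⊆ W := fun z hz => hW <| by
      rw [mem_closedBall hT.connected] at hz ⊢
      have := hT.connected.dist_triangle (u := w) (v := v) (w := z)
      have := SimpleGraph.dist_eq_one_iff_adj.2 hvw.symm
      omega
    have hupdate := energy_add_two_mul_monoDegree (W := W)
      (fun z hz => Function.update_of_ne hz (c w) d)
      (hsub (by simp [mem_closedBall hT.connected]))
      ((neighborFinset_subset_closedBall hT.connected v n).trans hsub)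
    have hcount : colorCount G d v (c w) ≤ 1 := by
      refine (Finset.card_le_card (t := {w}) fun y hy => ?_).trans_eq (Finset.card_singleton w)
      rw [Finset.mem_filter, SimpleGraph.mem_neighborFinset] at hy
      have hyu : y ≠ u := by
        rintro rfl
        exact hc (hy.2.symm.trans h.apply_eq)
      rw [h.apply_of_adj_ne hT.connected hy.1 hyu] at hy
      exact Finset.mem_singleton.2 (huniq y hy.1 hyu hy.2)
    have hpos := h.monoDegree_pos huv
    have henergy := h.energy_le W hsub
    rw [monoDegree_update] at hupdate
    omega

theorem IsChainEnd.exists_isShift (hT : G.IsTree) {c : V → C} {n : ℕ} {u v : V}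
    (h : IsChainEnd G c n u v) : ∃ d S, IsShift G c d n u v S := by
  induction n generalizing u v with
  | zero => exact ⟨c, ∅, by simp, by simp, by simp, by simp, h.2, fun _ _ => le_rfl⟩
  | succ n ih =>
    obtain ⟨t, ht, huv, hvt, hc, huniq⟩ := h
    obtain ⟨d, S, hd⟩ := ih ht
    exact ⟨_, _, hd.update hT ht.adj huv hvt hc huniq⟩

theorem closedBall_mono (hconn : G.Connected) (v : V) {K L : ℕ} (h : K ≤ L) :
    closedBall G v K ⊆ closedBall G v L := fun z hz => by
  rw [mem_closedBall hconn] at hz ⊢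
  exact hz.trans h

variable {K K' : ℕ} {c : V → C} {v : V}

/-- Shifting two chains with distinct last edges into `v` makes two edges at `v` monochromatic;
then every colour must occur twice around `v`. -/
theorem IsChainEnd.left_unique [Fintype C] (hT : G.IsTree)
    (hc : ¬ ∃ d, IsImprovement G K K' c d v) (hdeg : G.degree v < 2 * Fintype.card C)
    {n m : ℕ} {u u' : V} (hu : IsChainEnd G c n u v) (hu' : IsChainEnd G c m u' v)
    (hn : n ≤ K) (hm : m ≤ K) (hK' : n + m + 1 ≤ K') : u = u' := by
  by_contra hne
  obtain ⟨d, S, hd⟩ := hu.exists_isShift hT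
  have hu'd : IsChainEnd G d m u' v := by
    refine hu'.congr hT hd.apply_right fun z hz => hd.eq_of_notMem z fun hzS => ?_
    exact (dist_lt_dist_of_adj_ne hT hu'.adj hu.adj.symm hne hz).not_gt (hd.dist_lt z hzS)
  obtain ⟨e, T, he⟩ := hu'd.exists_isShift hT
  have heu : e u = e v := by
    rw [he.apply_of_adj_ne hT.connected hu.adj.symm hne, hd.apply_eq, he.apply_right,
      hd.apply_right]
  have hmono : 2 ≤ monoDegree G e v := by
    rw [← Finset.card_pair hne]
    refine Finset.card_le_card fun y hy => ?_
    rw [Finset.mem_filter, SimpleGraph.mem_neighborFinset]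
    rcases Finset.mem_insert.1 hy with rfl | hy
    · exact ⟨hu.adj.symm, heu⟩
    · rw [Finset.mem_singleton.1 hy]
      exact ⟨hu'.adj.symm, he.apply_eq.trans he.apply_right.symm⟩
  have hcount (k : C) : 2 ≤ colorCount G e v k := by
    refine hmono.trans (monoDegree_le_colorCount hT.connected hc (S := S ∪ T) ?_ ?_ ?_ ?_ k)
    · intro z hz
      rcases Finset.mem_union.1 hz with hz | hz
      exacts [(hd.dist_le z hz).trans hn, (he.dist_le z hz).trans hm]
    · have := Finset.card_union_le S T
      have := hd.card_le
      have := he.card_le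
      omega
    · intro z hz
      rw [Finset.mem_union, not_or] at hz
      rw [he.eq_of_notMem z hz.2, hd.eq_of_notMem z hz.1]
    · exact (he.energy_le _ (closedBall_mono hT.connected v (by omega))).trans
        (hd.energy_le _ (closedBall_mono hT.connected v (by omega)))
  have hsum : Fintype.card C • 2 ≤ ∑ k, colorCount G e v k :=
    Finset.card_nsmul_le_sum _ _ _ fun k _ => hcount k
  rw [sum_colorCount, smul_eq_mul] at hsum
  omega

theorem IsChainEnd.unique [Fintype C] (hT : G.IsTree) {N : ℕ}
    (hc : ∀ v, ¬ ∃ d, IsImprovement G N (2 * N + 1) c d v)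
    (hdeg : ∀ v, G.degree v < 2 * Fintype.card C) {n m : ℕ} {u u' v : V}
    (hu : IsChainEnd G c n u v) (hu' : IsChainEnd G c m u' v) (hn : n ≤ N) (hm : m ≤ N) :
    u = u' ∧ n = m := by
  induction n generalizing m u u' v with
  | zero =>
    obtain rfl := hu.left_unique hT (hc v) (hdeg v) hu' hn hm (by omega)
    cases m with
    | zero => exact ⟨rfl, rfl⟩
    | succ m =>
      obtain ⟨_, _, _, _, hne, _⟩ := hu'
      exact absurd hu.2.symm hne
  | succ n ih =>
    obtain rfl := hu.left_unique hT (hc v) (hdeg v) hu' hn hm (by omega)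
    cases m with
    | zero =>
      obtain ⟨_, _, _, _, hne, _⟩ := hu
      exact absurd hu'.2.symm hne
    | succ m =>
      obtain ⟨t, ht, _⟩ := hu
      obtain ⟨t', ht', _⟩ := hu'
      rw [(ih ht ht' (by omega) (by omega)).2]
      exact ⟨rfl, rfl⟩

omit [DecidableEq C] in
theorem two_mul_card_le_sum_add_card_eq_one [Fintype C] {f : C → ℕ} (hf : ∀ k, 0 < f k) :
    2 * Fintype.card C ≤ ∑ k, f k + #{k | f k = 1} := by
  rw [Finset.card_filter, ← Finset.sum_add_distrib, mul_comm, ← smul_eq_mul]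
  refine Finset.card_nsmul_le_sum _ _ _ fun k _ => ?_
  have := hf k
  split_ifs <;> omega

theorem IsChainEnd.succ_of_colorCount_eq_one (hconn : G.Connected) {d : V → C} {n : ℕ} {u : V}
    {S : Finset V} (hu : IsChainEnd G c n u v) (hd : IsShift G c d n u v S) {k : C}
    (hk : k ≠ c v) (hcount : colorCount G d v k = 1) :
    ∃ w, IsChainEnd G c (n + 1) v w ∧ c w = k := by
  obtain ⟨w, hw⟩ := Finset.card_eq_one.1 hcount
  have hiff (y : V) : G.Adj v y ∧ d y = k ↔ y = w := by
    rw [← Finset.mem_singleton (b := y), ← hw, Finset.mem_filter,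
      SimpleGraph.mem_neighborFinset]
  obtain ⟨hvw, hdw⟩ := (hiff w).2 rfl
  have hwu : w ≠ u := by
    rintro rfl
    exact hk (hdw.symm.trans hd.apply_eq)
  have hcw : c w = k := (hd.apply_of_adj_ne hconn hvw hwu).symm.trans hdw
  refine ⟨w, ⟨u, hu, hvw, hwu, hcw ▸ hk, fun w' hw' hne hcw' => (hiff w').1 ⟨hw', ?_⟩⟩, hcw⟩
  rw [hd.apply_of_adj_ne hconn hw' hne, hcw', hcw]

open Classical in
theorem IsChainEnd.le_card_succ [Fintype C] (hT : G.IsTree)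
    (hc : ¬ ∃ d, IsImprovement G K K' c d v) {r : ℕ}
    (hdeg : G.degree v + 1 + r ≤ 2 * Fintype.card C) {n : ℕ} {u : V}
    (hu : IsChainEnd G c n u v) (hn : n ≤ K) (hK' : n + 1 ≤ K') :
    r ≤ #{w ∈ G.neighborFinset v | IsChainEnd G c (n + 1) v w} := by
  obtain ⟨d, S, hd⟩ := hu.exists_isShift hT
  have hpos (k : C) : 0 < colorCount G d v k :=
    (hd.monoDegree_pos hu.adj).trans_le <| monoDegree_le_colorCount hT.connected hc
      (fun z hz => (hd.dist_le z hz).trans hn) (by have := hd.card_le; omega) hd.eq_of_notMem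
      (hd.energy_le _ (closedBall_mono hT.connected v (by omega))) k
  have hones := two_mul_card_le_sum_add_card_eq_one hpos
  have herase := Finset.pred_card_le_card_erase
    (s := ({k | colorCount G d v k = 1} : Finset C)) (a := c v)
  rw [sum_colorCount] at hones
  calc r ≤ #(({k | colorCount G d v k = 1} : Finset C).erase (c v)) := by omega
    _ ≤ #(({w ∈ G.neighborFinset v | IsChainEnd G c (n + 1) v w}).image c) := by
      refine Finset.card_le_card fun k hk => ?_
      rw [Finset.mem_erase, Finset.mem_filter] at hk
      obtain ⟨w, hw, hwk⟩ := hu.succ_of_colorCount_eq_one hT.connected hd hk.1 hk.2.2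
      exact Finset.mem_image.2 ⟨w, by simp [hw, hw.adj], hwk⟩
    _ ≤ _ := Finset.card_image_le

open Classical in
theorem mul_card_isChainEnd_le [Fintype C] (hT : G.IsTree) {N : ℕ}
    (hc : ∀ v, ¬ ∃ d, IsImprovement G N (2 * N + 1) c d v) {r : ℕ}
    (hdeg : ∀ v, G.degree v + 1 + r ≤ 2 * Fintype.card C) {n : ℕ} (hn : n ≤ N) (v : V) :
    r * #{u ∈ G.neighborFinset v | IsChainEnd G c n u v} ≤
      #{w ∈ G.neighborFinset v | IsChainEnd G c (n + 1) v w} := by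
  rcases Finset.eq_empty_or_nonempty {u ∈ G.neighborFinset v | IsChainEnd G c n u v}
    with h | ⟨u, hu⟩
  · simp [h]
  have hone : #{u ∈ G.neighborFinset v | IsChainEnd G c n u v} ≤ 1 := by
    refine Finset.card_le_one.2 fun a ha b hb => ?_
    exact ((Finset.mem_filter.1 ha).2.unique hT hc (fun v => by have := hdeg v; omega)
      (Finset.mem_filter.1 hb).2 hn hn).1
  calc r * #{u ∈ G.neighborFinset v | IsChainEnd G c n u v} ≤ r := mul_le_of_le_one_right' hone
    _ ≤ _ := (Finset.mem_filter.1 hu).2.le_card_succ hT (hc v) (hdeg v) hn (by omega)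

open Classical in
theorem sum_card_isChainEnd_le_one [Fintype C] (hT : G.IsTree) {N : ℕ}
    (hc : ∀ v, ¬ ∃ d, IsImprovement G N (2 * N + 1) c d v)
    (hdeg : ∀ v, G.degree v < 2 * Fintype.card C) (v : V) :
    ∑ n ∈ Finset.range (N + 1), #{u ∈ G.neighborFinset v | IsChainEnd G c n u v} ≤ 1 := by
  rw [← Finset.card_sigma, Finset.card_le_one]
  rintro ⟨n, u⟩ hu ⟨m, u'⟩ hu'
  simp only [Finset.mem_sigma, Finset.mem_range, Finset.mem_filter] at hu hu'
  obtain ⟨rfl, rfl⟩ := hu.2.2.unique hT hc hdeg hu'.2.2 (by omega) (by omega)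
  rfl

end Chains

section Naturality

open scoped Finset

theorem isChainEnd_comp_iso {C : Type*} (φ : G ≃g G) {c : V → C} {n : ℕ} {v w : V} :
    IsChainEnd G (c ∘ φ) n v w ↔ IsChainEnd G c n (φ v) (φ w) := by
  induction n generalizing v w with
  | zero => exact and_congr_left' φ.map_adj_iff.symm
  | succ n ih =>
    refine Iff.trans (exists_congr fun u => ?_) φ.surjective.exists.symm
    refine and_congr ih (and_congr φ.map_adj_iff.symm
      (and_congr φ.injective.ne_iff.symm (and_congr_right' ?_)))
    refine Iff.trans (forall_congr' fun w' => ?_) φ.surjective.forall.symm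
    simp only [φ.map_adj_iff, φ.injective.ne_iff, φ.injective.eq_iff, Function.comp_apply]

variable [G.LocallyFinite]

theorem map_neighborFinset_iso (φ : G ≃g G) (v : V) :
    (G.neighborFinset v).map φ.toEquiv.toEmbedding = G.neighborFinset (φ v) := by
  ext w
  obtain ⟨w, rfl⟩ := φ.surjective w
  rw [SimpleGraph.mem_neighborFinset, φ.map_adj_iff, ← SimpleGraph.mem_neighborFinset]
  exact Finset.mem_map' _

theorem map_closedBall_iso [DecidableEq V] (hconn : G.Connected) (φ : G ≃g G) (v : V) (K : ℕ) :
    (closedBall G v K).map φ.toEquiv.toEmbedding = closedBall G (φ v) K := by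
  ext w
  obtain ⟨w, rfl⟩ := φ.surjective w
  rw [mem_closedBall hconn, dist_iso hconn, ← mem_closedBall hconn]
  exact Finset.mem_map' _

variable {C : Type*} [DecidableEq C]

theorem monoDegree_comp_iso (φ : G ≃g G) (c : V → C) (v : V) :
    monoDegree G (c ∘ φ) v = monoDegree G c (φ v) := by
  rw [monoDegree, monoDegree, colorCount, colorCount, ← map_neighborFinset_iso, Finset.filter_map,
    Finset.card_map]
  rfl

variable [DecidableEq V]

theorem energy_comp_iso (hconn : G.Connected) (φ : G ≃g G) (c : V → C) (v : V) (K : ℕ) :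
    energy G (c ∘ φ) (closedBall G v K) = energy G c (closedBall G (φ v) K) := by
  rw [energy, energy, ← map_closedBall_iso hconn, Finset.sum_map]
  exact Finset.sum_congr rfl fun a _ => monoDegree_comp_iso φ c a

theorem isImprovement_comp_iso (hconn : G.Connected) (φ : G ≃g G) {K K' : ℕ} {c d : V → C}
    {v : V} : IsImprovement G K K' (c ∘ φ) (d ∘ φ) v ↔ IsImprovement G K K' c d (φ v) := by
  have hcard : #{u ∈ closedBall G v K | (d ∘ φ) u ≠ (c ∘ φ) u} =
      #{u ∈ closedBall G (φ v) K | d u ≠ c u} := by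
    rw [← map_closedBall_iso hconn, Finset.filter_map, Finset.card_map]
    rfl
  refine ⟨fun h => ⟨fun u hu => ?_, hcard ▸ h.card_le, ?_⟩,
    fun h => ⟨fun u hu => h.eq_of_lt_dist _ (by rwa [dist_iso hconn]), hcard ▸ h.card_le, ?_⟩⟩
  · obtain ⟨u, rfl⟩ := φ.surjective u
    exact h.eq_of_lt_dist u (by rwa [dist_iso hconn] at hu)
  · simpa only [energy_comp_iso hconn] using h.energy_lt
  · simpa only [energy_comp_iso hconn] using h.energy_lt

end Naturality

section Fiid

open scoped ENNReal Finset

variable {Ω A : Type*} [MeasurableSpace Ω] [MeasurableSpace A]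

/-- The factor-of-iid labellings with labels `A`: the measurable maps commuting with the action of
`Aut G`. The label type `Prop` gives random vertex sets, `ℕ` and `ℝ≥0∞` random weights. -/
structure IsFiid (G : SimpleGraph V) (f : (V → Ω) → V → A) : Prop where
  measurable : Measurable f
  comp_iso : ∀ (φ : G ≃g G) x, f (x ∘ φ) = f x ∘ φ

/-- The law `μ` is invariant under `Aut G`, and any two vertices are exchanged by an automorphism.
This is the form of homogeneity behind the mass-transport principle. -/
structure IsSwapHomogeneous (G : SimpleGraph V) (μ : Measure (V → Ω)) : Prop where
  exists_iso_swap : ∀ u v, ∃ φ : G ≃g G, φ u = v ∧ φ v = u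
  measurePreserving : ∀ φ : G ≃g G, MeasurePreserving (fun x : V → Ω => x ∘ φ) μ μ

/-- Distinct points of `A` are so far apart that the balls of radius `L` around them are
disjoint. -/
def IsSeparated (G : SimpleGraph V) (L : ℕ) (A : V → Prop) : Prop :=
  ∀ v w, A v → A w → G.dist v w ≤ 2 * L → v = w

theorem IsFiid.measurable_apply {f : (V → Ω) → V → A} (hf : IsFiid G f) (v : V) :
    Measurable fun x => f x v :=
  (measurable_pi_apply v).comp hf.measurable

theorem IsFiid.comp_iso_apply {f : (V → Ω) → V → A} (hf : IsFiid G f) (φ : G ≃g G) (x : V → Ω)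
    (v : V) : f (x ∘ φ) v = f x (φ v) :=
  congrFun (hf.comp_iso φ x) v

theorem IsFiid.map {B : Type*} [MeasurableSpace B] {f : (V → Ω) → V → A} (hf : IsFiid G f)
    {g : A → B} (hg : Measurable g) : IsFiid G fun x v => g (f x v) where
  measurable := measurable_pi_lambda _ fun v => hg.comp (hf.measurable_apply v)
  comp_iso φ x := by
    rw [hf.comp_iso]
    rfl

theorem isFiid_const (a : A) : IsFiid (Ω := Ω) G fun _ _ => a where
  measurable := measurable_const
  comp_iso _ _ := rfl

theorem IsSwapHomogeneous.lintegral_swap {μ : Measure (V → Ω)} (hμ : IsSwapHomogeneous G μ)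
    {F : (V → Ω) → V → V → ℝ≥0∞} (hF : ∀ u v, Measurable fun x => F x u v)
    (hFφ : ∀ (φ : G ≃g G) x u v, F (x ∘ φ) u v = F x (φ u) (φ v)) (u v : V) :
    ∫⁻ x, F x u v ∂μ = ∫⁻ x, F x v u ∂μ := by
  obtain ⟨φ, hu, hv⟩ := hμ.exists_iso_swap u v
  rw [← (hμ.measurePreserving φ).lintegral_comp (hF u v)]
  simp only [hFφ, hu, hv]

theorem IsSwapHomogeneous.mass_transport [Countable V] {μ : Measure (V → Ω)}
    (hμ : IsSwapHomogeneous G μ) {F : (V → Ω) → V → V → ℝ≥0∞}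
    (hF : ∀ u v, Measurable fun x => F x u v)
    (hFφ : ∀ (φ : G ≃g G) x u v, F (x ∘ φ) u v = F x (φ u) (φ v)) (o : V) :
    ∫⁻ x, ∑' v, F x o v ∂μ = ∫⁻ x, ∑' v, F x v o ∂μ := by
  rw [lintegral_tsum fun v => (hF o v).aemeasurable, lintegral_tsum fun v => (hF v o).aemeasurable]
  exact tsum_congr fun v => hμ.lintegral_swap hF hFφ o v

theorem IsFiid.lintegral_eq {μ : Measure (V → Ω)} (hμ : IsSwapHomogeneous G μ)
    {g : (V → Ω) → V → ℝ≥0∞} (hg : IsFiid G g) (u v : V) :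
    ∫⁻ x, g x u ∂μ = ∫⁻ x, g x v ∂μ :=
  hμ.lintegral_swap (F := fun x u _ => g x u) (fun u _ => hg.measurable_apply u)
    (fun φ x u _ => hg.comp_iso_apply φ x u) u v

theorem IsSeparated.eq_of_dist_le (hconn : G.Connected) {L : ℕ} {S : V → Prop}
    (hS : IsSeparated G L S) {v w u : V} (hv : S v) (hw : S w) (hvu : G.dist v u ≤ L)
    (hwu : G.dist w u ≤ L) : v = w := by
  refine hS v w hv hw ?_
  have := hconn.dist_triangle (u := v) (v := u) (w := w)
  rw [G.dist_comm (u := u)] at this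
  omega

/-- Each point of a separated random set `S` sends out the mass `g` of its ball, and a vertex
receives its own mass from the centre of the ball containing it, if there is one. -/
theorem lintegral_sum_closedBall_eq [Countable V] [G.LocallyFinite] [DecidableEq V]
    (hconn : G.Connected) {μ : Measure (V → Ω)} (hμ : IsSwapHomogeneous G μ)
    {S : (V → Ω) → V → Prop} (hS : IsFiid G S) {L : ℕ} (hsep : ∀ x, IsSeparated G L (S x))
    {g : (V → Ω) → V → ℝ≥0∞} (hg : IsFiid G g) (o : V) :
    ∫⁻ x in {x | S x o}, ∑ a ∈ closedBall G o L, g x a ∂μ =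
      ∫⁻ x in {x | ∃ v, S x v ∧ G.dist v o ≤ L}, g x o ∂μ := by
  classical
  let F (x : V → Ω) (v a : V) : ℝ≥0∞ := if S x v ∧ G.dist v a ≤ L then g x a else 0
  have hF (v a : V) : Measurable fun x => F x v a :=
    .ite ((hS.measurable_apply v).and measurable_const).setOf (hg.measurable_apply a)
      measurable_const
  have hFφ (φ : G ≃g G) (x : V → Ω) (u v : V) : F (x ∘ φ) u v = F x (φ u) (φ v) := by
    simp only [F, hS.comp_iso_apply, hg.comp_iso_apply, dist_iso hconn]
  let N : Set (V → Ω) := {x | ∃ v, S x v ∧ G.dist v o ≤ L}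
  have hsent (x : V → Ω) : ∑' a, F x o a =
      {x | S x o}.indicator (fun x => ∑ a ∈ closedBall G o L, g x a) x := by
    by_cases hx : S x o
    · rw [Set.indicator_of_mem (s := {x | S x o}) hx, tsum_eq_sum (s := closedBall G o L)]
      · exact Finset.sum_congr rfl fun a ha => if_pos ⟨hx, (mem_closedBall hconn).1 ha⟩
      · exact fun a ha => if_neg fun h => ha ((mem_closedBall hconn).2 h.2)
    · simp [F, hx]
  have hreceived (x : V → Ω) : ∑' v, F x v o =
      N.indicator (fun x => g x o) x := by
    by_cases hx : ∃ v, S x v ∧ G.dist v o ≤ L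
    · obtain ⟨v, hv, hvo⟩ := hx
      rw [Set.indicator_of_mem (s := N) ⟨v, hv, hvo⟩, tsum_eq_single v]
      · exact if_pos ⟨hv, hvo⟩
      · exact fun w hw => if_neg fun h => hw ((hsep x).eq_of_dist_le hconn h.1 hv h.2 hvo)
    · rw [Set.indicator_of_notMem (s := N) hx, ENNReal.tsum_eq_zero]
      exact fun v => if_neg fun h => hx ⟨v, h⟩
  have hnear : Measurable fun x => ∃ v, S x v ∧ G.dist v o ≤ L :=
    .exists fun v => (hS.measurable_apply v).and measurable_const
  rw [← lintegral_indicator (hS.measurable_apply o).setOf, ← lintegral_indicator hnear.setOf,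
    ← lintegral_congr hsent, ← lintegral_congr hreceived]
  exact hμ.mass_transport hF hFφ o

end Fiid

section Round

open scoped Finset

variable [G.LocallyFinite] {C : Type*} [DecidableEq C] {K K' : ℕ} {c d : V → C} {B : V → Prop}

theorem monoDegree_congr {v : V} (hv : c v = d v) (h : ∀ w, G.Adj v w → c w = d w) :
    monoDegree G c v = monoDegree G d v := by
  rw [monoDegree, monoDegree, hv, colorCount_congr h]

variable [DecidableEq V]

theorem energy_congr (hconn : G.Connected) {v : V} (h : ∀ u, G.dist v u ≤ K + 1 → c u = d u) :
    energy G c (closedBall G v K) = energy G d (closedBall G v K) := by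
  refine Finset.sum_congr rfl fun a ha => ?_
  rw [mem_closedBall hconn] at ha
  refine monoDegree_congr (h a (by omega)) fun w haw => h w ?_
  have := hconn.dist_triangle (u := v) (v := a) (w := w)
  rw [SimpleGraph.dist_eq_one_iff_adj.2 haw] at this
  omega

theorem IsImprovement.congr (hconn : G.Connected) {v : V} {c' d' : V → C}
    (h : IsImprovement G K K' c d v) (hc : ∀ u, G.dist v u ≤ K + 2 → c' u = c u)
    (hd : ∀ u, G.dist v u ≤ K + 2 → d' u = d u) (hcd : ∀ u, K < G.dist v u → d' u = c' u) :
    IsImprovement G K K' c' d' v where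
  eq_of_lt_dist := hcd
  card_le := by
    refine le_of_eq_of_le (congrArg Finset.card <| Finset.filter_congr fun u hu => ?_) h.card_le
    rw [mem_closedBall hconn] at hu
    rw [hc u (by omega), hd u (by omega)]
  energy_lt := by
    rw [energy_congr hconn hc, energy_congr hconn hd]
    exact h.energy_lt

open Classical in
/-- The labelling that agrees with `d` within distance `K` of `v` and with `c` elsewhere. -/
noncomputable def splice (G : SimpleGraph V) (K : ℕ) (c d : V → C) (v u : V) : C :=
  if G.dist v u ≤ K then d u else c u

/-- A centre `v ∈ B` is active if replacing `c` by the proposal `d` in the ball of radius `K`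
around `v` is an improvement. -/
def IsActive (G : SimpleGraph V) [G.LocallyFinite] (K K' : ℕ) (c d : V → C) (B : V → Prop)
    (v : V) : Prop :=
  B v ∧ IsImprovement G K K' c (splice G K c d v) v

open Classical in
/-- One round of the improvement algorithm: the proposal `d` is adopted in the balls of radius `K`
around all active centres. -/
noncomputable def improvementRound (G : SimpleGraph V) [G.LocallyFinite] (K K' : ℕ)
    (c d : V → C) (B : V → Prop) (u : V) : C :=
  if ∃ v, IsActive G K K' c d B v ∧ G.dist v u ≤ K then d u else c u

theorem improvementRound_ne_iff {u : V} : improvementRound G K K' c d B u ≠ c u ↔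
    (∃ v, IsActive G K K' c d B v ∧ G.dist v u ≤ K) ∧ d u ≠ c u := by
  rw [improvementRound]
  split_ifs with h <;> simp [h]

theorem IsActive.card_le (hconn : G.Connected) {v : V} (hv : IsActive G K K' c d B v) :
    #{u ∈ closedBall G v K | d u ≠ c u} ≤ K' := by
  refine le_of_eq_of_le (congrArg Finset.card <| Finset.filter_congr fun u hu => ?_) hv.2.card_le
  rw [splice, if_pos ((mem_closedBall hconn).1 hu)]

theorem IsActive.improvementRound_eq_splice (hconn : G.Connected)
    (hB : IsSeparated G (K + 1) B) {v u : V} (hv : IsActive G K K' c d B v)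
    (hu : G.dist v u ≤ K + 2) : improvementRound G K K' c d B u = splice G K c d v u := by
  have hiff : (∃ w, IsActive G K K' c d B w ∧ G.dist w u ≤ K) ↔ G.dist v u ≤ K := by
    refine ⟨?_, fun h => ⟨v, hv, h⟩⟩
    rintro ⟨w, hw, hwu⟩
    have htri := hconn.dist_triangle (u := v) (v := u) (w := w)
    rw [G.dist_comm (u := u)] at htri
    rwa [hB v w hv.1 hw.1 (by omega)]
  simp only [improvementRound, splice, hiff]

theorem IsActive.energy_improvementRound_lt (hconn : G.Connected)
    (hB : IsSeparated G (K + 1) B) {v : V} (hv : IsActive G K K' c d B v) :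
    energy G (improvementRound G K K' c d B) (closedBall G v (K + 1)) <
      energy G c (closedBall G v (K + 1)) := by
  rw [energy_congr hconn fun u hu => hv.improvementRound_eq_splice hconn hB hu]
  exact hv.2.energy_lt

theorem monoDegree_improvementRound_of_far (hconn : G.Connected) {a : V}
    (ha : ¬ ∃ v, IsActive G K K' c d B v ∧ G.dist v a ≤ K + 1) :
    monoDegree G (improvementRound G K K' c d B) a = monoDegree G c a := by
  refine monoDegree_congr (if_neg fun ⟨v, hv, hva⟩ => ha ⟨v, hv, by omega⟩) fun w haw =>
    if_neg fun ⟨v, hv, hvw⟩ => ha ⟨v, hv, ?_⟩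
  have := hconn.dist_triangle (u := v) (v := w) (w := a)
  rw [SimpleGraph.dist_eq_one_iff_adj.2 haw.symm] at this
  omega

theorem isActive_comp_iso (hconn : G.Connected) (φ : G ≃g G) {v : V} :
    IsActive G K K' (c ∘ φ) (d ∘ φ) (B ∘ φ) v ↔ IsActive G K K' c d B (φ v) := by
  have hsplice : splice G K (c ∘ φ) (d ∘ φ) v = splice G K c d (φ v) ∘ φ := by
    funext u
    simp only [splice, Function.comp_apply, dist_iso hconn]
  rw [IsActive, IsActive, hsplice, isImprovement_comp_iso hconn]
  rfl

theorem improvementRound_comp_iso (hconn : G.Connected) (φ : G ≃g G) :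
    improvementRound G K K' (c ∘ φ) (d ∘ φ) (B ∘ φ) = improvementRound G K K' c d B ∘ φ := by
  funext u
  have hiff : (∃ v, IsActive G K K' (c ∘ φ) (d ∘ φ) (B ∘ φ) v ∧ G.dist v u ≤ K) ↔
      ∃ v, IsActive G K K' c d B v ∧ G.dist v (φ u) ≤ K := by
    refine Iff.trans (exists_congr fun v => ?_) φ.surjective.exists.symm
    rw [isActive_comp_iso hconn, dist_iso hconn]
  classical exact if_congr hiff rfl rfl

end Round

section RandomRound

open scoped ENNReal Finset

variable [G.LocallyFinite] {C : Type*} [DecidableEq C] [MeasurableSpace C] [MeasurableEq C]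

theorem measurable_monoDegree {α : Type*} [MeasurableSpace α] {c : α → V → C}
    (hc : ∀ v, Measurable fun x => c x v) (v : V) : Measurable fun x => monoDegree G (c x) v := by
  simp only [monoDegree, colorCount, Finset.card_filter]
  exact Finset.measurable_sum _ fun w _ =>
    .ite ((hc w).eq (hc v)).setOf measurable_const measurable_const

theorem measurable_isImprovement [Countable V] [DecidableEq V] {α : Type*} [MeasurableSpace α]
    {K K' : ℕ} {c d : α → V → C} (hc : ∀ v, Measurable fun x => c x v)
    (hd : ∀ v, Measurable fun x => d x v) (v : V) :
    Measurable fun x => IsImprovement G K K' (c x) (d x) v := by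
  have hcard : Measurable fun x => #{u ∈ closedBall G v K | d x u ≠ c x u} := by
    simp only [Finset.card_filter]
    exact Finset.measurable_sum _ fun u _ =>
      .ite ((hd u).eq (hc u)).not.setOf measurable_const measurable_const
  have henergy {b : α → V → C} (hb : ∀ v, Measurable fun x => b x v) :
      Measurable fun x => energy G (b x) (closedBall G v (K + 1)) :=
    Finset.measurable_sum _ fun a _ => measurable_monoDegree hb a
  have hiff (x : α) : IsImprovement G K K' (c x) (d x) v ↔
      (∀ u, K < G.dist v u → d x u = c x u) ∧ #{u ∈ closedBall G v K | d x u ≠ c x u} ≤ K' ∧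
        energy G (d x) (closedBall G v (K + 1)) < energy G (c x) (closedBall G v (K + 1)) :=
    ⟨fun h => ⟨h.1, h.2, h.3⟩, fun h => ⟨h.1, h.2.1, h.2.2⟩⟩
  simp only [hiff]
  exact (Measurable.forall fun u => measurable_const.imp ((hd u).eq (hc u))).and
    ((measurableSet_setOfPred.1 (measurableSet_le hcard measurable_const)).and
      (measurableSet_setOfPred.1 (measurableSet_lt (henergy hd) (henergy hc))))

variable {Ω : Type*} [MeasurableSpace Ω] {c d : (V → Ω) → V → C}

theorem IsFiid.monoDegree (hc : IsFiid G c) : IsFiid G fun x => monoDegree G (c x) where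
  measurable := measurable_pi_lambda _ <| measurable_monoDegree hc.measurable_apply
  comp_iso φ x := by
    funext v
    rw [hc.comp_iso, monoDegree_comp_iso]
    rfl

/-- The expected number of monochromatic edges at `v`. -/
noncomputable def meanMonoDegree (G : SimpleGraph V) [G.LocallyFinite] (μ : Measure (V → Ω))
    (c : (V → Ω) → V → C) (v : V) : ℝ≥0∞ :=
  ∫⁻ x, monoDegree G (c x) v ∂μ

theorem IsFiid.meanMonoDegree_eq {μ : Measure (V → Ω)} (hμ : IsSwapHomogeneous G μ)
    (hc : IsFiid G c) (u v : V) : meanMonoDegree G μ c u = meanMonoDegree G μ c v :=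
  (hc.monoDegree.map (measurable_of_countable Nat.cast)).lintegral_eq hμ u v

variable [Countable V] [DecidableEq V] {K K' : ℕ} {B : (V → Ω) → V → Prop}

theorem IsFiid.isActive (hconn : G.Connected) (hc : IsFiid G c) (hd : IsFiid G d)
    (hB : IsFiid G B) : IsFiid G fun x => IsActive G K K' (c x) (d x) (B x) where
  measurable := measurable_pi_lambda _ fun v => (hB.measurable_apply v).and <|
    measurable_isImprovement hc.measurable_apply (fun u => .ite (p := fun _ => G.dist v u ≤ K)
      (.const _) (hd.measurable_apply u) (hc.measurable_apply u)) v
  comp_iso φ x := by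
    funext v
    rw [hc.comp_iso, hd.comp_iso, hB.comp_iso]
    exact propext (isActive_comp_iso hconn φ)

theorem IsFiid.improvementRound (hconn : G.Connected) (hc : IsFiid G c) (hd : IsFiid G d)
    (hB : IsFiid G B) : IsFiid G fun x => improvementRound G K K' (c x) (d x) (B x) where
  measurable := measurable_pi_lambda _ fun u => .ite
    (Measurable.exists fun v =>
      ((hc.isActive hconn hd hB).measurable_apply v).and measurable_const).setOf
    (hd.measurable_apply u) (hc.measurable_apply u)
  comp_iso φ x := by rw [hc.comp_iso, hd.comp_iso, hB.comp_iso, improvementRound_comp_iso hconn]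

variable {μ : Measure (V → Ω)}

theorem measure_improvementRound_ne_le (hconn : G.Connected) (hμ : IsSwapHomogeneous G μ)
    (hc : IsFiid G c) (hd : IsFiid G d) (hB : IsFiid G B)
    (hsep : ∀ x, IsSeparated G (K + 1) (B x)) (o : V) :
    μ {x | improvementRound G K K' (c x) (d x) (B x) o ≠ c x o} ≤
      K' * μ {x | IsActive G K K' (c x) (d x) (B x) o} := by
  let S (x : V → Ω) : V → Prop := IsActive G K K' (c x) (d x) (B x)
  have hS : IsFiid G S := hc.isActive hconn hd hB
  have hS_sep (x : V → Ω) : IsSeparated G K (S x) := fun v w hv hw h =>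
    hsep x v w hv.1 hw.1 (by omega)
  let g (x : V → Ω) (u : V) : ℝ≥0∞ := if d x u ≠ c x u then 1 else 0
  have hg : IsFiid G g := by
    refine ⟨measurable_pi_lambda _ fun u => .ite ((hd.measurable_apply u).eq
      (hc.measurable_apply u)).not.setOf measurable_const measurable_const, fun φ x => ?_⟩
    funext u
    simp only [g, hc.comp_iso_apply, hd.comp_iso_apply, Function.comp_apply]
  have hSo : MeasurableSet {x | S x o} := (hS.measurable_apply o).setOf
  have hne : MeasurableSet {x | d x o ≠ c x o} :=
    ((hd.measurable_apply o).eq (hc.measurable_apply o)).not.setOf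
  calc μ {x | improvementRound G K K' (c x) (d x) (B x) o ≠ c x o}
      = ∫⁻ x in {x | ∃ v, S x v ∧ G.dist v o ≤ K}, g x o ∂μ := by
        have hg_eq : (g · o) = {x | d x o ≠ c x o}.indicator 1 := by
          funext x
          simp [g, Set.indicator_apply]
        rw [hg_eq, lintegral_indicator_one hne, Measure.restrict_apply hne]
        congr 1
        ext x
        exact improvementRound_ne_iff.trans and_comm
    _ = ∫⁻ x in {x | S x o}, ∑ u ∈ closedBall G o K, g x u ∂μ :=
        (lintegral_sum_closedBall_eq hconn hμ hS hS_sep hg o).symm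
    _ ≤ ∫⁻ _ in {x | S x o}, K' ∂μ := by
        refine setLIntegral_mono' hSo fun x hx => ?_
        rw [Finset.sum_boole]
        exact_mod_cast IsActive.card_le hconn hx
    _ = K' * μ {x | S x o} := setLIntegral_const _ _

theorem meanMonoDegree_improvementRound_add_le (hconn : G.Connected)
    (hμ : IsSwapHomogeneous G μ) (hc : IsFiid G c) (hd : IsFiid G d) (hB : IsFiid G B)
    (hsep : ∀ x, IsSeparated G (K + 1) (B x)) (o : V) :
    meanMonoDegree G μ (fun x => improvementRound G K K' (c x) (d x) (B x)) o +
      μ {x | IsActive G K K' (c x) (d x) (B x) o} ≤ meanMonoDegree G μ c o := by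
  let S (x : V → Ω) : V → Prop := IsActive G K K' (c x) (d x) (B x)
  have hS : IsFiid G S := hc.isActive hconn hd hB
  have hS_sep (x : V → Ω) : IsSeparated G (K + 1) (S x) := fun v w hv hw =>
    hsep x v w hv.1 hw.1
  let r (x : V → Ω) : V → C := FiidColoring.improvementRound G K K' (c x) (d x) (B x)
  have hr : IsFiid G r := hc.improvementRound hconn hd hB
  let N : Set (V → Ω) := {x | ∃ v, S x v ∧ G.dist v o ≤ K + 1}
  have hN : MeasurableSet N :=
    (Measurable.exists fun v => (hS.measurable_apply v).and measurable_const).setOf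
  have hSo : MeasurableSet {x | S x o} := (hS.measurable_apply o).setOf
  have hsplit {b : (V → Ω) → V → C} (hb : IsFiid G b) : meanMonoDegree G μ b o =
      ∫⁻ x in {x | S x o}, energy G (b x) (closedBall G o (K + 1)) ∂μ +
        ∫⁻ x in Nᶜ, FiidColoring.monoDegree G (b x) o ∂μ := by
    simp only [energy, Nat.cast_sum]
    rw [lintegral_sum_closedBall_eq hconn hμ hS hS_sep
      (hb.monoDegree.map (measurable_of_countable Nat.cast)) o, lintegral_add_compl _ hN,
      meanMonoDegree]
  have hfar : ∫⁻ x in Nᶜ, (FiidColoring.monoDegree G (r x) o : ℝ≥0∞) ∂μ =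
      ∫⁻ x in Nᶜ, FiidColoring.monoDegree G (c x) o ∂μ :=
    setLIntegral_congr_fun hN.compl fun x hx => by
      simp only [r, monoDegree_improvementRound_of_far hconn hx]
  have hdrop : ∫⁻ x in {x | S x o}, energy G (r x) (closedBall G o (K + 1)) ∂μ + μ {x | S x o} ≤
      ∫⁻ x in {x | S x o}, energy G (c x) (closedBall G o (K + 1)) ∂μ := by
    rw [← setLIntegral_one, ← lintegral_add_right _ measurable_const]
    refine setLIntegral_mono' hSo fun x hx => ?_
    exact_mod_cast IsActive.energy_improvementRound_lt hconn (hsep x) hx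
  rw [hsplit hr, hsplit hc, hfar, add_right_comm]
  exact add_le_add_left hdrop _

end RandomRound

section Proposals

variable {Ω : Type*} [MeasurableSpace Ω]

/-- The points of `S` that are the only ones of `S` in their ball of radius `2 * L`. -/
def isolatedPoints (G : SimpleGraph V) (L : ℕ) (S : V → Prop) (v : V) : Prop :=
  S v ∧ ∀ u, G.dist v u ≤ 2 * L → S u → u = v

theorem isSeparated_isolatedPoints (L : ℕ) (S : V → Prop) :
    IsSeparated G L (isolatedPoints G L S) :=
  fun _ w hv hw h => (hv.2 w h hw.1).symm

theorem IsFiid.isolatedPoints [Countable V] (hconn : G.Connected) (L : ℕ)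
    {S : (V → Ω) → V → Prop} (hS : IsFiid G S) : IsFiid G fun x => isolatedPoints G L (S x) where
  measurable := measurable_pi_lambda _ fun v => (hS.measurable_apply v).and <|
    .forall fun u => measurable_const.imp ((hS.measurable_apply u).imp measurable_const)
  comp_iso φ x := by
    funext v
    simp only [FiidColoring.isolatedPoints, hS.comp_iso_apply, Function.comp_apply,
      φ.surjective.forall (p := fun u => G.dist (φ v) u ≤ 2 * L → S x u → u = φ v),
      dist_iso hconn, φ.injective.eq_iff]

theorem isFiid_id : IsFiid G fun x : V → Ω => x where
  measurable := measurable_id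
  comp_iso _ _ := rfl

theorem exists_injOn_floor_mul (s : Finset ℝ) : ∃ n : ℕ, Set.InjOn (fun r : ℝ => ⌊n * r⌋) s := by
  have hpair (a b : ℝ) : ∀ᶠ n : ℕ in Filter.atTop, ⌊n * a⌋ = ⌊n * b⌋ → a = b := by
    by_cases hab : a = b
    · simp [hab]
    obtain ⟨N, hN⟩ := exists_nat_gt (1 / |a - b|)
    rw [div_lt_iff₀ (abs_sub_pos.2 hab)] at hN
    filter_upwards [Filter.eventually_ge_atTop N] with n hn hfloor
    have hclose := Int.abs_sub_lt_one_of_floor_eq_floor hfloor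
    rw [← mul_sub, abs_mul, Nat.abs_cast] at hclose
    have : (N : ℝ) * |a - b| ≤ n * |a - b| := by gcongr
    linarith
  have hall : ∀ᶠ n : ℕ in Filter.atTop, ∀ a ∈ s, ∀ b ∈ s, ⌊n * a⌋ = ⌊n * b⌋ → a = b := by
    simp only [Filter.eventually_all_finset]
    exact fun a _ b _ => hpair a b
  obtain ⟨n, hn⟩ := hall.exists
  exact ⟨n, fun a ha b hb => hn a ha b hb⟩

theorem exists_seq_frequently_eq (P : Type*) [Countable P] [Nonempty P] :
    ∃ e : ℕ → P, ∀ p, ∃ᶠ j in Filter.atTop, e j = p := by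
  obtain ⟨f, hf⟩ := exists_surjective_nat P
  refine ⟨fun j => f j.unpair.1, fun p => Filter.frequently_atTop.2 fun N => ?_⟩
  obtain ⟨i, rfl⟩ := hf p
  exact ⟨Nat.pair i N, Nat.right_le_pair i N, by simp⟩

open Classical in
/-- The colour listed for `z` in a finite partial table, and `a` if there is none. -/
noncomputable def lookup {C : Type*} (a : C) (T : Σ F : Finset ℤ, F → C) (z : ℤ) : C :=
  if h : z ∈ T.1 then T.2 ⟨z, h⟩ else a

/-- Reading the label at each vertex up to precision `1 / n`, the pattern of colours `t` around
`v` becomes one of countably many finite tables once `n` separates the labels in the ball. -/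
theorem exists_lookup_eq [G.LocallyFinite] (hconn : G.Connected) {C : Type*} (a : C) (L : ℕ)
    {x : V → ℝ} (hx : Function.Injective x) (t : V → C) (v : V) :
    ∃ (n : ℕ) (z : ℤ) (T : Σ F : Finset ℤ, F → C),
      isolatedPoints G L (fun u => ⌊n * x u⌋ = z) v ∧
        ∀ u, G.dist v u ≤ L → lookup a T ⌊n * x u⌋ = t u := by
  classical
  obtain ⟨n, hn⟩ := exists_injOn_floor_mul ((closedBall G v (2 * L)).image x)
  have hinj {u w : V} (hu : G.dist v u ≤ 2 * L) (hw : G.dist v w ≤ 2 * L)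
      (h : ⌊n * x u⌋ = ⌊n * x w⌋) : u = w :=
    hx <| hn (Finset.mem_image_of_mem x ((mem_closedBall hconn).2 hu))
      (Finset.mem_image_of_mem x ((mem_closedBall hconn).2 hw)) h
  have hpreimage (z : (closedBall G v L).image fun u => ⌊n * x u⌋) :
      ∃ u, G.dist v u ≤ L ∧ ⌊n * x u⌋ = z := by
    obtain ⟨u, hu, huz⟩ := Finset.mem_image.1 z.2
    exact ⟨u, (mem_closedBall hconn).1 hu, huz⟩
  choose p hp hpz using hpreimage
  refine ⟨n, ⌊n * x v⌋, ⟨_, fun z => t (p z)⟩, ⟨rfl, fun u hu h => hinj hu (by simp) h⟩,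
    fun u hu => ?_⟩
  have hmem : ⌊n * x u⌋ ∈ (closedBall G v L).image fun u => ⌊n * x u⌋ :=
    Finset.mem_image_of_mem _ ((mem_closedBall hconn).2 hu)
  have hpu : p ⟨_, hmem⟩ = u := by
    have := hp ⟨_, hmem⟩
    exact hinj (by omega) (by omega) (hpz ⟨_, hmem⟩)
  rw [lookup, dif_pos hmem]
  exact congrArg t hpu

theorem exists_recurrent_proposals [Countable V] [G.LocallyFinite] (hconn : G.Connected)
    (C : Type*) [Countable C] [Nonempty C] [MeasurableSpace C] (L : ℕ) :
    ∃ (d : ℕ → (V → ℝ) → V → C) (B : ℕ → (V → ℝ) → V → Prop),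
      (∀ j, IsFiid G (d j)) ∧ (∀ j, IsFiid G (B j)) ∧ (∀ j x, IsSeparated G L (B j x)) ∧
      ∀ x, Function.Injective x → ∀ (t : V → C) v, ∃ᶠ j in Filter.atTop,
        B j x v ∧ ∀ u, G.dist v u ≤ L → d j x u = t u := by
  obtain ⟨a⟩ := ‹Nonempty C›
  obtain ⟨e, he⟩ := exists_seq_frequently_eq (ℕ × ℤ × Σ F : Finset ℤ, F → C)
  have hfloor (n : ℕ) : Measurable fun r : ℝ => ⌊n * r⌋ :=
    Int.measurable_floor.comp (measurable_const_mul _)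
  refine ⟨fun j x u => lookup a (e j).2.2 ⌊(e j).1 * x u⌋,
    fun j x => isolatedPoints G L fun u => ⌊(e j).1 * x u⌋ = (e j).2.1, fun j => ?_, fun j => ?_,
    fun j x => isSeparated_isolatedPoints L _, fun x hx t v => ?_⟩
  · exact isFiid_id.map ((measurable_of_countable (lookup a (e j).2.2)).comp (hfloor _))
  · exact (isFiid_id.map ((hfloor _).eq measurable_const)).isolatedPoints hconn L
  · obtain ⟨n, z, T, hz, hT⟩ := exists_lookup_eq hconn a L hx t v
    exact (he (n, z, T)).mono fun j hj => by simpa only [hj] using ⟨hz, hT⟩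

end Proposals

section Limit

open Filter
open scoped ENNReal

variable [Countable V] {Ω C : Type*} [MeasurableSpace Ω] {μ : Measure (V → Ω)}

/-- The eventual value of a sequence of colours, arbitrary if the sequence is not eventually
constant. -/
noncomputable def eventualValue [Nonempty C] (c : ℕ → C) : C :=
  Classical.epsilon fun k => ∀ᶠ j in atTop, c j = k

theorem exists_forall_eq_of_eventually_succ_eq {c : ℕ → C}
    (h : ∀ᶠ j in atTop, c (j + 1) = c j) : ∃ k, ∀ᶠ j in atTop, c j = k := by
  obtain ⟨N, hN⟩ := eventually_atTop.1 h
  refine ⟨c N, eventually_atTop.2 ⟨N, fun j hj => ?_⟩⟩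
  induction j, hj using Nat.le_induction with
  | base => rfl
  | succ j hj ih => rw [hN j hj, ih]

theorem eventually_eq_eventualValue [Nonempty C] {c : ℕ → C}
    (h : ∀ᶠ j in atTop, c (j + 1) = c j) : ∀ᶠ j in atTop, c j = eventualValue c :=
  Classical.epsilon_spec (exists_forall_eq_of_eventually_succ_eq h)

theorem measurable_eventualValue [Finite C] [Nonempty C] [MeasurableSpace C]
    [MeasurableSingletonClass C] {α : Type*} [MeasurableSpace α] {c : ℕ → α → C}
    (hc : ∀ j, Measurable (c j)) : Measurable fun x => eventualValue fun j => c j x := by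
  have hlim : Measurable fun x k => ∀ᶠ j in atTop, c j x = k := by
    refine measurable_pi_lambda _ fun k => ?_
    simp only [eventually_atTop]
    exact .exists fun N => .forall fun j => measurable_const.imp <|
      measurableSet_setOfPred.1 (hc j (measurableSet_singleton k))
  exact (measurable_of_countable (Classical.epsilon : (C → Prop) → C)).comp hlim

theorem exists_isFiid_limit [Finite C] [Nonempty C] [MeasurableSpace C]
    [MeasurableSingletonClass C] {c : ℕ → (V → Ω) → V → C} (hc : ∀ j, IsFiid G (c j))
    {S : ℝ≥0∞} (hS : S ≠ ∞) (hsum : ∀ v, ∑' j, μ {x | c (j + 1) x v ≠ c j x v} ≤ S) :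
    ∃ f : (V → Ω) → V → C, IsFiid G f ∧ (∀ᵐ x ∂μ, ∀ v, ∀ᶠ j in atTop, c j x v = f x v) ∧
      ∀ v, μ {x | f x v ≠ c 0 x v} ≤ S := by
  let f (x : V → Ω) (v : V) : C := eventualValue fun j => c j x v
  have hf : IsFiid G f := by
    refine ⟨measurable_pi_lambda _ fun v =>
      measurable_eventualValue fun j => (hc j).measurable_apply v, fun φ x => ?_⟩
    simp only [f, (hc _).comp_iso]
    rfl
  have hlim : ∀ᵐ x ∂μ, ∀ v, ∀ᶠ j in atTop, c j x v = f x v := by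
    refine ae_all_iff.2 fun v => ?_
    filter_upwards [ae_eventually_notMem (ne_top_of_le_ne_top hS (hsum v))] with x hx
    exact eventually_eq_eventualValue (hx.mono fun _ => not_not.1)
  refine ⟨f, hf, hlim, fun v => le_trans ?_ ((measure_iUnion_le _).trans (hsum v))⟩
  refine measure_mono_ae ?_
  filter_upwards [hlim] with x hx hne
  by_contra hstable
  have hsucc (j : ℕ) : c (j + 1) x v = c j x v :=
    of_not_not fun hj => hstable (Set.mem_iUnion.2 ⟨j, hj⟩)
  have hzero (j : ℕ) : c j x v = c 0 x v := Nat.rec rfl (fun j ih => (hsucc j).trans ih) j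
  obtain ⟨j, hj⟩ := (hx v).exists
  exact hne (hj.symm.trans (hzero j))

end Limit

section Unimprovable

open Filter
open scoped ENNReal

variable [G.LocallyFinite] {C : Type*} [DecidableEq C]

theorem meanMonoDegree_ne_top {Ω : Type*} [MeasurableSpace Ω]
    {μ : Measure (V → Ω)} [IsFiniteMeasure μ] (c : (V → Ω) → V → C) (v : V) :
    meanMonoDegree G μ c v ≠ ∞ :=
  (IsFiniteMeasure.lintegral_lt_top_of_bounded_to_ennreal μ ⟨G.degree v, fun x =>
    mod_cast Finset.card_filter_le (G.neighborFinset v) fun w => c x w = c x v⟩).ne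

variable [DecidableEq V] {K K' : ℕ}

theorem IsImprovement.exists_improvementRound_ne (hconn : G.Connected) {c g t d : V → C}
    {B : V → Prop} {v : V} (h : IsImprovement G K K' g t v) (hB : B v)
    (hc : ∀ u, G.dist v u ≤ K + 2 → c u = g u) (hd : ∀ u, G.dist v u ≤ K → d u = t u) :
    ∃ u, G.dist v u ≤ K + 2 ∧ improvementRound G K K' c d B u ≠ g u := by
  have hsplice (u : V) (hu : G.dist v u ≤ K + 2) : splice G K c d v u = t u := by
    rw [splice]
    split_ifs with huK
    · exact hd u huK
    · rw [hc u hu, h.eq_of_lt_dist u (not_le.1 huK)]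
  have hactive : IsActive G K K' c d B v :=
    ⟨hB, h.congr hconn hc hsplice fun u hu => if_neg hu.not_ge⟩
  by_contra! hstable
  have ht : t = g := by
    funext u
    by_cases hu : G.dist v u ≤ K
    · rw [← hstable u (by omega), ← hd u hu]
      exact (if_pos ⟨v, hactive, hu⟩).symm
    · exact h.eq_of_lt_dist u (not_le.1 hu)
  exact h.energy_lt.ne (by rw [ht])

variable {Ω : Type*}

/-- The colourings obtained from `c₀` by one improvement round for each proposal. -/
noncomputable def improvementSeq (G : SimpleGraph V) [G.LocallyFinite] (K K' : ℕ)
    (d : ℕ → (V → Ω) → V → C) (B : ℕ → (V → Ω) → V → Prop) (c₀ : (V → Ω) → V → C) :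
    ℕ → (V → Ω) → V → C
  | 0 => c₀
  | j + 1 => fun x =>
    improvementRound G K K' (improvementSeq G K K' d B c₀ j x) (d j x) (B j x)

variable [Countable V] [MeasurableSpace Ω] [MeasurableSpace C] [MeasurableEq C]
  {d : ℕ → (V → Ω) → V → C} {B : ℕ → (V → Ω) → V → Prop} {c₀ : (V → Ω) → V → C}
  {μ : Measure (V → Ω)}

theorem IsFiid.improvementSeq (hconn : G.Connected) (hd : ∀ j, IsFiid G (d j))
    (hB : ∀ j, IsFiid G (B j)) (hc₀ : IsFiid G c₀) (j : ℕ) :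
    IsFiid G (improvementSeq G K K' d B c₀ j) := by
  induction j with
  | zero => exact hc₀
  | succ j ih => exact ih.improvementRound hconn (hd j) (hB j)

theorem tsum_measure_improvementSeq_ne_le (hconn : G.Connected) (hμ : IsSwapHomogeneous G μ)
    (hd : ∀ j, IsFiid G (d j)) (hB : ∀ j, IsFiid G (B j))
    (hsep : ∀ j x, IsSeparated G (K + 1) (B j x)) (hc₀ : IsFiid G c₀) (v : V) :
    ∑' j, μ {x | improvementSeq G K K' d B c₀ (j + 1) x v ≠
      improvementSeq G K K' d B c₀ j x v} ≤ K' * meanMonoDegree G μ c₀ v := by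
  let c := improvementSeq G K K' d B c₀
  have hc (j : ℕ) : IsFiid G (c j) := hc₀.improvementSeq hconn hd hB j
  let activity (j : ℕ) : ℝ≥0∞ := μ {x | IsActive G K K' (c j x) (d j x) (B j x) v}
  have hsum_range (n : ℕ) :
      meanMonoDegree G μ (c n) v + ∑ j ∈ Finset.range n, activity j ≤
        meanMonoDegree G μ c₀ v := by
    induction n with
    | zero => exact (add_zero _).le
    | succ n ih =>
      rw [Finset.sum_range_succ, add_comm (∑ j ∈ Finset.range n, activity j), ← add_assoc]
      refine le_trans (add_le_add_left ?_ _) ih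
      exact meanMonoDegree_improvementRound_add_le hconn hμ (hc n) (hd n) (hB n) (hsep n) v
  calc ∑' j, μ {x | c (j + 1) x v ≠ c j x v}
      ≤ ∑' j, K' * activity j := ENNReal.tsum_le_tsum fun j =>
        measure_improvementRound_ne_le hconn hμ (hc j) (hd j) (hB j) (hsep j) v
    _ = K' * ∑' j, activity j := ENNReal.tsum_mul_left
    _ ≤ K' * meanMonoDegree G μ c₀ v := by
        gcongr
        exact ENNReal.tsum_le_of_sum_range_le fun n => le_add_self.trans (hsum_range n)

end Unimprovable

section RealLabels

open Filter
open scoped ENNReal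

variable [Countable V] [G.LocallyFinite] [DecidableEq V] {C : Type*} [Finite C] [Nonempty C]
  [DecidableEq C] [MeasurableSpace C] [MeasurableSingletonClass C] {μ : Measure (V → ℝ)}

/-- Every local pattern is proposed infinitely often, so the limit of the improvement rounds
admits no improvement. -/
theorem exists_isFiid_unimprovable [IsFiniteMeasure μ] (hconn : G.Connected)
    (hμ : IsSwapHomogeneous G μ) (hinj : ∀ᵐ x ∂μ, Function.Injective x) (K K' : ℕ)
    {c₀ : (V → ℝ) → V → C} (hc₀ : IsFiid G c₀) :
    ∃ c : (V → ℝ) → V → C, IsFiid G c ∧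
      (∀ᵐ x ∂μ, ∀ v, ¬ ∃ t, IsImprovement G K K' (c x) t v) ∧
      ∀ v, μ {x | c x v ≠ c₀ x v} ≤ K' * meanMonoDegree G μ c₀ v := by
  obtain ⟨d, B, hd, hB, hsep, hrec⟩ := exists_recurrent_proposals hconn C (K + 1)
  obtain ⟨o⟩ := hconn.nonempty
  obtain ⟨g, hg, hlim, hne⟩ := exists_isFiid_limit
    (fun j => hc₀.improvementSeq (K := K) (K' := K') hconn hd hB j)
    (ENNReal.mul_ne_top (ENNReal.natCast_ne_top K') (meanMonoDegree_ne_top (μ := μ) c₀ o))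
    (fun v => (tsum_measure_improvementSeq_ne_le hconn hμ hd hB hsep hc₀ v).trans_eq
      (by rw [hc₀.meanMonoDegree_eq hμ v o]))
  refine ⟨g, hg, ?_, fun v => (hne v).trans_eq (by rw [hc₀.meanMonoDegree_eq hμ v o])⟩
  filter_upwards [hinj, hlim] with x hx hxlim v ⟨t, ht⟩
  have hstable : ∀ᶠ j in atTop, ∀ u ∈ closedBall G v (K + 2),
      improvementSeq G K K' d B c₀ j x u = g x u :=
    (eventually_all_finset _).2 fun u _ => hxlim u
  obtain ⟨j, ⟨hBj, hdj⟩, hj, hj_succ⟩ := ((hrec x hx t v).and_eventually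
    (hstable.and ((tendsto_add_atTop_nat 1).eventually hstable))).exists
  obtain ⟨u, hu, hne⟩ := ht.exists_improvementRound_ne hconn hBj
    (fun u hu => hj u ((mem_closedBall hconn).2 hu)) fun u hu => hdj u (by omega)
  exact hne (hj_succ u ((mem_closedBall hconn).2 hu))

end RealLabels

section ChainDensity

open scoped ENNReal Finset

open Classical in
theorem card_isChainEnd_zero [G.LocallyFinite] {C : Type*} [DecidableEq C] (b : V → C)
    (v : V) :
    #{u ∈ G.neighborFinset v | IsChainEnd G b 0 u v} = monoDegree G b v :=
  congrArg Finset.card <| Finset.filter_congr fun u hu =>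
    and_iff_right ((G.mem_neighborFinset v u).1 hu).symm

variable [Countable V] {Ω C : Type*} [MeasurableSpace Ω] [MeasurableSpace C]
  {c : (V → Ω) → V → C} {μ : Measure (V → Ω)}

theorem IsFiid.measurable_isChainEnd [MeasurableEq C] (hc : IsFiid G c) (n : ℕ) (v w : V) :
    Measurable fun x => IsChainEnd G (c x) n v w := by
  have heq (a b : V) : Measurable fun x => c x a = c x b :=
    (hc.measurable_apply a).eq (hc.measurable_apply b)
  induction n generalizing v w with
  | zero => exact measurable_const.and (heq v w)
  | succ n ih =>
    exact .exists fun u => (ih u v).and <| measurable_const.and <| measurable_const.and <|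
      (heq w v).not.and <| .forall fun w' => measurable_const.imp <| measurable_const.imp <|
        (heq w' w).imp measurable_const

variable [G.LocallyFinite]

open Classical in
theorem IsFiid.lintegral_card_isChainEnd [MeasurableEq C] (hμ : IsSwapHomogeneous G μ)
    (hc : IsFiid G c) (n : ℕ) (o : V) :
    ∫⁻ x, #{w ∈ G.neighborFinset o | IsChainEnd G (c x) n o w} ∂μ =
      ∫⁻ x, #{u ∈ G.neighborFinset o | IsChainEnd G (c x) n u o} ∂μ := by
  let F (x : V → Ω) (u v : V) : ℝ≥0∞ := if IsChainEnd G (c x) n u v then 1 else 0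
  have hF (u v : V) : Measurable fun x => F x u v :=
    .ite (hc.measurable_isChainEnd n u v).setOf measurable_const measurable_const
  have hFφ (φ : G ≃g G) (x : V → Ω) (u v : V) : F (x ∘ φ) u v = F x (φ u) (φ v) := by
    simp only [F, hc.comp_iso, isChainEnd_comp_iso]
  have hcard {p : V → Prop} (hp : ∀ v, p v → G.Adj o v) :
      (#{v ∈ G.neighborFinset o | p v} : ℝ≥0∞) = ∑' v, if p v then 1 else 0 := by
    rw [tsum_eq_sum (s := G.neighborFinset o), Finset.sum_boole]
    exact fun v hv => if_neg fun h => hv ((G.mem_neighborFinset o v).2 (hp v h))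
  simp only [hcard fun v (h : IsChainEnd G _ n v o) => h.adj.symm,
    hcard fun v (h : IsChainEnd G _ n o v) => h.adj]
  exact hμ.mass_transport hF hFφ o

variable [DecidableEq V] [Fintype C] [DecidableEq C] [MeasurableSingletonClass C]

open Classical in
/-- In an unimprovable colouring the chain ends multiply by `r` at each step, and all of them
together are at most one per vertex. -/
theorem sum_pow_mul_meanMonoDegree_le_one [IsProbabilityMeasure μ] (hT : G.IsTree)
    (hμ : IsSwapHomogeneous G μ) (hc : IsFiid G c) {N r : ℕ}
    (hopt : ∀ᵐ x ∂μ, ∀ v, ¬ ∃ t, IsImprovement G N (2 * N + 1) (c x) t v)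
    (hdeg : ∀ v, G.degree v + 1 + r ≤ 2 * Fintype.card C) (o : V) :
    ∑ n ∈ Finset.range (N + 1), (r : ℝ≥0∞) ^ n * meanMonoDegree G μ c o ≤ 1 := by
  let inflow (n : ℕ) (x : V → Ω) : ℕ := #{u ∈ G.neighborFinset o | IsChainEnd G (c x) n u o}
  have hinflow (n : ℕ) : Measurable fun x => (inflow n x : ℝ≥0∞) := by
    simp only [inflow, Finset.card_filter]
    exact (measurable_of_countable Nat.cast).comp <| Finset.measurable_sum _ fun u _ =>
      .ite (hc.measurable_isChainEnd n u o).setOf measurable_const measurable_const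
  have hgrow (n : ℕ) (hn : n ≤ N) :
      r * ∫⁻ x, inflow n x ∂μ ≤ ∫⁻ x, inflow (n + 1) x ∂μ := by
    rw [← lintegral_const_mul _ (hinflow n)]
    refine (lintegral_mono_ae ?_).trans_eq (hc.lintegral_card_isChainEnd hμ (n + 1) o)
    filter_upwards [hopt] with x hx
    exact_mod_cast mul_card_isChainEnd_le hT hx hdeg hn o
  have hpow (n : ℕ) (hn : n ≤ N) :
      (r : ℝ≥0∞) ^ n * meanMonoDegree G μ c o ≤ ∫⁻ x, inflow n x ∂μ := by
    induction n with
    | zero => simp [inflow, card_isChainEnd_zero, meanMonoDegree]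
    | succ n ih =>
      refine le_trans ?_ (hgrow n (by omega))
      rw [pow_succ', mul_assoc]
      gcongr
      exact ih (by omega)
  calc ∑ n ∈ Finset.range (N + 1), (r : ℝ≥0∞) ^ n * meanMonoDegree G μ c o
      ≤ ∑ n ∈ Finset.range (N + 1), ∫⁻ x, inflow n x ∂μ :=
        Finset.sum_le_sum fun n hn => hpow n (Finset.mem_range_succ_iff.1 hn)
    _ = ∫⁻ x, ∑ n ∈ Finset.range (N + 1), (inflow n x : ℝ≥0∞) ∂μ :=
        (lintegral_finsetSum _ fun n _ => hinflow n).symm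
    _ ≤ ∫⁻ _, 1 ∂μ := by
        refine lintegral_mono_ae ?_
        filter_upwards [hopt] with x hx
        exact_mod_cast sum_card_isChainEnd_le_one hT hx (fun v => by have := hdeg v; omega) o
    _ = 1 := lintegral_one.trans measure_univ

end ChainDensity

section Convergence

open Filter
open scoped ENNReal

variable [Countable V] [G.LocallyFinite] {Ω C : Type*} [MeasurableSpace Ω] [DecidableEq C]
  [MeasurableSpace C] {μ : Measure (V → Ω)}

theorem ae_adj_ne_of_tsum_meanMonoDegree_ne_top [MeasurableEq C] {c : ℕ → (V → Ω) → V → C}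
    {f : (V → Ω) → V → C} (hc : ∀ j, IsFiid G (c j))
    (hsum : ∀ v, ∑' j, meanMonoDegree G μ (c j) v ≠ ∞)
    (hlim : ∀ᵐ x ∂μ, ∀ v, ∀ᶠ j in atTop, c j x v = f x v) :
    ∀ᵐ x ∂μ, ∀ u v, G.Adj u v → f x u ≠ f x v := by
  have hmeas (j : ℕ) (v : V) : Measurable fun x => (monoDegree G (c j x) v : ℝ≥0∞) :=
    ((hc j).monoDegree.map (measurable_of_countable Nat.cast)).measurable_apply v
  have hzero : ∀ᵐ x ∂μ, ∀ v, ∀ᶠ j in atTop, monoDegree G (c j x) v = 0 := by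
    refine ae_all_iff.2 fun v => ?_
    have hfin : ∫⁻ x, ∑' j, (monoDegree G (c j x) v : ℝ≥0∞) ∂μ ≠ ∞ := by
      rw [lintegral_tsum fun j => (hmeas j v).aemeasurable]
      exact hsum v
    filter_upwards [ae_lt_top (.tsum fun j => hmeas j v) hfin] with x hx
    filter_upwards [(ENNReal.tendsto_atTop_zero_of_tsum_ne_top hx.ne).eventually_lt_const
      zero_lt_one] with j hj
    exact Nat.lt_one_iff.1 (mod_cast hj)
  filter_upwards [hzero, hlim] with x hxzero hxlim u v huv heq
  obtain ⟨j, hj, hu, hv⟩ := ((hxzero u).and ((hxlim u).and (hxlim v))).exists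
  rw [monoDegree, colorCount, Finset.card_eq_zero, Finset.filter_eq_empty_iff] at hj
  exact hj ((G.mem_neighborFinset u v).2 huv) (by rw [hu, hv, heq])

end Convergence

section Coloring

open Filter
open scoped ENNReal

theorem tsum_two_mul_add_three_mul_inv_pow_ne_top :
    ∑' m : ℕ, ((2 * m + 3 : ℕ) : ℝ≥0∞) * (3 ^ m)⁻¹ ≠ ∞ := by
  have hlt : (2 : ℝ≥0∞) * 3⁻¹ < 1 := by
    rw [← div_eq_mul_inv, ENNReal.div_lt_iff] <;> norm_num
  refine ne_top_of_le_ne_top (b := ∑' m : ℕ, (3 : ℝ≥0∞) * (2 * 3⁻¹) ^ m) ?_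
    (ENNReal.tsum_le_tsum fun m => ?_)
  · rw [ENNReal.tsum_mul_left, ENNReal.tsum_geometric]
    exact ENNReal.mul_ne_top (by norm_num) (ENNReal.inv_ne_top.2 (tsub_pos_of_lt hlt).ne')
  · have hbound : 2 * m + 3 ≤ 3 * 2 ^ m := by
      have := Nat.lt_two_pow_self (n := m)
      omega
    rw [mul_pow, ENNReal.inv_pow, ← mul_assoc]
    gcongr
    exact_mod_cast hbound

variable [Countable V] [G.LocallyFinite] {C : Type*} [Fintype C] [Nonempty C] [DecidableEq C]
  [MeasurableSpace C] [MeasurableSingletonClass C] {μ : Measure (V → ℝ)} [IsProbabilityMeasure μ]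

theorem exists_isFiid_mul_meanMonoDegree_le_one (hT : G.IsTree) (hμ : IsSwapHomogeneous G μ)
    (hinj : ∀ᵐ x ∂μ, Function.Injective x) (hdeg : ∀ v, G.degree v + 2 ≤ 2 * Fintype.card C)
    (N : ℕ) : ∃ c : (V → ℝ) → V → C, IsFiid G c ∧ ∀ o, (N + 1) * meanMonoDegree G μ c o ≤ 1 := by
  classical
  obtain ⟨a⟩ := ‹Nonempty C›
  obtain ⟨c, hc, hopt, -⟩ := exists_isFiid_unimprovable hT.connected hμ hinj N (2 * N + 1)
    (isFiid_const a)
  refine ⟨c, hc, fun o => ?_⟩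
  simpa using sum_pow_mul_meanMonoDegree_le_one (r := 1) hT hμ hc hopt hdeg o

theorem exists_isFiid_meanMonoDegree_le_inv_pow (hT : G.IsTree) (hμ : IsSwapHomogeneous G μ)
    (hinj : ∀ᵐ x ∂μ, Function.Injective x) (hdeg : ∀ v, G.degree v + 4 ≤ 2 * Fintype.card C)
    (N : ℕ) {c₀ : (V → ℝ) → V → C} (hc₀ : IsFiid G c₀) :
    ∃ c : (V → ℝ) → V → C, IsFiid G c ∧ (∀ o, meanMonoDegree G μ c o ≤ (3 ^ N)⁻¹) ∧
      ∀ v, μ {x | c x v ≠ c₀ x v} ≤ (2 * N + 1 : ℕ) * meanMonoDegree G μ c₀ v := by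
  classical
  obtain ⟨c, hc, hopt, hne⟩ := exists_isFiid_unimprovable hT.connected hμ hinj N (2 * N + 1) hc₀
  refine ⟨c, hc, fun o => ?_, hne⟩
  rw [ENNReal.le_inv_iff_mul_le, mul_comm]
  exact (Finset.single_le_sum (f := fun n => (3 : ℕ) ^ n * meanMonoDegree G μ c o)
    (fun _ _ => zero_le) (Finset.self_mem_range_succ N)).trans
    (sum_pow_mul_meanMonoDegree_le_one hT hμ hc hopt hdeg o)

theorem exists_seq_isFiid_meanMonoDegree_le (hT : G.IsTree) (hμ : IsSwapHomogeneous G μ)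
    (hinj : ∀ᵐ x ∂μ, Function.Injective x) (hdeg : ∀ v, G.degree v + 4 ≤ 2 * Fintype.card C)
    (k : ℕ) {c₀ : (V → ℝ) → V → C} (hc₀ : IsFiid G c₀) :
    ∃ c : ℕ → (V → ℝ) → V → C, c 0 = c₀ ∧ (∀ j, IsFiid G (c j)) ∧
      (∀ j o, meanMonoDegree G μ (c (j + 1)) o ≤ (3 ^ (j + k))⁻¹) ∧
      ∀ j v, μ {x | c (j + 1) x v ≠ c j x v} ≤
        (2 * (j + k) + 1 : ℕ) * meanMonoDegree G μ (c j) v := by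
  choose! next hnext hmean hne using fun (N : ℕ) (c : (V → ℝ) → V → C) (hc : IsFiid G c) =>
    exists_isFiid_meanMonoDegree_le_inv_pow hT hμ hinj hdeg N hc
  let s (j : ℕ) : (V → ℝ) → V → C := Nat.rec c₀ (fun i => next (i + k)) j
  have hs (j : ℕ) : IsFiid G (s j) := Nat.rec hc₀ (fun i => hnext (i + k) (s i)) j
  exact ⟨s, rfl, hs, fun j => hmean (j + k) (s j) (hs j), fun j => hne (j + k) (s j) (hs j)⟩

/-- Improvements of radius `k, k + 1, …` are made in turn; all but the first together recolour no
more than the tail of a convergent series. -/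
theorem exists_isFiid_proper (hT : G.IsTree) (hμ : IsSwapHomogeneous G μ)
    (hinj : ∀ᵐ x ∂μ, Function.Injective x) (hdeg : ∀ v, G.degree v + 4 ≤ 2 * Fintype.card C)
    (k : ℕ) {c₀ : (V → ℝ) → V → C} (hc₀ : IsFiid G c₀) :
    ∃ f : (V → ℝ) → V → C, IsFiid G f ∧ (∀ᵐ x ∂μ, ∀ u v, G.Adj u v → f x u ≠ f x v) ∧
      ∀ v, μ {x | f x v ≠ c₀ x v} ≤ (2 * k + 1 : ℕ) * meanMonoDegree G μ c₀ v +
        ∑' j, ((2 * (j + k) + 3 : ℕ) : ℝ≥0∞) * (3 ^ (j + k))⁻¹ := by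
  obtain ⟨c, rfl, hc, hmean, hne⟩ := exists_seq_isFiid_meanMonoDegree_le hT hμ hinj hdeg k hc₀
  let w (m : ℕ) : ℝ≥0∞ := (2 * m + 3 : ℕ) * (3 ^ m)⁻¹
  have hw : ∑' j, w (j + k) ≠ ∞ := ne_top_of_le_ne_top
    tsum_two_mul_add_three_mul_inv_pow_ne_top
    (ENNReal.tsum_comp_le_tsum_of_injective (add_left_injective k) w)
  have hsum (v : V) : ∑' j, μ {x | c (j + 1) x v ≠ c j x v} ≤
      (2 * k + 1 : ℕ) * meanMonoDegree G μ (c 0) v + ∑' j, w (j + k) := by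
    rw [tsum_eq_zero_add' ENNReal.summable]
    refine add_le_add ((hne 0 v).trans_eq (by rw [zero_add])) (ENNReal.tsum_le_tsum fun j => ?_)
    exact (hne (j + 1) v).trans (mul_le_mul' (Nat.cast_le.2 (by omega)) (hmean j v))
  obtain ⟨o⟩ := hT.connected.nonempty
  obtain ⟨f, hf, hlim, hfc⟩ := exists_isFiid_limit hc
    (ENNReal.add_ne_top.2 ⟨ENNReal.mul_ne_top (ENNReal.natCast_ne_top _)
      (meanMonoDegree_ne_top (c 0) o), hw⟩)
    (fun v => (hsum v).trans_eq (by rw [hc₀.meanMonoDegree_eq hμ v o]))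
  refine ⟨f, hf, ae_adj_ne_of_tsum_meanMonoDegree_ne_top (fun j => hc (j + 1)) (fun v => ?_) ?_,
    fun v => (hfc v).trans_eq (by rw [hc₀.meanMonoDegree_eq hμ v o])⟩
  · refine ne_top_of_le_ne_top hw (ENNReal.tsum_le_tsum fun j => (hmean j v).trans ?_)
    exact le_mul_of_one_le_left zero_le (mod_cast by omega)
  · filter_upwards [hlim] with x hx v
    exact (tendsto_add_atTop_nat 1).eventually (hx v)

end Coloring

section Iid

open ProbabilityTheory

variable {Ω : Type*} [MeasurableSpace Ω] (ν : Measure Ω) [IsProbabilityMeasure ν]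

theorem measurePreserving_comp_equiv_infinitePi (e : V ≃ V) :
    MeasurePreserving (fun x : V → Ω => x ∘ e) (Measure.infinitePi fun _ => ν)
      (Measure.infinitePi fun _ => ν) where
  measurable := by fun_prop
  map_eq := by
    convert Measure.infinitePi_map_piCongrLeft (fun _ : V => ν) e.symm using 2
    ext x u
    obtain ⟨w, rfl⟩ := e.symm.surjective u
    rw [MeasurableEquiv.piCongrLeft_apply_apply (β := fun _ : V => Ω) e.symm x w]
    exact congrArg x (e.apply_symm_apply w)

theorem isSwapHomogeneous_infinitePi [G.LocallyFinite] (hT : G.IsTree) {d : ℕ}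
    (hreg : G.IsRegularOfDegree d) :
    IsSwapHomogeneous G (Measure.infinitePi fun _ : V => ν) where
  exists_iso_swap := exists_iso_swap hT hreg
  measurePreserving φ := measurePreserving_comp_equiv_infinitePi ν φ.toEquiv

theorem ae_injective_infinitePi [Countable V] [MeasurableEq Ω] [NullSingletonClass ν] :
    ∀ᵐ x ∂(Measure.infinitePi fun _ : V => ν), Function.Injective x := by
  have hprod : ∀ᵐ p ∂ν.prod ν, p.1 ≠ p.2 := by
    refine (Measure.ae_prod_iff_ae_ae (measurable_fst.eq measurable_snd).not.setOf).2 ?_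
    exact .of_forall fun a => (Measure.ae_ne ν a).mono fun _ => Ne.symm
  have hne (u v : V) (huv : u ≠ v) : ∀ᵐ x ∂(Measure.infinitePi fun _ : V => ν), x u ≠ x v := by
    have hindep := (iIndepFun_infinitePi (P := fun _ : V => ν) (X := fun _ a => a)
      fun _ => measurable_id).indepFun huv
    rw [indepFun_iff_map_prod_eq_prod_map_map (measurable_pi_apply u).aemeasurable
      (measurable_pi_apply v).aemeasurable, Measure.infinitePi_map_eval,
      Measure.infinitePi_map_eval] at hindep
    rw [← hindep] at hprod
    exact ae_of_ae_map ((measurable_pi_apply u).prodMk (measurable_pi_apply v)).aemeasurable hprod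
  have hall : ∀ᵐ x ∂(Measure.infinitePi fun _ : V => ν), ∀ u v, u ≠ v → x u ≠ x v := by
    simpa only [ae_all_iff] using hne
  filter_upwards [hall] with x hx u v
  exact not_imp_not.1 (hx u v)

end Iid

section AlmostColoring

open scoped ENNReal

theorem exists_tsum_two_mul_add_three_mul_inv_pow_lt {ε : ℝ≥0∞} (hε : 0 < ε) :
    ∃ k : ℕ, ∑' j : ℕ, ((2 * (j + k) + 3 : ℕ) : ℝ≥0∞) * (3 ^ (j + k))⁻¹ < ε :=
  ((ENNReal.tendsto_sum_nat_add _ tsum_two_mul_add_three_mul_inv_pow_ne_top).eventually_lt_const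
    hε).exists

variable [Countable V] [G.LocallyFinite] {C : Type*} [Fintype C] [Nonempty C] [DecidableEq C]
  [MeasurableSpace C] [MeasurableSingletonClass C] {μ : Measure (V → ℝ)} [IsProbabilityMeasure μ]

theorem exists_isFiid_meanMonoDegree_lt (hT : G.IsTree) (hμ : IsSwapHomogeneous G μ)
    (hinj : ∀ᵐ x ∂μ, Function.Injective x) (hdeg : ∀ v, G.degree v + 2 ≤ 2 * Fintype.card C)
    {ε : ℝ≥0∞} (hε : ε ≠ 0) :
    ∃ c : (V → ℝ) → V → C, IsFiid G c ∧ ∀ o, meanMonoDegree G μ c o < ε := by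
  obtain ⟨N, hN⟩ := ENNReal.exists_inv_nat_lt hε
  obtain ⟨c, hc, hmean⟩ := exists_isFiid_mul_meanMonoDegree_le_one hT hμ hinj hdeg N
  refine ⟨c, hc, fun o => lt_of_le_of_lt ?_ hN⟩
  rw [ENNReal.le_inv_iff_mul_le, mul_comm]
  refine le_trans ?_ (hmean o)
  gcongr
  exact le_self_add

theorem exists_isFiid_proper_measure_last_lt (hT : G.IsTree) (hμ : IsSwapHomogeneous G μ)
    (hinj : ∀ᵐ x ∂μ, Function.Injective x) {q : ℕ} (hdeg : ∀ v, G.degree v + 2 ≤ 2 * q)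
    {ε : ℝ≥0∞} (hε : 0 < ε) :
    ∃ f : (V → ℝ) → V → Fin (q + 1), IsFiid G f ∧
      (∀ᵐ x ∂μ, ∀ u v, G.Adj u v → f x u ≠ f x v) ∧ ∀ v, μ {x | f x v = Fin.last q} < ε := by
  have hhalf : 0 < ε / 2 := ENNReal.half_pos hε.ne'
  obtain ⟨o⟩ := hT.connected.nonempty
  have : NeZero q := ⟨by have := hdeg o; omega⟩
  obtain ⟨k, hk⟩ := exists_tsum_two_mul_add_three_mul_inv_pow_lt hhalf
  obtain ⟨c, hc, hmean⟩ := exists_isFiid_meanMonoDegree_lt (C := Fin q) hT hμ hinj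
    (by simpa using hdeg) (ENNReal.div_pos hhalf.ne' (ENNReal.natCast_ne_top (2 * k + 1))).ne'
  obtain ⟨f, hf, hproper, hne⟩ := exists_isFiid_proper hT hμ hinj
    (fun v => by have := hdeg v; rw [Fintype.card_fin]; omega) k
    (hc.map (measurable_of_countable Fin.castSucc))
  have hcast (v : V) : meanMonoDegree G μ (fun x u => (c x u).castSucc) v =
      meanMonoDegree G μ c v := by
    simp [meanMonoDegree, monoDegree, colorCount]
  refine ⟨f, hf, hproper, fun v => ?_⟩
  calc μ {x | f x v = Fin.last q}
      ≤ μ {x | f x v ≠ (c x v).castSucc} :=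
        measure_mono fun x hx h => Fin.castSucc_ne_last _ (h.symm.trans hx)
    _ ≤ _ := hne v
    _ < ε / 2 + ε / 2 := by
        rw [hcast]
        exact ENNReal.add_lt_add (ENNReal.mul_lt_of_lt_div' (hmean v)) hk
    _ = ε := ENNReal.add_halves ε

end AlmostColoring

end FiidColoring

open FiidColoring in
theorem fiid_approximate_four_coloring_of_T4_general {V : Type*} [Countable V]
    {G : SimpleGraph V} [G.LocallyFinite] (hT : G.IsTree) {d q : ℕ}
    (hreg : G.IsRegularOfDegree d) (hdq : d + 2 ≤ 2 * q) (ν : Measure ℝ)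
    [IsProbabilityMeasure ν] [NullSingletonClass ν] {ε : ENNReal} (hε : 0 < ε) :
    ∃ f : (V → ℝ) → V → Fin (q + 1), IsFiid G f ∧
      (∀ᵐ x ∂(Measure.infinitePi fun _ => ν), ∀ u v, G.Adj u v → f x u ≠ f x v) ∧
      ∀ v, Measure.infinitePi (fun _ => ν) {x | f x v = Fin.last q} < ε :=
  exists_isFiid_proper_measure_last_lt hT (isSwapHomogeneous_infinitePi ν hT hreg)
    (ae_injective_infinitePi ν) (fun v => by rwa [hreg v]) hε

/-- **Theorem 1 (main theorem).** For every `ε > 0`, the 4-regular tree `T₄` admits an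
`Aut(T₄)`-fiid 4-coloring in which a given vertex receives the fourth color (color `3`)
with probability less than `ε`.

Here `V` is a countably infinite vertex set, `G` is a tree (connected and acyclic) which is
4-regular, and `μ` is the product over `V` of Lebesgue measure restricted to `[0,1]`
(characterized by its finite-dimensional marginals). An fiid labelling is a measurable map
`f : (V → ℝ) → (V → Fin 4)` which is equivariant for the action of `Aut(G)`,
where `(φ • x) v = x (φ⁻¹ v)` and `(φ • ℓ) v = ℓ (φ⁻¹ v)`. -/
theorem fiid_approximate_four_coloring_of_T4
    (V : Type) [Countable V] [Infinite V]
    (G : SimpleGraph V) (hconn : G.Connected) (hacyc : G.IsAcyclic)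
    (hreg : ∀ v : V, (G.neighborSet v).ncard = 4)
    (μ : Measure (V → ℝ)) [IsProbabilityMeasure μ]
    (hμ : ∀ s : Finset V,
      Measure.map (fun (x : V → ℝ) (v : s) => x v) μ
        = Measure.pi (fun _ : s => volume.restrict (Set.Icc (0:ℝ) 1)))
    (ε : ℝ) (hε : 0 < ε) :
    ∃ f : (V → ℝ) → (V → Fin 4),
      Measurable f ∧
      (∀ (φ : G ≃g G) (x : V → ℝ) (v : V),
        f (fun u => x (φ.symm u)) v = f x (φ.symm v)) ∧
      (∀ᵐ x ∂μ, ∀ u v : V, G.Adj u v → f x u ≠ f x v) ∧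
      (∀ v : V, μ {x | f x v = 3} < ENNReal.ofReal ε) := by
  classical
  let _ : G.LocallyFinite := fun v =>
    (Set.finite_of_ncard_ne_zero (by rw [hreg v]; norm_num)).fintype
  have hdeg : G.IsRegularOfDegree 4 := fun v => by
    rw [← hreg v, ← SimpleGraph.card_neighborSet_eq_degree, Set.ncard_eq_toFinset_card',
      Set.toFinset_card]
  let ν : Measure ℝ := volume.restrict (Set.Icc 0 1)
  have : IsProbabilityMeasure ν := ⟨by simp [ν]⟩
  have hμν : IsProjectiveLimit μ fun s : Finset V => Measure.pi fun _ : s => ν := hμ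
  obtain rfl := hμν.unique (Measure.isProjectiveLimit_infinitePi fun _ : V => ν)
  obtain ⟨f, hf, hproper, hlast⟩ := fiid_approximate_four_coloring_of_T4_general (q := 3)
    ⟨hconn, hacyc⟩ hdeg le_rfl ν (ENNReal.ofReal_pos.2 hε)
  exact ⟨f, hf.measurable, fun φ x v => congrFun (hf.comp_iso φ.symm x) v, hproper, hlast⟩
end

section
/- For every ε > 0 there exists a measurable map f : X → Fin 4 such that for μ-a.e. x ∈ X one has f(s • x) ≠ f(x) for every s ∈ S, and μ({x : f(x) = 3}) < ε. (This is the Bernoulli-shift form of the existence of an fiid 4-coloring of T_4 with one color class of measure < ε.) -/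
open MeasureTheory

/-!
An uncoloured vertex of a partial proper colouring is a *token*. If the colours of the neighbours of
a token do not exhaust the palette, the token can be coloured; otherwise some neighbours carry a
colour that no other neighbour has, and the token can swap places with any of these. With `q`
colours on the tree of degree `2r`, a token that never meets a missing colour can branch in at least
`2q - 2r - 1` ways at every step. Two tokens that can be slid to the same vertex can be merged into
one. So if neither happens within `R` steps, then the tokens reach disjoint sets of vertices, and
invariance of the measure bounds their density by `1 / ∑ i ≤ R, (2q - 2r - 1) ^ i`. Below that
radius, performing one kind of improvement simultaneously at a separated set of points is a
measurable recolouring, at a cost of at most `2R + 2` recoloured points per token removed.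

With `q = r + 1` colours the density of tokens can thus be made arbitrarily small, but only like
`1 / R`, too slowly for the total cost to converge. One more colour makes the density decay like
`3 ^ (-R)`; starting from a colouring with few tokens that avoids the new colour, the total cost is
then finite and small, so the colourings converge almost everywhere and the new colour stays rare.
-/

namespace TokenSliding

open FreeGroup Filter

section FiniteSets

theorem card_filter_lt_card_filter_of_ne {ι : Type*} {s : Finset ι} {p q : ι → Prop}
    [DecidablePred p] [DecidablePred q] {i j k : ι} (hij : i ≠ j) (hi : i ∈ s)
    (hpi : p i) (hj : j ∈ s) (hpj : p j) (hq : ∀ l ∈ s, q l → l = k ∨ (p l ∧ l ≠ i ∧ l ≠ j)) :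
    {l ∈ s | q l}.card < {l ∈ s | p l}.card := by
  classical
  have hi' : i ∈ {l ∈ s | p l} := by simp [hi, hpi]
  have hj' : j ∈ {l ∈ s | p l}.erase i := by simp [hj, hpj, hij.symm]
  calc {l ∈ s | q l}.card ≤ (insert k (({l ∈ s | p l}.erase i).erase j)).card :=
        Finset.card_le_card fun l hl => by
          obtain ⟨hl, hql⟩ := Finset.mem_filter.1 hl
          simp only [Finset.mem_insert, Finset.mem_erase, Finset.mem_filter]
          have := hq l hl hql
          tauto
    _ ≤ (({l ∈ s | p l}.erase i).erase j).card + 1 := Finset.card_insert_le _ _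
    _ < {l ∈ s | p l}.card := by
        rw [Finset.card_erase_add_one hj']
        exact Finset.card_erase_lt_of_mem hi'

theorem two_mul_card_le_card_add_card_unique {ι κ : Type*} [DecidableEq ι] [DecidableEq κ]
    (f : ι → κ) (s : Finset ι) (t : Finset κ) (h : ∀ k ∈ t, ∃ i ∈ s, f i = k) :
    2 * t.card ≤ s.card + {i ∈ s | f i ∈ t ∧ ∀ j ∈ s, f j = f i → j = i}.card := by
  set u := {i ∈ s | f i ∈ t ∧ ∀ j ∈ s, f j = f i → j = i}
  have hfiber : ∀ k ∈ t, 2 ≤ {i ∈ s | f i = k}.card + {i ∈ u | f i = k}.card := by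
    intro k hk
    obtain ⟨i, hi, rfl⟩ := h k hk
    by_cases hi' : i ∈ u
    · have h₁ : 0 < {j ∈ s | f j = f i}.card := Finset.card_pos.2 ⟨i, by simp [hi]⟩
      have h₂ : 0 < {j ∈ u | f j = f i}.card := Finset.card_pos.2 ⟨i, by simp [hi']⟩
      omega
    · simp only [u, Finset.mem_filter, hi, hk, true_and, not_forall] at hi'
      obtain ⟨j, hj, hji, hne⟩ := hi'
      have : 1 < {j ∈ s | f j = f i}.card :=
        Finset.one_lt_card.2 ⟨i, by simp [hi], j, by simp [hj, hji], Ne.symm hne⟩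
      omega
  calc 2 * t.card = ∑ _k ∈ t, 2 := by simp [mul_comm]
    _ ≤ ∑ k ∈ t, ({i ∈ s | f i = k}.card + {i ∈ u | f i = k}.card) := Finset.sum_le_sum hfiber
    _ ≤ s.card + u.card := by
      rw [Finset.sum_add_distrib]
      simp only [Finset.sum_card_fiberwise_eq_card_filter]
      exact add_le_add (Finset.card_filter_le _ _) (Finset.card_filter_le _ _)

end FiniteSets

section ReducedWords

variable {α : Type*}

theorem mk_cons (t : α × Bool) (L : List (α × Bool)) : mk (t :: L) = mk [t] * mk L := by
  simp

theorem mk_singleton_not (t : α × Bool) : mk [(t.1, !t.2)] = (mk [t])⁻¹ := by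
  simp [inv_mk, invRev]

theorem isReduced_cons_or_exists_eq_cons (t : α × Bool) {L : List (α × Bool)} (hL : IsReduced L) :
    IsReduced (t :: L) ∨ ∃ L', L = (t.1, !t.2) :: L' := by
  obtain _ | ⟨s, L'⟩ := L
  · exact .inl .singleton
  · by_cases hts : t.1 = s.1 → t.2 = s.2
    · exact .inl (isReduced_cons_cons.2 ⟨hts, hL⟩)
    · obtain ⟨h₁, h₂⟩ := Classical.not_imp.1 hts
      exact .inr ⟨L', by rw [h₁, Bool.not_eq.2 h₂]⟩

theorem eq_of_mk_eq_of_isReduced {L L' : List (α × Bool)} (hL : IsReduced L)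
    (hL' : IsReduced L') (h : mk L = mk L') : L = L' := by
  classical
  simpa [hL.reduce_eq, hL'.reduce_eq] using reduce.sound h

theorem mk_singleton_ne_one (t : α × Bool) : mk [t] ≠ 1 := fun h => by
  simpa using eq_of_mk_eq_of_isReduced .singleton .nil h

theorem mk_singleton_mul_ne_self (t : α × Bool) (g : FreeGroup α) : mk [t] * g ≠ g :=
  fun h => mk_singleton_ne_one t (mul_eq_right.1 h)

theorem isReduced_invRev_append {s t : α × Bool} {P Q : List (α × Bool)}
    (hP : IsReduced (s :: P)) (hQ : IsReduced (t :: Q)) (hst : s ≠ t) :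
    IsReduced (invRev (s :: P) ++ t :: Q) := by
  have hrev : IsReduced (invRev (s :: P)) := by
    classical
    rw [isReduced_iff_reduce_eq, reduce_invRev, hP.reduce_eq]
  have hsplit : invRev (s :: P) = invRev P ++ [(s.1, !s.2)] := by simp [invRev]
  rw [hsplit] at hrev ⊢
  refine hrev.append_overlap ?_ (by simp)
  obtain h | ⟨Q', h⟩ := isReduced_cons_or_exists_eq_cons (s.1, !s.2) hQ
  · exact h
  · simp only [List.cons.injEq, Bool.not_not] at h
    exact absurd h.1.symm hst

variable [DecidableEq α]

theorem norm_mk_of_isReduced {L : List (α × Bool)} (hL : IsReduced L) :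
    (mk L).norm = L.length := by
  rw [FreeGroup.norm, toWord_mk, hL.reduce_eq]

theorem norm_mk_suffix_mul {s s' : α × Bool} {L L' L₂ : List (α × Bool)} {v : FreeGroup α}
    (hL : IsReduced (s :: L)) (hL' : IsReduced (s' :: L')) (hss' : s ≠ s')
    (hv : mk (s :: L) = mk (s' :: L') * v) (hL₂ : L₂ <:+ L') :
    (s :: L).length < (mk L₂ * v).norm ∧
      (mk L₂ * v).norm ≤ (s :: L).length + (s' :: L').length := by
  obtain ⟨P, rfl⟩ := hL₂
  have hP : IsReduced (s' :: P) := List.IsChain.left_of_append (l₂ := L₂) hL'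
  have hred := isReduced_invRev_append hP hL hss'.symm
  have hmk : mk L₂ * v = mk (invRev (s' :: P) ++ s :: L) := by
    rw [← mul_mk, ← inv_mk, hv, ← List.cons_append, ← mul_mk]
    group
  rw [hmk, norm_mk_of_isReduced hred]
  simp only [List.length_append, invRev_length, List.length_cons]
  omega

end ReducedWords

section PartialColorings

variable {α K : Type*}

/-- Properness of a partial colouring of the left Cayley graph of `FreeGroup α`, in which `g` is
adjacent to `mk [t] * g`. The vertices coloured `none` are uncoloured (they carry a *token*), and
tokens may be adjacent. -/
def IsProper (c : FreeGroup α → Option K) : Prop :=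
  ∀ (t : α × Bool) (g : FreeGroup α), c (mk [t] * g) = c g → c g = none

theorem IsProper.comp_mul_right {c : FreeGroup α → Option K} (hc : IsProper c) (v : FreeGroup α) :
    IsProper fun g => c (g * v) := fun t g => by
  simpa only [mul_assoc] using hc t (g * v)

/-- `Slidable c L` says that a token at `1` can be moved along the reduced word `L`, read from right
to left: each letter prepended leads to a coloured vertex whose colour is not repeated among the
other children of the current vertex. -/
def Slidable (c : FreeGroup α → Option K) : List (α × Bool) → Prop
  | [] => c 1 = none
  | s :: L => Slidable c L ∧ IsReduced (s :: L) ∧ c (mk (s :: L)) ≠ none ∧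
      ∀ t, t ≠ s → IsReduced (t :: L) → c (mk (t :: L)) ≠ c (mk (s :: L))

theorem Slidable.isReduced {c : FreeGroup α → Option K} {L : List (α × Bool)}
    (h : Slidable c L) : IsReduced L := by
  obtain _ | ⟨s, L⟩ := L
  exacts [.nil, h.2.1]

theorem Slidable.apply_one {c : FreeGroup α → Option K} {L : List (α × Bool)}
    (h : Slidable c L) : c 1 = none := by
  induction L with
  | nil => exact h
  | cons s L ih => exact ih h.1

theorem Slidable.eq_one_of_apply_eq_none {c : FreeGroup α → Option K} {L : List (α × Bool)}
    (h : Slidable c L) (hL : c (mk L) = none) : mk L = 1 := by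
  obtain _ | ⟨s, L⟩ := L
  exacts [rfl, absurd hL h.2.2.1]

variable [DecidableEq α]

theorem IsProper.update {c : FreeGroup α → Option K} (hc : IsProper c) (v : FreeGroup α)
    {o : Option K} (ho : o = none ∨ ∀ t, c (mk [t] * v) ≠ o) :
    IsProper (Function.update c v o) := by
  intro t g h
  obtain rfl | hg := eq_or_ne g v
  · rw [Function.update_self, Function.update_of_ne (mk_singleton_mul_ne_self t g)] at h
    rw [Function.update_self]
    exact ho.resolve_right fun ho => ho t h
  · rw [Function.update_of_ne hg] at h ⊢
    obtain rfl | hv := eq_or_ne (mk [t] * g) v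
    · rw [Function.update_self] at h
      obtain ho | ho := ho
      · rw [← h, ho]
      · refine absurd h.symm ?_
        simpa only [mk_singleton_not, inv_mul_cancel_left] using ho (t.1, !t.2)
    · rw [Function.update_of_ne hv] at h
      exact hc t g h

/-- The vertices visited by a token moving from `1` along the word `L`. -/
def path : List (α × Bool) → Finset (FreeGroup α)
  | [] => {1}
  | s :: L => insert (mk (s :: L)) (path L)

/-- The colouring obtained by moving the token at `1` along `L`: in each step the token swaps places
with the colour of the next vertex. -/
def slide (c : FreeGroup α → Option K) : List (α × Bool) → FreeGroup α → Option K
  | [] => c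
  | s :: L => Function.update (Function.update (slide c L) (mk (s :: L)) none) (mk L)
      (c (mk (s :: L)))

/-- The colouring obtained by moving the token at `1` along `L` and then replacing it by the
colour `k`. -/
def fill (c : FreeGroup α → Option K) (L : List (α × Bool)) (k : K) : FreeGroup α → Option K :=
  Function.update (slide c L) (mk L) (some k)

/-- The colouring obtained by moving the token at `v` along `L`. -/
def slideFrom (c : FreeGroup α → Option K) (v : FreeGroup α) (L : List (α × Bool)) :
    FreeGroup α → Option K :=
  fun g => slide (fun g => c (g * v)) L (g * v⁻¹)

theorem mem_path {L : List (α × Bool)} {g : FreeGroup α} :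
    g ∈ path L ↔ ∃ L', L' <:+ L ∧ mk L' = g := by
  induction L with
  | nil => simp [path, one_eq_mk, eq_comm]
  | cons s L ih =>
    simp only [path, Finset.mem_insert, ih, List.suffix_cons_iff, or_and_right, exists_or,
      exists_eq_left, eq_comm (a := g)]

theorem one_mem_path (L : List (α × Bool)) : 1 ∈ path L :=
  mem_path.2 ⟨[], List.nil_suffix, rfl⟩

theorem mk_mem_path (L : List (α × Bool)) : mk L ∈ path L :=
  mem_path.2 ⟨L, List.suffix_rfl, rfl⟩

theorem card_path_le (L : List (α × Bool)) : (path L).card ≤ L.length + 1 := by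
  induction L with
  | nil => simp [path]
  | cons s L ih => exact (Finset.card_insert_le _ _).trans (Nat.add_le_add_right ih 1)

theorem norm_le_length_of_mem_path {L : List (α × Bool)} {g : FreeGroup α} (hg : g ∈ path L) :
    g.norm ≤ L.length := by
  obtain ⟨L', hL', rfl⟩ := mem_path.1 hg
  exact norm_mk_le.trans hL'.length_le

theorem mk_cons_notMem_path {t : α × Bool} {L : List (α × Bool)} (h : IsReduced (t :: L)) :
    mk (t :: L) ∉ path L := fun hmem => by
  have hle := norm_le_length_of_mem_path hmem
  rw [norm_mk_of_isReduced h, List.length_cons] at hle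
  omega

theorem slide_of_notMem_path {c : FreeGroup α → Option K} {L : List (α × Bool)} {g : FreeGroup α}
    (hg : g ∉ path L) : slide c L g = c g := by
  induction L with
  | nil => rfl
  | cons s L ih =>
    obtain ⟨h₁, h₂⟩ := not_or.1 (Finset.mem_insert.not.1 hg)
    have hne : g ≠ mk L := fun h => h₂ (h ▸ mk_mem_path L)
    rw [slide, Function.update_of_ne hne, Function.update_of_ne h₁, ih h₂]

theorem fill_of_notMem_path {c : FreeGroup α → Option K} {L : List (α × Bool)} {k : K}
    {g : FreeGroup α} (hg : g ∉ path L) : fill c L k g = c g := by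
  have hne : g ≠ mk L := fun h => hg (h ▸ mk_mem_path L)
  rw [fill, Function.update_of_ne hne, slide_of_notMem_path hg]

theorem slideFrom_of_mul_inv_notMem_path {c : FreeGroup α → Option K} {L : List (α × Bool)}
    {g v : FreeGroup α} (hg : g * v⁻¹ ∉ path L) : slideFrom c v L g = c g := by
  simp only [slideFrom, slide_of_notMem_path hg, inv_mul_cancel_right]

theorem norm_mul_le_of_mem_path {s s' : α × Bool} {L L' : List (α × Bool)} {g v : FreeGroup α}
    (hL : IsReduced (s :: L)) (hL' : IsReduced (s' :: L')) (hss' : s ≠ s')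
    (hv : mk (s :: L) = mk (s' :: L') * v) (hg : g ∈ path (s' :: L')) :
    (g * v).norm ≤ (s :: L).length + (s' :: L').length := by
  obtain rfl | hg := Finset.mem_insert.1 hg
  · rw [← hv]
    exact norm_mk_le.trans (Nat.le_add_right _ _)
  · obtain ⟨L₂, hL₂, rfl⟩ := mem_path.1 hg
    exact (norm_mk_suffix_mul hL hL' hss' hv hL₂).2

theorem slideFrom_of_norm_le {c : FreeGroup α → Option K} {s s' : α × Bool} {L L' : List (α × Bool)}
    {g v : FreeGroup α} (hL : IsReduced (s :: L)) (hL' : IsReduced (s' :: L')) (hss' : s ≠ s')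
    (hv : mk (s :: L) = mk (s' :: L') * v) (hg : g.norm ≤ (s :: L).length)
    (hne : g ≠ mk (s :: L)) : slideFrom c v (s' :: L') g = c g := by
  refine slideFrom_of_mul_inv_notMem_path fun hmem => ?_
  obtain h | h := Finset.mem_insert.1 hmem
  · exact hne (by rw [hv, ← h, inv_mul_cancel_right])
  · obtain ⟨L₂, hL₂, h⟩ := mem_path.1 h
    have hlt := (norm_mk_suffix_mul hL hL' hss' hv hL₂).1
    rw [h, inv_mul_cancel_right] at hlt
    omega

namespace Slidable

variable {c c' : FreeGroup α → Option K} {L : List (α × Bool)}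

theorem congr (h : Slidable c L) (hcc' : ∀ g : FreeGroup α, g.norm ≤ L.length → c' g = c g) :
    Slidable c' L := by
  induction L with
  | nil => exact (hcc' 1 (by simp)).trans h
  | cons s L ih =>
    obtain ⟨hL, hred, hcol, huniq⟩ := h
    have hchild (t : α × Bool) : c' (mk (t :: L)) = c (mk (t :: L)) :=
      hcc' _ (norm_mk_le.trans (by simp))
    refine ⟨ih hL fun g hg => hcc' g (hg.trans (by simp)), hred, ?_⟩
    simpa only [hchild] using ⟨hcol, huniq⟩

theorem slide_neighbor_ne (hL : Slidable c L) {o : Option K} (ho : c (mk L) ≠ o) {t : α × Bool}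
    (ht : IsReduced (t :: L) → c (mk (t :: L)) ≠ o) : slide c L (mk [t] * mk L) ≠ o := by
  obtain h | ⟨L', rfl⟩ := isReduced_cons_or_exists_eq_cons t hL.isReduced
  · rw [← mk_cons, slide_of_notMem_path (mk_cons_notMem_path h)]
    exact ht h
  · rw [mk_cons _ L', mk_singleton_not, mul_inv_cancel_left, slide, Function.update_self]
    exact ho

theorem isProper_slide (hL : Slidable c L) (hc : IsProper c) : IsProper (slide c L) := by
  induction L with
  | nil => exact hc
  | cons s L ih =>
    obtain ⟨hL, -, hcol, huniq⟩ := hL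
    refine ((ih hL).update _ (.inl rfl)).update _ (.inr fun t => ?_)
    obtain rfl | hts := eq_or_ne t s
    · rw [← mk_cons, Function.update_self]
      exact hcol.symm
    · have hne : mk [t] * mk L ≠ mk (s :: L) := by
        rw [mk_cons s, Ne, mul_left_inj]
        intro h
        simpa [hts] using eq_of_mk_eq_of_isReduced .singleton .singleton h
      rw [Function.update_of_ne hne]
      refine hL.slide_neighbor_ne (fun h => hcol ?_) (huniq t hts)
      rw [← h]
      exact hc s _ (by rw [← mk_cons, h])

theorem isProper_fill (hL : Slidable c L) (hc : IsProper c) {k : K} (hk : c (mk L) ≠ some k)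
    (hchild : ∀ t, IsReduced (t :: L) → c (mk (t :: L)) ≠ some k) : IsProper (fill c L k) :=
  (hL.isProper_slide hc).update _ (.inr fun t => hL.slide_neighbor_ne hk (hchild t))

theorem slide_eq_none_iff (hL : Slidable c L) {g : FreeGroup α} :
    slide c L g = none ↔ (c g = none ∧ g ≠ 1) ∨ g = mk L := by
  induction L with
  | nil =>
    have h₁ : c 1 = none := hL
    by_cases hg : g = 1 <;> simp [slide, hg, h₁, ← one_eq_mk]
  | cons s L ih =>
    obtain ⟨hL, hred, hcol, -⟩ := hL
    have hne : mk L ≠ mk (s :: L) := fun h => mk_cons_notMem_path hred (h ▸ mk_mem_path L)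
    by_cases hg : g = mk L
    · subst hg
      simpa [slide, hcol, hne] using hL.eq_one_of_apply_eq_none
    · by_cases hg' : g = mk (s :: L)
      · simp [slide, hg', hne.symm]
      · simp [slide, hg, hg', ih hL]

theorem slideFrom_eq_none_iff {v : FreeGroup α} (hL : Slidable (fun g => c (g * v)) L)
    {g : FreeGroup α} :
    slideFrom c v L g = none ↔ (c g = none ∧ g ≠ v) ∨ g = mk L * v := by
  simp only [slideFrom, hL.slide_eq_none_iff, inv_mul_cancel_right, ne_eq,
    mul_inv_eq_iff_eq_mul, one_mul]

theorem isProper_slideFrom {v : FreeGroup α} (hL : Slidable (fun g => c (g * v)) L)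
    (hc : IsProper c) : IsProper (slideFrom c v L) :=
  (hL.isProper_slide (hc.comp_mul_right v)).comp_mul_right v⁻¹

theorem fill_eq_none_iff (hL : Slidable c L) {k : K} {g : FreeGroup α} :
    fill c L k g = none ↔ c g = none ∧ g ≠ 1 := by
  by_cases hg : g = mk L
  · subst hg
    simpa [fill] using hL.eq_one_of_apply_eq_none
  · simp [fill, hg, hL.slide_eq_none_iff]

theorem exists_missing_color {s : α × Bool} (hL : Slidable c (s :: L)) (hc : IsProper c)
    (hnone : c' (mk (s :: L)) = none)
    (hcc' : ∀ g : FreeGroup α, g.norm ≤ (s :: L).length → g ≠ mk (s :: L) → c' g = c g) :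
    Slidable c' L ∧
      ∃ k, c' (mk L) ≠ some k ∧ ∀ t, IsReduced (t :: L) → c' (mk (t :: L)) ≠ some k := by
  obtain ⟨hL, hred, hcol, huniq⟩ := hL
  have hnear {g : FreeGroup α} (hg : g.norm ≤ L.length) : c' g = c g := by
    refine hcc' g (hg.trans (by simp)) ?_
    rintro rfl
    rw [norm_mk_of_isReduced hred, List.length_cons] at hg
    omega
  obtain ⟨k, hk⟩ := Option.ne_none_iff_exists'.1 hcol
  refine ⟨hL.congr fun g => hnear, k, ?_, fun t ht => ?_⟩
  · rw [hnear norm_mk_le, ← hk, mk_cons]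
    exact fun h => hcol (by rw [mk_cons, ← h]; exact hc s _ h.symm)
  · obtain rfl | hts := eq_or_ne t s
    · simp [hnone]
    · have hne : mk (t :: L) ≠ mk (s :: L) := fun h =>
        hts (List.cons.inj (eq_of_mk_eq_of_isReduced ht hred h)).1
      rw [hcc' (mk (t :: L)) norm_mk_le hne, ← hk]
      exact huniq t hts ht

end Slidable

/-- A local modification of radius `R` that lowers the number of tokens: only the colours on a set
`D` of at most `2 * R + 2` vertices in the ball of radius `2 * R` around `1` may change. -/
def Improvable (R : ℕ) (c : FreeGroup α → Option K) : Prop :=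
  ∃ (c' : FreeGroup α → Option K) (D : Finset (FreeGroup α)), IsProper c' ∧
    D.card ≤ 2 * R + 2 ∧ (∀ g ∈ D, g.norm ≤ 2 * R) ∧ (∀ g ∉ D, c' g = c g) ∧
      {g ∈ D | c' g = none}.card < {g ∈ D | c g = none}.card

theorem improvable_of_missing_color {R : ℕ} {c : FreeGroup α → Option K} (hc : IsProper c)
    {L : List (α × Bool)} (hL : Slidable c L) (hR : L.length ≤ R) {k : K} (hk : c (mk L) ≠ some k)
    (hchild : ∀ t, IsReduced (t :: L) → c (mk (t :: L)) ≠ some k) : Improvable R c := by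
  refine ⟨fill c L k, path L, hL.isProper_fill hc hk hchild,
    (card_path_le L).trans (by omega),
    fun g hg => (norm_le_length_of_mem_path hg).trans (by omega),
    fun g hg => fill_of_notMem_path hg, Finset.card_lt_card ?_⟩
  simp only [hL.fill_eq_none_iff]
  refine ⟨Finset.monotone_filter_right _ fun g _ h => h.1, fun h => ?_⟩
  have hone := h (Finset.mem_filter.2 ⟨one_mem_path L, hL.apply_one⟩)
  exact (Finset.mem_filter.1 hone).2.2 rfl

theorem improvable_of_collision_of_head_ne {R : ℕ} {c : FreeGroup α → Option K} (hc : IsProper c)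
    {s s' : α × Bool} {L L' : List (α × Bool)} {v : FreeGroup α} (hL : Slidable c (s :: L))
    (hL' : Slidable (fun g => c (g * v)) (s' :: L')) (hR : (s :: L).length ≤ R)
    (hR' : (s' :: L').length ≤ R) (hss' : s ≠ s') (hv : mk (s :: L) = mk (s' :: L') * v) :
    Improvable R c := by
  have hred := hL.isReduced
  have hred' := hL'.isReduced
  have hv1 : v ≠ 1 := by
    rintro rfl
    simpa [hss'] using eq_of_mk_eq_of_isReduced hred hred' (by simpa using hv)
  obtain ⟨hdL, k, hk, hchild⟩ := hL.exists_missing_color hc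
    (hL'.slideFrom_eq_none_iff.2 (.inr hv)) fun g =>
      slideFrom_of_norm_le hred hred' hss' hv
  have hnone (g : FreeGroup α) : fill (slideFrom c v (s' :: L')) L k g = none →
      g = mk (s :: L) ∨ (c g = none ∧ g ≠ v ∧ g ≠ 1) := by
    rw [hdL.fill_eq_none_iff, hL'.slideFrom_eq_none_iff, ← hv]
    tauto
  simp only [List.length_cons] at hR hR'
  refine ⟨fill (slideFrom c v (s' :: L')) L k, path L ∪ (path (s' :: L')).image (· * v),
    hdL.isProper_fill (hL'.isProper_slideFrom hc) hk hchild, ?_, ?_, ?_, ?_⟩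
  · have h₁ := Finset.card_union_le (path L) ((path (s' :: L')).image (· * v))
    have h₂ := (path (s' :: L')).card_image_le (f := (· * v))
    have h₃ := card_path_le L
    have h₄ := card_path_le (s' :: L')
    simp only [List.length_cons] at h₄
    omega
  · intro g hg
    obtain hg | hg := Finset.mem_union.1 hg
    · exact (norm_le_length_of_mem_path hg).trans (by omega)
    · obtain ⟨g', hg', rfl⟩ := Finset.mem_image.1 hg
      have hle := norm_mul_le_of_mem_path hred hred' hss' hv hg'
      simp only [List.length_cons] at hle
      omega
  · intro g hg
    rw [Finset.mem_union, not_or] at hg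
    rw [fill_of_notMem_path hg.1, slideFrom_of_mul_inv_notMem_path]
    exact fun h => hg.2 (Finset.mem_image.2 ⟨_, h, inv_mul_cancel_right g v⟩)
  · have hv0 : c v = none := by simpa using hL'.apply_one
    exact card_filter_lt_card_filter_of_ne hv1 (by simp [one_mem_path]) hv0
      (by simp [one_mem_path]) hL.apply_one fun g _ => hnone g

theorem improvable_of_collision {R : ℕ} {c : FreeGroup α → Option K} (hc : IsProper c)
    {L L' : List (α × Bool)} {v : FreeGroup α} (hL : Slidable c L)
    (hL' : Slidable (fun g => c (g * v)) L') (hR : L.length ≤ R) (hR' : L'.length ≤ R)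
    (hv1 : v ≠ 1) (hv : mk L = mk L' * v) : Improvable R c := by
  induction L generalizing L' with
  | nil =>
    have h := hL'.eq_one_of_apply_eq_none (hv ▸ hL : c (mk L' * v) = none)
    exact absurd (by simpa [h, ← one_eq_mk] using hv.symm) hv1
  | cons s L ih =>
    obtain _ | ⟨s', L'⟩ := L'
    · have h := hL.eq_one_of_apply_eq_none
        (by simpa only [hv, ← one_eq_mk, one_mul] using hL'.apply_one)
      exact absurd (by simpa [h, ← one_eq_mk] using hv.symm) hv1
    · obtain rfl | hss' := eq_or_ne s s'
      · refine ih hL.1 hL'.1 (Nat.le_of_lt hR) (Nat.le_of_lt hR') ?_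
        rwa [mk_cons, mk_cons s L', mul_assoc, mul_right_inj] at hv
      · exact improvable_of_collision_of_head_ne hc hL hL' hR hR' hss' hv

end PartialColorings

section Counting

variable {α K : Type*} [Fintype α]

open Classical in
/-- The words of length at most `R` along which the token at `1` can be moved. -/
noncomputable def slidableWords (c : FreeGroup α → Option K) (R : ℕ) :
    Finset (List (α × Bool)) :=
  {L ∈ (List.finite_length_le (α × Bool) R).toFinset | Slidable c L}

theorem mem_slidableWords {c : FreeGroup α → Option K} {R : ℕ} {L : List (α × Bool)} :
    L ∈ slidableWords c R ↔ L.length ≤ R ∧ Slidable c L := by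
  simp [slidableWords]

variable [Fintype K]

open Classical in
theorem card_reduced_cons_add_le {b : ℕ} {c : FreeGroup α → Option K} {L : List (α × Bool)}
    (hL : Slidable c L) (hb : 2 * Fintype.card α + 1 + b ≤ 2 * Fintype.card K) :
    ({t | IsReduced (t :: L)} : Finset (α × Bool)).card + b ≤
      2 * ({k | c (mk L) ≠ some k} : Finset K).card := by
  have hα : Fintype.card (α × Bool) = 2 * Fintype.card α := by simp [mul_comm]
  obtain _ | ⟨s, L⟩ := L
  · have hfree : ({k | c (mk []) ≠ some k} : Finset K) = Finset.univ :=
      Finset.filter_true_of_mem fun k _ => by simp [show c (mk []) = none from hL]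
    have hchildren := ({t | IsReduced [t]} : Finset (α × Bool)).card_le_univ
    rw [hfree, Finset.card_univ]
    omega
  · have hback : (s.1, !s.2) ∉ ({t | IsReduced (t :: s :: L)} : Finset (α × Bool)) := by
      simp [isReduced_cons_cons]
    have hchildren := Finset.card_lt_univ_of_notMem hback
    obtain ⟨k, hk⟩ := Option.ne_none_iff_exists'.1 hL.2.2.1
    have hfree : ({k' | c (mk (s :: L)) ≠ some k'} : Finset K) = Finset.univ.erase k := by
      ext; simp [hk, eq_comm]
    rw [hfree, Finset.card_erase_of_mem (Finset.mem_univ k), Finset.card_univ]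
    omega

variable [DecidableEq α]

open Classical in
theorem le_card_slidable_cons {R b : ℕ} {c : FreeGroup α → Option K} (hc : IsProper c)
    (hR : ¬Improvable R c) (hb : 2 * Fintype.card α + 1 + b ≤ 2 * Fintype.card K)
    {L : List (α × Bool)} (hL : Slidable c L) (hLR : L.length ≤ R) :
    b ≤ ({t | Slidable c (t :: L)} : Finset (α × Bool)).card := by
  set children : Finset (α × Bool) := {t | IsReduced (t :: L)}
  set free : Finset K := {k | c (mk L) ≠ some k}
  have hfree : ∀ o ∈ free.map .some, ∃ t ∈ children, c (mk (t :: L)) = o := by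
    simp only [Finset.mem_map, forall_exists_index, and_imp]
    rintro _ k hk rfl
    by_contra! hmissing
    exact hR (improvable_of_missing_color hc hL hLR (Finset.mem_filter.1 hk).2 fun t ht =>
      hmissing t (by simpa [children] using ht))
  have hunique := two_mul_card_le_card_add_card_unique (fun t => c (mk (t :: L))) children
    (free.map .some) hfree
  rw [Finset.card_map] at hunique
  refine Nat.le_of_add_le_add_left ((card_reduced_cons_add_le hL hb).trans
    (hunique.trans (Nat.add_le_add_left (Finset.card_le_card fun t ht => ?_) _)))
  simp only [children, Finset.mem_filter, Finset.mem_univ, true_and] at ht ⊢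
  obtain ⟨hred, hcol, huniq⟩ := ht
  refine ⟨hL, hred, ?_, fun u hut hu h => hut (huniq u hu h)⟩
  obtain ⟨k, -, hk⟩ := Finset.mem_map.1 hcol
  simp [← hk]

open Classical in
theorem geom_sum_le_card_slidableWords {R b : ℕ} {c : FreeGroup α → Option K} (hc : IsProper c)
    (hR : ¬Improvable R c) (hb : 2 * Fintype.card α + 1 + b ≤ 2 * Fintype.card K)
    (hroot : c 1 = none) {n : ℕ} (hn : n ≤ R) :
    ∑ i ∈ Finset.range (n + 1), b ^ i ≤ (slidableWords c n).card := by
  induction n with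
  | zero =>
    simpa using Finset.one_le_card.2 ⟨[], mem_slidableWords.2 ⟨le_rfl, hroot⟩⟩
  | succ n ih =>
    set extensions := (slidableWords c n).sigma fun L => {t | Slidable c (t :: L)}
    have hext : b * (slidableWords c n).card ≤ extensions.card := by
      rw [Finset.card_sigma, mul_comm]
      refine Finset.card_nsmul_le_sum _ _ _ fun L hL => ?_
      obtain ⟨hlen, hL⟩ := mem_slidableWords.1 hL
      exact le_card_slidable_cons hc hR hb hL (by omega)
    have hinj : Set.InjOn (fun p : Sigma fun _ => α × Bool => p.2 :: p.1) (extensions : Set _) := by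
      rintro ⟨L, t⟩ - ⟨L', t'⟩ - h
      obtain ⟨rfl, rfl⟩ := List.cons.inj h
      rfl
    have hnil : [] ∉ extensions.image fun p => p.2 :: p.1 := by simp
    have hsub : insert [] (extensions.image fun p => p.2 :: p.1) ⊆ slidableWords c (n + 1) := by
      refine Finset.insert_subset (mem_slidableWords.2 ⟨Nat.zero_le _, hroot⟩) ?_
      simp only [Finset.image_subset_iff, extensions, Finset.mem_sigma, Finset.mem_filter,
        mem_slidableWords]
      exact fun p hp => ⟨Nat.succ_le_succ hp.1.1, hp.2.2⟩
    calc ∑ i ∈ Finset.range (n + 1 + 1), b ^ i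
        = b * ∑ i ∈ Finset.range (n + 1), b ^ i + 1 := geom_sum_succ
      _ ≤ extensions.card + 1 := by
        grw [ih (by omega), hext]
      _ = (insert [] (extensions.image fun p => p.2 :: p.1)).card := by
        rw [Finset.card_insert_of_notMem hnil, Finset.card_image_of_injOn hinj]
      _ ≤ (slidableWords c (n + 1)).card := Finset.card_le_card hsub

end Counting

section MeasurePreserving

open scoped Pointwise Topology

variable {X ι : Type*} [MeasurableSpace X] {μ : Measure X}

theorem exists_div_card_le_measureReal {s : Finset ι} {E : ι → Set X} {a : ℝ} (ha : 0 < a)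
    (h : a ≤ μ.real (⋃ i ∈ s, E i)) : ∃ i ∈ s, a / s.card ≤ μ.real (E i) := by
  have hs : s.Nonempty := by
    by_contra hs
    rw [Finset.not_nonempty_iff_eq_empty.1 hs] at h
    simp only [Finset.notMem_empty, Set.iUnion_of_empty, Set.iUnion_empty, measureReal_empty] at h
    linarith
  refine Finset.exists_le_of_sum_le hs ?_
  have hcard : (s.card : ℝ) ≠ 0 := by exact_mod_cast hs.card_pos.ne'
  calc ∑ _i ∈ s, a / s.card = a := by
        rw [Finset.sum_const, nsmul_eq_mul, mul_div_cancel₀ a hcard]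
    _ ≤ μ.real (⋃ i ∈ s, E i) := h
    _ ≤ ∑ i ∈ s, μ.real (E i) := measureReal_biUnion_finset_le s E

theorem exists_seq_measurableSet_mem_notMem (X : Type*) [MeasurableSpace X]
    [MeasurableSpace.CountablySeparated X] :
    ∃ S : ℕ → Set X, (∀ n, MeasurableSet (S n)) ∧ ∀ x y, x ≠ y → ∃ n, x ∈ S n ∧ y ∉ S n := by
  obtain ⟨S, hS, hsep⟩ := exists_seq_separating X MeasurableSet.empty Set.univ
  obtain ⟨e, he⟩ := exists_surjective_nat (ℕ × Bool)
  refine ⟨fun n => bif (e n).2 then S (e n).1 else (S (e n).1)ᶜ, fun n => ?_, fun x y hxy => ?_⟩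
  · cases h : (e n).2 <;> simp [h, hS]
  · obtain ⟨m, hm⟩ := not_forall.1 fun h => hxy (hsep x trivial y trivial h)
    by_cases hx : x ∈ S m
    · obtain ⟨n, hn⟩ := he (m, true)
      exact ⟨n, by simpa [hn, hx] using hm⟩
    · obtain ⟨n, hn⟩ := he (m, false)
      exact ⟨n, by simpa [hn, hx] using hm⟩

theorem exists_pos_forall_exists_subset_notMem [MeasurableSpace.CountablySeparated X]
    [IsFiniteMeasure μ] {T : X → X} (hT : Measurable T) (hne : ∀ᵐ x ∂μ, T x ≠ x) {a : ℝ}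
    (ha : 0 < a) :
    ∃ b > 0, ∀ A, MeasurableSet A → a ≤ μ.real A →
      ∃ B ⊆ A, MeasurableSet B ∧ b ≤ μ.real B ∧ ∀ x ∈ B, T x ∉ B := by
  obtain ⟨S, hS, hsep⟩ := exists_seq_measurableSet_mem_notMem X
  set E : ℕ → Set X := fun n => S n \ T ⁻¹' S n
  have hE (n : ℕ) : MeasurableSet (E n) := (hS n).diff (hT (hS n))
  set C : ℕ → Set X := fun N => (Set.accumulate E N)ᶜ
  have hC : Tendsto (fun N => μ.real (C N)) atTop (𝓝 0) := by
    have hnull : μ (⋂ N, C N) = 0 := by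
      rw [← Set.compl_iUnion, Set.iUnion_accumulate]
      filter_upwards [hne] with x hx
      simpa [E] using hsep x (T x) hx.symm
    have hlim := tendsto_measure_iInter_atTop (μ := μ) (s := C)
      (fun N => (MeasurableSet.biUnion (Set.to_countable _)
        fun n _ => hE n).compl.nullMeasurableSet)
      (fun _ _ h => Set.compl_subset_compl.2 (Set.monotone_accumulate h)) ⟨0, measure_ne_top μ _⟩
    rw [hnull] at hlim
    exact (ENNReal.tendsto_toReal ENNReal.zero_ne_top).comp hlim
  obtain ⟨N, hN⟩ := (hC.eventually_lt_const (half_pos ha)).exists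
  refine ⟨a / 2 / (Finset.Iic N).card, by positivity, fun A hA haA => ?_⟩
  have hlarge : a / 2 ≤ μ.real (⋃ n ∈ Finset.Iic N, A ∩ E n) := by
    have hcover : A ⊆ (⋃ n ∈ Finset.Iic N, A ∩ E n) ∪ C N := fun x hx => by
      by_cases hxC : x ∈ C N
      · exact .inr hxC
      · exact .inl (by simpa [C, Set.mem_accumulate, hx] using hxC)
    have := (measureReal_mono (μ := μ) hcover).trans (measureReal_union_le _ _)
    linarith
  obtain ⟨n, -, hn⟩ := exists_div_card_le_measureReal (half_pos ha) hlarge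
  exact ⟨A ∩ E n, Set.inter_subset_left, hA.inter (hE n), hn, fun x hx hTx => hx.2.2 hTx.2.1⟩

theorem exists_pos_forall_exists_subset_forall_notMem [MeasurableSpace.CountablySeparated X]
    [IsFiniteMeasure μ] {T : ι → X → X} (hT : ∀ i, Measurable (T i)) (s : Finset ι)
    (hne : ∀ i ∈ s, ∀ᵐ x ∂μ, T i x ≠ x) {a : ℝ} (ha : 0 < a) :
    ∃ b > 0, ∀ A, MeasurableSet A → a ≤ μ.real A →
      ∃ B ⊆ A, MeasurableSet B ∧ b ≤ μ.real B ∧ ∀ i ∈ s, ∀ x ∈ B, T i x ∉ B := by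
  classical
  induction s using Finset.induction_on with
  | empty => exact ⟨a, ha, fun A hA haA => ⟨A, subset_rfl, hA, haA, by simp⟩⟩
  | insert i s _ ih =>
    rw [Finset.forall_mem_insert] at hne
    obtain ⟨b, hb, hs⟩ := ih hne.2
    obtain ⟨b', hb', hi⟩ := exists_pos_forall_exists_subset_notMem (hT i) hne.1 hb
    refine ⟨b', hb', fun A hA haA => ?_⟩
    obtain ⟨B, hBA, hB, hbB, hsB⟩ := hs A hA haA
    obtain ⟨B', hBB', hB', hbB', hiB'⟩ := hi B hB hbB
    refine ⟨B', hBB'.trans hBA, hB', hbB', Finset.forall_mem_insert _ _ _ |>.2 ⟨hiB', ?_⟩⟩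
    exact fun j hj x hx hTx => hsB j hj x (hBB' hx) (hBB' hTx)

theorem natCast_mul_measure_le_of_pairwiseDisjoint_smul {G : Type*} [Group G] [MulAction G X]
    [MeasurableConstSMul G X] [SMulInvariantMeasure G X μ] {s : Finset ι} {γ : ι → G}
    {S : ι → Set X} (hS : ∀ i, MeasurableSet (S i))
    (hdisj : (s : Set ι).PairwiseDisjoint fun i => γ i • S i) {T : Set X} (hT : MeasurableSet T)
    {N : ℕ} (hN : ∀ x ∈ T, ∃ t ⊆ s, N ≤ t.card ∧ ∀ i ∈ t, x ∈ S i) :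
    N * μ T ≤ μ Set.univ := by
  let φ (i : ι) : X → ENNReal := (S i).indicator 1
  have hle (x : X) : T.indicator (fun _ => (N : ENNReal)) x ≤ ∑ i ∈ s, φ i x := by
    by_cases hx : x ∈ T
    swap
    · simp [hx]
    rw [Set.indicator_of_mem hx]
    obtain ⟨t, hts, hNt, ht⟩ := hN x hx
    calc (N : ENNReal) ≤ t.card := by exact_mod_cast hNt
      _ = ∑ i ∈ t, φ i x := by
        simp [φ, Finset.sum_congr rfl fun i hi => Set.indicator_of_mem (ht i hi) (1 : X → ENNReal)]
      _ ≤ ∑ i ∈ s, φ i x := Finset.sum_le_sum_of_subset hts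
  calc N * μ T = ∫⁻ x, T.indicator (fun _ => (N : ENNReal)) x ∂μ :=
        (lintegral_indicator_const hT _).symm
    _ ≤ ∫⁻ x, ∑ i ∈ s, φ i x ∂μ := lintegral_mono hle
    _ = ∑ i ∈ s, μ (S i) := by
      rw [lintegral_finsetSum _ fun i _ => measurable_one.indicator (hS i)]
      simp only [lintegral_indicator_one (hS _)]
    _ = ∑ i ∈ s, μ (γ i • S i) := by simp only [measure_smul]
    _ = μ (⋃ i ∈ s, γ i • S i) :=
      (measure_biUnion_finset hdisj fun i _ => (hS i).const_smul (γ i)).symm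
    _ ≤ μ Set.univ := measure_mono (Set.subset_univ _)

end MeasurePreserving

section Overwrite

open scoped Pointwise

variable {G X β : Type*} [Group G] [MulAction G X]

open Classical in
/-- The labelling that agrees with the pattern `c` on the translates `h • B` for `h ∈ D`, and with
`f` elsewhere. Only meaningful if these translates are pairwise disjoint. -/
noncomputable def overwrite (f : X → β) (D : Finset G) (B : Set X) (c : G → β) (x : X) : β :=
  if hx : ∃ h ∈ D, x ∈ h • B then c hx.choose else f x

variable {f : X → β} {D : Finset G} {B : Set X} {c : G → β}

theorem overwrite_of_notMem {x : X} (hx : ∀ h ∈ D, x ∉ h • B) : overwrite f D B c x = f x :=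
  dif_neg fun ⟨h, hh, hxh⟩ => hx h hh hxh

theorem overwrite_of_mem (hdisj : (D : Set G).PairwiseDisjoint (· • B)) {h : G} (hh : h ∈ D)
    {x : X} (hx : x ∈ h • B) : overwrite f D B c x = c h := by
  have hex : ∃ h ∈ D, x ∈ h • B := ⟨h, hh, hx⟩
  rw [overwrite, dif_pos hex]
  congr 1
  exact hdisj.elim_set hex.choose_spec.1 hh x hex.choose_spec.2 hx

theorem overwrite_eq_self (hdisj : (D : Set G).PairwiseDisjoint (· • B))
    (hf : ∀ h ∈ D, ∀ x ∈ B, f (h • x) = c h) : overwrite f D B c = f := by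
  funext x
  by_cases hx : ∃ h ∈ D, x ∈ h • B
  · obtain ⟨h, hh, hxh⟩ := hx
    rw [overwrite_of_mem hdisj hh hxh]
    obtain ⟨y, hy, rfl⟩ := hxh
    exact (hf h hh y hy).symm
  · exact overwrite_of_notMem fun h hh hxh => hx ⟨h, hh, hxh⟩

theorem setOf_overwrite_ne_subset : {x | overwrite f D B c x ≠ f x} ⊆ ⋃ h ∈ D, h • B := by
  intro x hx
  by_contra hx'
  exact hx (overwrite_of_notMem (by simpa using hx'))

theorem overwrite_preimage_singleton [DecidableEq β] (hdisj : (D : Set G).PairwiseDisjoint (· • B))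
    (k : β) : overwrite f D B c ⁻¹' {k} =
      (f ⁻¹' {k} \ ⋃ h ∈ D, h • B) ∪ ⋃ h ∈ ({h ∈ D | c h = k} : Finset G), h • B := by
  ext x
  by_cases hx : ∃ h ∈ D, x ∈ h • B
  · obtain ⟨h, hh, hxh⟩ := hx
    have hunique (h' : G) (hh' : h' ∈ D) (hxh' : x ∈ h' • B) : h' = h :=
      hdisj.elim_set hh' hh x hxh' hxh
    simp only [Set.mem_preimage, overwrite_of_mem hdisj hh hxh, Set.mem_singleton_iff,
      Set.mem_union, Set.mem_sdiff, Set.mem_iUnion, Finset.mem_filter]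
    grind
  · have hx' : ∀ h ∈ D, x ∉ h • B := by simpa using hx
    simp only [Set.mem_preimage, overwrite_of_notMem hx', Set.mem_singleton_iff,
      Set.mem_union, Set.mem_sdiff, Set.mem_iUnion, Finset.mem_filter]
    grind

variable [MeasurableSpace X] [MeasurableConstSMul G X]

theorem measurableSet_biUnion_smul (D : Finset G) (hB : MeasurableSet B) :
    MeasurableSet (⋃ h ∈ D, h • B) :=
  D.measurableSet_biUnion fun h _ => hB.const_smul h

theorem measurableSet_overwrite_preimage_singleton (hdisj : (D : Set G).PairwiseDisjoint (· • B))
    (hB : MeasurableSet B) {k : β} (hf : MeasurableSet (f ⁻¹' {k})) :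
    MeasurableSet (overwrite f D B c ⁻¹' {k}) := by
  classical
  rw [overwrite_preimage_singleton hdisj]
  exact (hf.diff (measurableSet_biUnion_smul D hB)).union (measurableSet_biUnion_smul _ hB)

variable {μ : Measure X} [IsFiniteMeasure μ] [SMulInvariantMeasure G X μ]

theorem measureReal_biUnion_smul (hdisj : (D : Set G).PairwiseDisjoint (· • B))
    (hB : MeasurableSet B) : μ.real (⋃ h ∈ D, h • B) = D.card * μ.real B := by
  rw [measureReal_biUnion_finset hdisj fun h _ => hB.const_smul h]
  simp [measureReal_def, measure_smul]

theorem measureReal_overwrite_preimage_singleton [DecidableEq β]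
    (hdisj : (D : Set G).PairwiseDisjoint (· • B)) (hB : MeasurableSet B) (k : β) :
    μ.real (overwrite f D B c ⁻¹' {k}) =
      μ.real (f ⁻¹' {k} \ ⋃ h ∈ D, h • B) + {h ∈ D | c h = k}.card * μ.real B := by
  have hsub : (({h ∈ D | c h = k} : Finset G) : Set G) ⊆ D := Finset.coe_subset.2
    (Finset.filter_subset _ _)
  have hdisj' : Disjoint (f ⁻¹' {k} \ ⋃ h ∈ D, h • B)
      (⋃ h ∈ ({h ∈ D | c h = k} : Finset G), h • B) :=
    Set.disjoint_sdiff_left.mono_right (Set.biUnion_subset_biUnion_left hsub)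
  rw [overwrite_preimage_singleton hdisj, measureReal_union hdisj'
      (measurableSet_biUnion_smul _ hB) (measure_ne_top _ _) (measure_ne_top _ _),
    measureReal_biUnion_smul (hdisj.subset hsub) hB]

end Overwrite

section LocalImprovement

open scoped Pointwise

variable {α X K : Type*} [MulAction (FreeGroup α) X]

variable (α) in
/-- A measurable partial colouring of the Schreier graph of an action of `FreeGroup α`, with `none`
marking uncoloured points. Measurability is expressed through the fibres so that no measurable
structure on `Option K` is needed. -/
structure IsPartialColoring [MeasurableSpace X] (f : X → Option K) : Prop where
  measurableSet_fiber (o : Option K) : MeasurableSet (f ⁻¹' {o})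
  isProper (x : X) : IsProper fun g : FreeGroup α => f (g • x)

variable [DecidableEq α]

theorem pairwiseDisjoint_smul_of_norm_le {R : ℕ} {D : Finset (FreeGroup α)} {B : Set X}
    (hsep : ∀ γ : FreeGroup α, γ ≠ 1 → γ.norm ≤ 4 * R + 1 → ∀ x ∈ B, γ • x ∉ B)
    (hD : ∀ h ∈ D, h.norm ≤ 2 * R) : (D : Set (FreeGroup α)).PairwiseDisjoint (· • B) := by
  intro h hh k hk hne
  refine Set.disjoint_left.2 ?_
  rintro _ ⟨x, hx, rfl⟩ hxk
  rw [Set.mem_smul_set_iff_inv_smul_mem, smul_smul] at hxk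
  refine hsep (k⁻¹ * h) (fun h1 => hne (inv_mul_eq_one.1 h1).symm) ?_ x hx hxk
  have h₁ := FreeGroup.norm_mul_le k⁻¹ h
  have h₂ := hD h hh
  have h₃ := hD k hk
  rw [norm_inv_eq] at h₁
  omega

theorem overwrite_smul {R : ℕ} {f : X → Option K} {c c' : FreeGroup α → Option K}
    {D : Finset (FreeGroup α)} {B : Set X}
    (hfc : ∀ x ∈ B, ∀ g : FreeGroup α, g.norm ≤ 2 * R + 1 → f (g • x) = c g)
    (hsep : ∀ γ : FreeGroup α, γ ≠ 1 → γ.norm ≤ 4 * R + 1 → ∀ x ∈ B, γ • x ∉ B)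
    (hD : ∀ h ∈ D, h.norm ≤ 2 * R) (hcc' : ∀ g ∉ D, c' g = c g) {x : X} (hx : x ∈ B)
    {g : FreeGroup α} (hg : g.norm ≤ 2 * R + 1) : overwrite f D B c' (g • x) = c' g := by
  by_cases hgD : g ∈ D
  · exact overwrite_of_mem (pairwiseDisjoint_smul_of_norm_le hsep hD) hgD
      (Set.smul_mem_smul_set hx)
  rw [overwrite_of_notMem fun k hk hxk => ?_, hfc x hx g hg, hcc' g hgD]
  rw [Set.mem_smul_set_iff_inv_smul_mem, smul_smul] at hxk
  refine hsep (k⁻¹ * g) (fun h1 => hgD (inv_mul_eq_one.1 h1 ▸ hk)) ?_ x hx hxk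
  have h₁ := FreeGroup.norm_mul_le k⁻¹ g
  have h₂ := hD k hk
  rw [norm_inv_eq] at h₁
  omega

variable [MeasurableSpace X]

theorem isProper_overwrite {R : ℕ} {f : X → Option K} (hf : IsPartialColoring α f)
    {c c' : FreeGroup α → Option K} (hc' : IsProper c') {D : Finset (FreeGroup α)} {B : Set X}
    (hfc : ∀ x ∈ B, ∀ g : FreeGroup α, g.norm ≤ 2 * R + 1 → f (g • x) = c g)
    (hsep : ∀ γ : FreeGroup α, γ ≠ 1 → γ.norm ≤ 4 * R + 1 → ∀ x ∈ B, γ • x ∉ B)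
    (hD : ∀ h ∈ D, h.norm ≤ 2 * R) (hcc' : ∀ g ∉ D, c' g = c g) (x : X) :
    IsProper fun g : FreeGroup α => overwrite f D B c' (g • x) := by
  intro t g h
  have hlocal {y : X} (hy : y ∈ B) {k : FreeGroup α} (hk : k.norm ≤ 2 * R + 1) :=
    overwrite_smul hfc hsep hD hcc' hy hk
  by_cases hx : ∃ k : FreeGroup α, k.norm ≤ 2 * R + 1 ∧ (mk [t] * k).norm ≤ 2 * R + 1 ∧
      ∃ y ∈ B, g • x = k • y
  · obtain ⟨k, hk, htk, y, hy, hgx⟩ := hx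
    simp only [mul_smul, hgx] at h ⊢
    rw [← mul_smul, hlocal hy hk, hlocal hy htk] at h
    rw [hlocal hy hk]
    exact hc' t k h
  · have ht (s : α × Bool) (k : FreeGroup α) : (mk [s] * k).norm ≤ k.norm + 1 :=
      (FreeGroup.norm_mul_le _ _).trans (by rw [add_comm, norm_mk_of_isReduced .singleton]; simp)
    have hxD : ∀ k ∈ D, g • x ∉ k • B := by
      rintro k hk ⟨y, hy, hgx⟩
      have := hD k hk
      have := ht t k
      exact hx ⟨k, by omega, by omega, y, hy, hgx.symm⟩
    have htxD : ∀ k ∈ D, (mk [t] * g) • x ∉ k • B := by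
      rintro k hk ⟨y, hy, hgx⟩
      have := hD k hk
      have := ht (t.1, !t.2) k
      refine hx ⟨(mk [t])⁻¹ * k, ?_, ?_, y, hy, ?_⟩
      · rw [← mk_singleton_not]; omega
      · rw [mul_inv_cancel_left]; omega
      · rw [mul_smul, eq_inv_smul_iff, ← mul_smul]; exact hgx.symm
    beta_reduce at h ⊢
    rw [overwrite_of_notMem hxD, overwrite_of_notMem htxD] at h
    rw [overwrite_of_notMem hxD]
    exact hf.isProper x t g h

theorem IsPartialColoring.exists_improvement [MeasurableConstSMul (FreeGroup α) X] {μ : Measure X}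
    [IsFiniteMeasure μ] [SMulInvariantMeasure (FreeGroup α) X μ] {R : ℕ} {f : X → Option K}
    (hf : IsPartialColoring α f) {c : FreeGroup α → Option K} (hc : Improvable R c) {B : Set X}
    (hB : MeasurableSet B)
    (hfc : ∀ x ∈ B, ∀ g : FreeGroup α, g.norm ≤ 2 * R + 1 → f (g • x) = c g)
    (hsep : ∀ γ : FreeGroup α, γ ≠ 1 → γ.norm ≤ 4 * R + 1 → ∀ x ∈ B, γ • x ∉ B) :
    ∃ f' : X → Option K, IsPartialColoring α f' ∧
      μ.real (f' ⁻¹' {none}) + μ.real B ≤ μ.real (f ⁻¹' {none}) ∧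
      μ.real {x | f' x ≠ f x} ≤ (2 * R + 2) * μ.real B := by
  classical
  obtain ⟨c', D, hc', hDcard, hD, hcc', hlt⟩ := hc
  have hdisj := pairwiseDisjoint_smul_of_norm_le hsep hD
  refine ⟨overwrite f D B c', ⟨fun o => measurableSet_overwrite_preimage_singleton hdisj hB
    (hf.measurableSet_fiber o), isProper_overwrite hf hc' hfc hsep hD hcc'⟩, ?_, ?_⟩
  · have hself : overwrite f D B c = f := overwrite_eq_self hdisj fun h hh x hx =>
      hfc x hx h ((hD h hh).trans (by omega))
    have hcard : ({h ∈ D | c' h = none}.card + 1 : ℝ) ≤ {h ∈ D | c h = none}.card := by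
      exact_mod_cast hlt
    calc μ.real (overwrite f D B c' ⁻¹' {none}) + μ.real B
        = μ.real (f ⁻¹' {none} \ ⋃ h ∈ D, h • B) +
            ({h ∈ D | c' h = none}.card + 1) * μ.real B := by
          rw [measureReal_overwrite_preimage_singleton hdisj hB]
          ring
      _ ≤ μ.real (f ⁻¹' {none} \ ⋃ h ∈ D, h • B) + {h ∈ D | c h = none}.card * μ.real B := by
          gcongr
      _ = μ.real (f ⁻¹' {none}) := by
          rw [← measureReal_overwrite_preimage_singleton (f := f) (c := c) hdisj hB, hself]
  · calc μ.real {x | overwrite f D B c' x ≠ f x} ≤ μ.real (⋃ h ∈ D, h • B) :=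
          measureReal_mono setOf_overwrite_ne_subset (measure_ne_top _ _)
      _ = D.card * μ.real B := measureReal_biUnion_smul hdisj hB
      _ ≤ (2 * R + 2) * μ.real B := by
          gcongr
          exact_mod_cast hDcard

end LocalImprovement

section Patterns

variable {α X K : Type*} [Finite α] [DecidableEq α] [MulAction (FreeGroup α) X]

variable (α) in
theorem finite_setOf_norm_le (n : ℕ) : {g : FreeGroup α | g.norm ≤ n}.Finite :=
  (List.finite_length_le (α × Bool) n).preimage toWord_injective.injOn

variable (α) in
/-- The ball of radius `n` around `1` in the Cayley graph of `FreeGroup α`. -/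
noncomputable def ball (n : ℕ) : Finset (FreeGroup α) :=
  (finite_setOf_norm_le α n).toFinset

theorem mem_ball {n : ℕ} {g : FreeGroup α} : g ∈ ball α n ↔ g.norm ≤ n := by
  simp [ball]

/-- The labels `f` assigns to the `n`-ball around a point of the Schreier graph. -/
def pattern (n : ℕ) (f : X → Option K) (x : X) (g : ball α n) : Option K :=
  f ((g : FreeGroup α) • x)

theorem pattern_eq_iff {n : ℕ} {f : X → Option K} {x y : X} :
    pattern (α := α) n f x = pattern n f y ↔
      ∀ g : FreeGroup α, g.norm ≤ n → f (g • x) = f (g • y) := by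
  simp [funext_iff, pattern, mem_ball]

variable [MeasurableSpace X] [MeasurableConstSMul (FreeGroup α) X]

theorem measurableSet_pattern_preimage [Finite K] {f : X → Option K} (hf : IsPartialColoring α f)
    (n : ℕ) (P : Set (ball α n → Option K)) : MeasurableSet (pattern n f ⁻¹' P) := by
  rw [← Set.biUnion_preimage_singleton]
  refine .biUnion P.to_countable fun p _ => ?_
  have : pattern n f ⁻¹' {p} =
      ⋂ g : ball α n, (fun x => (g : FreeGroup α) • x) ⁻¹' (f ⁻¹' {p g}) := by
    ext x; simp [funext_iff, pattern]
  rw [this]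
  exact .iInter fun g => measurable_const_smul _ (hf.measurableSet_fiber (p g))

theorem measurableSet_of_norm_le_imp_iff [Finite K] {f : X → Option K}
    (hf : IsPartialColoring α f) (n : ℕ) {p : X → Prop}
    (hp : ∀ x y, (∀ g : FreeGroup α, g.norm ≤ n → f (g • x) = f (g • y)) → p x → p y) :
    MeasurableSet {x | p x} := by
  convert measurableSet_pattern_preimage hf n (pattern n f '' {x | p x})
  refine (Set.subset_preimage_image _ _).antisymm ?_
  rintro y ⟨x, hx, hxy⟩
  exact hp x y (pattern_eq_iff.1 hxy) hx

end Patterns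

section Gain

open scoped Pointwise

variable {α X K : Type*} [MulAction (FreeGroup α) X] [MeasurableSpace X]
  [MeasurableConstSMul (FreeGroup α) X]

theorem measurableSet_setOf_slidable [Finite α] [Finite K] {f : X → Option K}
    (hf : IsPartialColoring α f) (L : List (α × Bool)) :
    MeasurableSet {x | Slidable (fun g : FreeGroup α => f (g • x)) L} := by
  classical
  exact measurableSet_of_norm_le_imp_iff hf L.length fun _ _ hxy h =>
    h.congr fun g hg => (hxy g hg).symm

variable [Fintype α] [Fintype K] {μ : Measure X} [SMulInvariantMeasure (FreeGroup α) X μ]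

theorem geom_sum_mul_measure_le_of_not_improvable [DecidableEq α] {R b : ℕ}
    (hb : 2 * Fintype.card α + 1 + b ≤ 2 * Fintype.card K) {f : X → Option K}
    (hf : IsPartialColoring α f) {T : Set X} (hT : MeasurableSet T) (hTf : T ⊆ f ⁻¹' {none})
    (hTR : ∀ x ∈ T, ¬Improvable R fun g : FreeGroup α => f (g • x)) :
    (∑ i ∈ Finset.range (R + 1), b ^ i : ℕ) * μ T ≤ μ Set.univ := by
  let S (L : List (α × Bool)) : Set X := T ∩ {x | Slidable (fun g : FreeGroup α => f (g • x)) L}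
  let words : Finset (List (α × Bool)) := (List.finite_length_le (α × Bool) R).toFinset
  refine natCast_mul_measure_le_of_pairwiseDisjoint_smul (s := words) (γ := mk) (S := S)
    (fun L => hT.inter (measurableSet_setOf_slidable hf L)) ?_ hT fun x hx => ?_
  · intro L hL L' hL' hne
    refine Set.disjoint_left.2 ?_
    rintro _ ⟨x, ⟨hxT, hx⟩, rfl⟩ ⟨y, ⟨-, hy⟩, hyx⟩
    have hyv : y = ((mk L')⁻¹ * mk L) • x := by
      rw [mul_smul, eq_inv_smul_iff]; exact hyx
    subst hyv
    refine hTR x hxT (improvable_of_collision (hf.isProper x) hx (v := (mk L')⁻¹ * mk L)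
      (by simpa only [mul_smul, Set.mem_ofPred_eq] using hy) (by simpa [words] using hL)
      (by simpa [words] using hL')
      (fun h => hne ?_) (mul_inv_cancel_left _ _).symm)
    exact (eq_of_mk_eq_of_isReduced hy.isReduced hx.isReduced (inv_mul_eq_one.1 h)).symm
  · refine ⟨slidableWords (fun g : FreeGroup α => f (g • x)) R, fun L hL => ?_,
      geom_sum_le_card_slidableWords (hf.isProper x) (hTR x hx) hb ?_ le_rfl,
      fun L hL => ⟨hx, (mem_slidableWords.1 hL).2⟩⟩
    · simpa [words] using (mem_slidableWords.1 hL).1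
    · simpa using hTf hx

theorem measureReal_le_inv_geom_sum_of_not_improvable [DecidableEq α] [IsProbabilityMeasure μ]
    {R b : ℕ} (hb : 2 * Fintype.card α + 1 + b ≤ 2 * Fintype.card K) {f : X → Option K}
    (hf : IsPartialColoring α f) {T : Set X} (hT : MeasurableSet T) (hTf : T ⊆ f ⁻¹' {none})
    (hTR : ∀ x ∈ T, ¬Improvable R fun g : FreeGroup α => f (g • x)) :
    μ.real T ≤ (∑ i ∈ Finset.range (R + 1), (b : ℝ) ^ i)⁻¹ := by
  have h := ENNReal.toReal_mono (measure_ne_top μ _)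
    (geom_sum_mul_measure_le_of_not_improvable (μ := μ) hb hf hT hTf hTR)
  rw [ENNReal.toReal_mul, ENNReal.toReal_natCast, measure_univ, ENNReal.toReal_one] at h
  have hpos : 0 < ∑ i ∈ Finset.range (R + 1), (b : ℝ) ^ i := by
    rw [Finset.sum_range_succ']; positivity
  rw [← one_div, le_div_iff₀' hpos]
  exact_mod_cast h

theorem exists_pos_forall_exists_improvement [MeasurableSpace.CountablySeparated X]
    [IsProbabilityMeasure μ] (hfree : ∀ γ : FreeGroup α, γ ≠ 1 → ∀ᵐ x ∂μ, γ • x ≠ x) {R b : ℕ}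
    (hb : 2 * Fintype.card α + 1 + b ≤ 2 * Fintype.card K) {a : ℝ} (ha : 0 < a) :
    ∃ δ > 0, ∀ f : X → Option K, IsPartialColoring α f →
      (∑ i ∈ Finset.range (R + 1), (b : ℝ) ^ i)⁻¹ + a ≤ μ.real (f ⁻¹' {none}) →
      ∃ f', IsPartialColoring α f' ∧ μ.real (f' ⁻¹' {none}) + δ ≤ μ.real (f ⁻¹' {none}) ∧
        μ.real {x | f' x ≠ f x} ≤
          (2 * R + 2) * (μ.real (f ⁻¹' {none}) - μ.real (f' ⁻¹' {none})) := by
  classical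
  let patterns : Finset (ball α (2 * R + 1) → Option K) := Finset.univ
  have hpatterns : 0 < patterns.card := Finset.card_pos.2 Finset.univ_nonempty
  obtain ⟨δ, hδ, hsep⟩ := exists_pos_forall_exists_subset_forall_notMem (μ := μ)
    (T := fun (γ : FreeGroup α) (x : X) => γ • x) (fun γ => measurable_const_smul γ)
    ((ball α (4 * R + 1)).erase 1) (fun γ hγ => hfree γ (Finset.ne_of_mem_erase hγ))
    (a := a / patterns.card) (by positivity)
  refine ⟨δ, hδ, fun f hf hlarge => ?_⟩
  let orbit (x : X) (g : FreeGroup α) : Option K := f (g • x)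
  let φ : X → ball α (2 * R + 1) → Option K := pattern (2 * R + 1) f
  set A : Set X := φ ⁻¹' (φ '' {x | Improvable R (orbit x)})
  have hA : MeasurableSet A := measurableSet_pattern_preimage hf _ _
  have hbad : μ.real (f ⁻¹' {none} \ A) ≤ (∑ i ∈ Finset.range (R + 1), (b : ℝ) ^ i)⁻¹ :=
    measureReal_le_inv_geom_sum_of_not_improvable hb hf ((hf.measurableSet_fiber none).diff hA)
      Set.sdiff_subset fun x hx himp => hx.2 ⟨x, himp, rfl⟩
  have haA : a ≤ μ.real (⋃ p ∈ patterns, A ∩ φ ⁻¹' {p}) := by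
    have hfibers : ⋃ p ∈ patterns, A ∩ φ ⁻¹' {p} = A := by
      ext x; simp [patterns]
    rw [hfibers]
    have := measureReal_mono (μ := μ) (Set.inter_subset_right (s := f ⁻¹' {none}) (t := A))
    have := measureReal_inter_add_sdiff (μ := μ) (s := f ⁻¹' {none}) hA
    linarith
  obtain ⟨p, -, hp⟩ := exists_div_card_le_measureReal ha haA
  obtain ⟨B, hBA, hB, hδB, hBsep⟩ := hsep _
    (hA.inter (measurableSet_pattern_preimage hf _ _)) hp
  have hBne : B.Nonempty := by
    by_contra h
    rw [Set.not_nonempty_iff_eq_empty.1 h, measureReal_empty] at hδB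
    linarith
  obtain ⟨y, hy⟩ := hBne
  obtain ⟨x, hx, hxy⟩ := (hBA hy).1
  obtain ⟨f', hf', hdrop, hchange⟩ := hf.exists_improvement (μ := μ) hx hB
    (fun z hz => pattern_eq_iff.1 ((hBA hz).2.trans ((hBA hy).2.symm.trans hxy.symm)))
    (fun γ hγ hγR => hBsep γ (Finset.mem_erase.2 ⟨hγ, mem_ball.2 hγR⟩))
  refine ⟨f', hf', by linarith, hchange.trans ?_⟩
  gcongr
  linarith

end Gain

section Iteration

variable {α X K : Type*} [MeasurableSpace X] [MulAction (FreeGroup α) X]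

theorem isPartialColoring_none : IsPartialColoring α fun _ : X => (none : Option K) where
  measurableSet_fiber o := .const (none ∈ ({o} : Set (Option K)))
  isProper _ _ _ _ := rfl

theorem IsPartialColoring.map {L : Type*} {f : X → Option K} (hf : IsPartialColoring α f)
    {e : K → L} (he : e.Injective) : IsPartialColoring α fun x => (f x).map e where
  measurableSet_fiber o := by
    change MeasurableSet (f ⁻¹' (Option.map e ⁻¹' {o}))
    have hsub : (Option.map e ⁻¹' {o}).Subsingleton :=
      Set.subsingleton_singleton.preimage (Option.map_injective he)
    obtain h | ⟨o', h⟩ := hsub.eq_empty_or_singleton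
    · simp [h]
    · rw [h]; exact hf.measurableSet_fiber o'
  isProper x t g h := by
    simp [hf.isProper x t g (Option.map_injective he h)]

variable [Fintype α] [Fintype K] [MeasurableSpace.CountablySeparated X]
  [MeasurableConstSMul (FreeGroup α) X] {μ : Measure X} [IsProbabilityMeasure μ]
  [SMulInvariantMeasure (FreeGroup α) X μ]

theorem IsPartialColoring.exists_measureReal_le
    (hfree : ∀ γ : FreeGroup α, γ ≠ 1 → ∀ᵐ x ∂μ, γ • x ≠ x) {R b : ℕ}
    (hb : 2 * Fintype.card α + 1 + b ≤ 2 * Fintype.card K) {a : ℝ}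
    (ha : (∑ i ∈ Finset.range (R + 1), (b : ℝ) ^ i)⁻¹ < a) {f : X → Option K}
    (hf : IsPartialColoring α f) :
    ∃ f', IsPartialColoring α f' ∧ μ.real (f' ⁻¹' {none}) ≤ a ∧ μ.real {x | f' x ≠ f x} ≤
      (2 * R + 2) * (μ.real (f ⁻¹' {none}) - μ.real (f' ⁻¹' {none})) := by
  classical
  obtain ⟨δ, hδ, himprove⟩ :=
    exists_pos_forall_exists_improvement hfree hb (R := R) (sub_pos.2 ha)
  obtain ⟨n, hn⟩ := Archimedean.arch (μ.real (f ⁻¹' {none})) hδ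
  rw [nsmul_eq_mul] at hn
  induction n generalizing f with
  | zero =>
    have ha0 : 0 ≤ a := ha.le.trans' (by positivity)
    exact ⟨f, hf, hn.trans (by simpa using ha0), by simp⟩
  | succ n ih =>
    obtain hfa | hfa := le_total (μ.real (f ⁻¹' {none})) a
    · exact ⟨f, hf, hfa, by simp⟩
    obtain ⟨f₁, hf₁, hdrop, hchange⟩ := himprove f hf (by linarith)
    obtain ⟨f', hf', hle, hchange'⟩ := ih hf₁ (by push_cast at hn; linarith)
    refine ⟨f', hf', hle, ?_⟩
    have hsub : {x | f' x ≠ f x} ⊆ {x | f' x ≠ f₁ x} ∪ {x | f₁ x ≠ f x} := fun x hx => by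
      by_contra h
      simp only [Set.mem_union, Set.mem_ofPred_eq, not_or, not_not] at h
      exact hx (h.1.trans h.2)
    have := (measureReal_mono (μ := μ) hsub).trans (measureReal_union_le _ _)
    linarith

theorem exists_isPartialColoring_measureReal_le
    (hfree : ∀ γ : FreeGroup α, γ ≠ 1 → ∀ᵐ x ∂μ, γ • x ≠ x)
    (hK : Fintype.card α + 1 ≤ Fintype.card K) {a : ℝ} (ha : 0 < a) :
    ∃ f : X → Option K, IsPartialColoring α f ∧ μ.real (f ⁻¹' {none}) ≤ a := by
  obtain ⟨R, hR⟩ := exists_nat_one_div_lt ha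
  obtain ⟨f, hf, hfa, -⟩ := isPartialColoring_none.exists_measureReal_le (μ := μ) (X := X) (K := K)
    hfree (R := R) (b := 1) (by omega) (by simpa using hR)
  exact ⟨f, hf, hfa⟩

theorem exists_isPartialColoring_forall_ne
    (hfree : ∀ γ : FreeGroup α, γ ≠ 1 → ∀ᵐ x ∂μ, γ • x ≠ x)
    (hK : Fintype.card α + 2 ≤ Fintype.card K) (k₀ : K) {a : ℝ} (ha : 0 < a) :
    ∃ f : X → Option K, IsPartialColoring α f ∧ (∀ x, f x ≠ some k₀) ∧
      μ.real (f ⁻¹' {none}) ≤ a := by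
  classical
  obtain ⟨f, hf, hfa⟩ := exists_isPartialColoring_measureReal_le (K := {k // k ≠ k₀}) hfree
    (by rw [Fintype.card_subtype_compl, Fintype.card_subtype_eq]; omega) ha
  refine ⟨_, hf.map Subtype.val_injective, fun x hx => ?_, ?_⟩
  · obtain ⟨k, -, hk⟩ := Option.map_eq_some_iff.1 hx
    exact k.2 hk
  · convert hfa using 2
    ext; simp

theorem IsPartialColoring.exists_measureReal_le_half_pow
    (hfree : ∀ γ : FreeGroup α, γ ≠ 1 → ∀ᵐ x ∂μ, γ • x ≠ x)
    (hK : Fintype.card α + 2 ≤ Fintype.card K) {f : X → Option K} (hf : IsPartialColoring α f)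
    {n : ℕ} (hn : μ.real (f ⁻¹' {none}) ≤ (1 / 2) ^ n) :
    ∃ f', IsPartialColoring α f' ∧ μ.real (f' ⁻¹' {none}) ≤ (1 / 2) ^ (n + 1) ∧
      μ.real {x | f' x ≠ f x} ≤ (2 * n + 4) * (1 / 2) ^ n := by
  have hsum : (∑ i ∈ Finset.range (n + 1 + 1), ((3 : ℕ) : ℝ) ^ i)⁻¹ < (1 / 2) ^ (n + 1) := by
    calc (∑ i ∈ Finset.range (n + 1 + 1), ((3 : ℕ) : ℝ) ^ i)⁻¹ ≤ (3 ^ (n + 1))⁻¹ := by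
          gcongr
          exact_mod_cast Finset.single_le_sum (f := fun i => 3 ^ i) (fun _ _ => Nat.zero_le _)
            (Finset.self_mem_range_succ (n + 1))
      _ < (2 ^ (n + 1))⁻¹ := by gcongr; norm_num
      _ = (1 / 2) ^ (n + 1) := by rw [one_div, inv_pow]
  obtain ⟨f', hf', hle, hchange⟩ := hf.exists_measureReal_le hfree (by omega) hsum
  refine ⟨f', hf', hle, hchange.trans ?_⟩
  have hdrop : μ.real (f ⁻¹' {none}) - μ.real (f' ⁻¹' {none}) ≤ (1 / 2) ^ n :=
    (sub_le_self _ measureReal_nonneg).trans hn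
  grw [hdrop]
  push_cast
  exact le_of_eq (by ring)

theorem exists_seq_isPartialColoring
    (hfree : ∀ γ : FreeGroup α, γ ≠ 1 → ∀ᵐ x ∂μ, γ • x ≠ x)
    (hK : Fintype.card α + 2 ≤ Fintype.card K) (k₀ : K) (N : ℕ) :
    ∃ F : ℕ → X → Option K, (∀ n, IsPartialColoring α (F n)) ∧ (∀ x, F 0 x ≠ some k₀) ∧
      (∀ n, μ.real (F n ⁻¹' {none}) ≤ (1 / 2) ^ (n + N)) ∧
      ∀ n, μ.real {x | F (n + 1) x ≠ F n x} ≤ (2 * (n + N : ℕ) + 4) * (1 / 2) ^ (n + N) := by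
  obtain ⟨f₀, hf₀, hne, hsmall⟩ := exists_isPartialColoring_forall_ne hfree hK k₀
    (a := (1 / 2) ^ N) (by positivity)
  choose! next hnext hsmall_next hchange using
    fun (n : ℕ) (f : X → Option K) (h : IsPartialColoring α f ∧ μ.real (f ⁻¹' {none}) ≤ (1 / 2) ^ n)
      => h.1.exists_measureReal_le_half_pow hfree hK h.2
  let F (n : ℕ) : X → Option K := Nat.rec f₀ (fun n f => next (n + N) f) n
  have hF (n : ℕ) : IsPartialColoring α (F n) ∧ μ.real (F n ⁻¹' {none}) ≤ (1 / 2) ^ (n + N) := by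
    induction n with
    | zero => exact ⟨hf₀, by simpa [F] using hsmall⟩
    | succ n ih =>
      refine ⟨hnext _ _ ih, ?_⟩
      rw [Nat.add_right_comm]
      exact hsmall_next _ _ ih
  exact ⟨F, fun n => (hF n).1, hne, fun n => (hF n).2, fun n => hchange _ _ (hF n)⟩

end Iteration

section Limit

variable {α X K : Type*}

open Classical in
/-- The colour on which the partial colourings `F n` settle at `x`, with the junk value `k₀` if they
do not settle on a colour. -/
noncomputable def eventualColor (F : ℕ → X → Option K) (k₀ : K) (x : X) : K :=
  if h : ∃ k, ∀ᶠ n in atTop, F n x = some k then h.choose else k₀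

theorem eventualColor_eq {F : ℕ → X → Option K} {k₀ k : K} {x : X}
    (h : ∀ᶠ n in atTop, F n x = some k) : eventualColor F k₀ x = k := by
  have hex : ∃ k, ∀ᶠ n in atTop, F n x = some k := ⟨k, h⟩
  rw [eventualColor, dif_pos hex]
  obtain ⟨n, hn, hn'⟩ := (hex.choose_spec.and h).exists
  exact Option.some_injective _ (hn.symm.trans hn')

theorem eventualColor_preimage_singleton (F : ℕ → X → Option K) (k₀ k : K) :
    eventualColor F k₀ ⁻¹' {k} = {x | ∀ᶠ n in atTop, F n x = some k} ∪
      ((⋃ k', {x | ∀ᶠ n in atTop, F n x = some k'})ᶜ ∩ {_x | k₀ = k}) := by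
  ext x
  simp only [Set.mem_preimage, Set.mem_singleton_iff, Set.mem_union, Set.mem_inter_iff,
    Set.mem_compl_iff, Set.mem_iUnion, Set.mem_ofPred_eq]
  by_cases h : ∃ k', ∀ᶠ n in atTop, F n x = some k'
  · obtain ⟨k', hk'⟩ := h
    rw [eventualColor_eq hk']
    refine ⟨fun hkk' => .inl (hkk' ▸ hk'), fun hx => ?_⟩
    obtain hk | ⟨hx, -⟩ := hx
    · exact (eventualColor_eq (k₀ := k₀) hk').symm.trans (eventualColor_eq hk)
    · exact absurd ⟨k', hk'⟩ hx
  · rw [eventualColor, dif_neg h]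
    exact ⟨fun hk => .inr ⟨h, hk⟩, fun hx => hx.elim (fun hk => absurd ⟨k, hk⟩ h) And.right⟩

theorem measurable_eventualColor [MeasurableSpace X] [Countable K] [MeasurableSpace K]
    {F : ℕ → X → Option K} (hF : ∀ n o, MeasurableSet (F n ⁻¹' {o})) (k₀ : K) :
    Measurable (eventualColor F k₀) := by
  have hE (k : K) : MeasurableSet {x | ∀ᶠ n in atTop, F n x = some k} := by
    convert MeasurableSet.measurableSet_liminf fun n => hF n (some k)
    ext x
    simp [mem_liminf_iff_eventually_mem]
  refine measurable_to_countable' fun k => ?_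
  rw [eventualColor_preimage_singleton]
  exact (hE k).union (.inter (.compl (.iUnion hE)) (.const _))

theorem eventually_eq_of_eventually_succ_eq {β : Type*} {u : ℕ → β}
    (h : ∀ᶠ n in atTop, u (n + 1) = u n) : ∃ b, ∀ᶠ n in atTop, u n = b := by
  obtain ⟨N, hN⟩ := eventually_atTop.1 h
  exact ⟨u N, eventually_atTop.2 ⟨N, fun n hn => Nat.le_induction rfl
    (fun m hm ih => (hN m hm).trans ih) n hn⟩⟩

variable [MeasurableSpace X] {μ : Measure X}

theorem ae_eventually_eq_eventualColor {F : ℕ → X → Option K} (k₀ : K)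
    (hnone : ∑' n, μ (F n ⁻¹' {none}) ≠ ⊤) (hchange : ∑' n, μ {x | F (n + 1) x ≠ F n x} ≠ ⊤) :
    ∀ᵐ x ∂μ, ∀ᶠ n in atTop, F n x = some (eventualColor F k₀ x) := by
  filter_upwards [ae_eventually_notMem hnone, ae_eventually_notMem hchange] with x hx hx'
  simp only [ne_eq, not_not] at hx'
  obtain ⟨o, ho⟩ := eventually_eq_of_eventually_succ_eq (u := (F · x)) hx'
  obtain ⟨n, hn, hn'⟩ := (hx.and ho).exists
  obtain ⟨k, hk⟩ := Option.ne_none_iff_exists'.1 (hn' ▸ hn : o ≠ none)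
  rw [hk] at ho
  rwa [eventualColor_eq ho]

theorem measure_eventualColor_eq_le {F : ℕ → X → Option K} {k₀ : K} (hF₀ : ∀ x, F 0 x ≠ some k₀)
    (hnone : ∑' n, μ (F n ⁻¹' {none}) ≠ ⊤) (hchange : ∑' n, μ {x | F (n + 1) x ≠ F n x} ≠ ⊤) :
    μ {x | eventualColor F k₀ x = k₀} ≤ ∑' n, μ {x | F (n + 1) x ≠ F n x} := by
  refine (measure_mono_ae ?_).trans (measure_iUnion_le _)
  filter_upwards [ae_eventually_eq_eventualColor k₀ hnone hchange] with x hx (hxk : _ = k₀)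
  rw [hxk] at hx
  obtain ⟨n, hn⟩ := hx.exists
  by_contra hconst
  have hconst' (m : ℕ) : F (m + 1) x = F m x := by
    by_contra h
    exact hconst (Set.mem_iUnion.2 ⟨m, h⟩)
  have hn₀ : F n x = F 0 x := by
    induction n with
    | zero => rfl
    | succ m ih => exact (hconst' m).trans (ih ((hconst' m).symm.trans hn))
  exact hF₀ x (hn₀.symm.trans hn)

theorem ae_eventualColor_smul_ne [MulAction (FreeGroup α) X] [MeasurableConstSMul (FreeGroup α) X]
    [SMulInvariantMeasure (FreeGroup α) X μ] [Countable α] {F : ℕ → X → Option K}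
    (hF : ∀ n, IsPartialColoring α (F n)) (k₀ : K) (hnone : ∑' n, μ (F n ⁻¹' {none}) ≠ ⊤)
    (hchange : ∑' n, μ {x | F (n + 1) x ≠ F n x} ≠ ⊤) :
    ∀ᵐ x ∂μ, ∀ t : α × Bool, eventualColor F k₀ (mk [t] • x) ≠ eventualColor F k₀ x := by
  have hlim := ae_eventually_eq_eventualColor k₀ hnone hchange
  have hlim' : ∀ᵐ x ∂μ, ∀ t : α × Bool, ∀ᶠ n in atTop,
      F n (mk [t] • x) = some (eventualColor F k₀ (mk [t] • x)) :=
    ae_all_iff.2 fun t => (measurePreserving_smul (mk [t]) μ).quasiMeasurePreserving.ae hlim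
  filter_upwards [hlim, hlim'] with x hx hx' t heq
  obtain ⟨n, hn, hn'⟩ := (hx.and (hx' t)).exists
  have := (hF n).isProper x t 1
  simp [hn, hn', heq] at this

theorem tsum_measure_le_ofReal_tsum [IsFiniteMeasure μ] {s : ℕ → Set X} {u : ℕ → ℝ}
    (hu : Summable u) (hsu : ∀ n, μ.real (s n) ≤ u n) :
    ∑' n, μ (s n) ≤ ENNReal.ofReal (∑' n, u n) := by
  rw [ENNReal.ofReal_tsum_of_nonneg (fun n => measureReal_nonneg.trans (hsu n)) hu]
  exact ENNReal.tsum_le_tsum fun n => (ENNReal.le_ofReal_iff_toReal_le (measure_ne_top μ _)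
    (measureReal_nonneg.trans (hsu n))).2 (hsu n)

theorem summable_two_mul_add_four_mul_half_pow :
    Summable fun n : ℕ => (2 * n + 4 : ℝ) * (1 / 2) ^ n := by
  have hlin := summable_pow_mul_geometric_of_norm_lt_one 1 (r := (1 / 2 : ℝ)) (by norm_num)
  refine ((hlin.mul_left 2).add (summable_geometric_two.mul_left 4)).congr fun n => ?_
  ring

end Limit

section BernoulliShift

variable {G ι E : Type*} [Group G] [MulAction G ι] [MeasurableSpace E]

attribute [local instance] arrowAction

theorem measurableConstSMul_arrow : MeasurableConstSMul G (ι → E) where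
  measurable_const_smul g := measurable_pi_lambda _ fun i => measurable_pi_apply (g⁻¹ • i)

variable (ν : Measure E) [IsProbabilityMeasure ν]

theorem smulInvariantMeasure_infinitePi :
    SMulInvariantMeasure G (ι → E) (Measure.infinitePi fun _ : ι => ν) where
  measure_preimage_smul g s hs := by
    have hmap := Measure.map_infinitePi_infinitePi_of_inj (P := fun _ : ι => ν)
      (MulAction.injective (β := ι) g⁻¹)
    nth_rw 2 [← hmap]
    rw [Measure.map_apply (by fun_prop) hs]
    rfl

theorem ae_smul_ne_infinitePi [MeasurableEq E] [NullSingletonClass ν] {g : G} {i : ι}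
    (hi : g⁻¹ • i ≠ i) :
    ∀ᵐ x ∂Measure.infinitePi fun _ : ι => ν, g • x ≠ x := by
  have hdiag : ∀ᵐ p ∂ν.prod ν, p.1 ≠ p.2 :=
    (Measure.ae_prod_iff_ae_ae (measurableSet_eq_fun measurable_fst measurable_snd).compl).2
      (.of_forall fun x => (ν.ae_ne x).mono fun _ => Ne.symm)
  rw [← Measure.infinitePi_map_eval_prod (P := fun _ : ι => ν) hi] at hdiag
  filter_upwards [ae_of_ae_map (by fun_prop) hdiag] with x hx h
  exact hx (congrFun h i)

end BernoulliShift

end TokenSliding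

open TokenSliding FreeGroup Filter in
theorem bernoulli_shift_F2_approximate_four_coloring_general {α X K : Type*} [Fintype α]
    [Fintype K] [MeasurableSpace K] [MeasurableSpace X] [MeasurableSpace.CountablySeparated X]
    [MulAction (FreeGroup α) X] [MeasurableConstSMul (FreeGroup α) X] (μ : Measure X)
    [IsProbabilityMeasure μ] [SMulInvariantMeasure (FreeGroup α) X μ]
    (hfree : ∀ γ : FreeGroup α, γ ≠ 1 → ∀ᵐ x ∂μ, γ • x ≠ x)
    (hK : Fintype.card α + 2 ≤ Fintype.card K) (k₀ : K) {ε : ℝ} (hε : 0 < ε) :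
    ∃ f : X → K, Measurable f ∧
      (∀ᵐ x ∂μ, ∀ s : FreeGroup α,
        (∃ i : α, s = FreeGroup.of i ∨ s = (FreeGroup.of i)⁻¹) → f (s • x) ≠ f x) ∧
      μ {x | f x = k₀} < ENNReal.ofReal ε := by
  let u (n : ℕ) : ℝ := (2 * n + 4) * (1 / 2) ^ n
  have hu : Summable u := summable_two_mul_add_four_mul_half_pow
  obtain ⟨N, hN⟩ := ((tendsto_sum_nat_add u).eventually_lt_const hε).exists
  obtain ⟨F, hF, hF₀, hnone, hchange⟩ := exists_seq_isPartialColoring (μ := μ) hfree hK k₀ N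
  have hnone' := ((tsum_measure_le_ofReal_tsum ((summable_nat_add_iff N).2 summable_geometric_two)
    hnone).trans_lt ENNReal.ofReal_lt_top).ne
  have hchange' := tsum_measure_le_ofReal_tsum ((summable_nat_add_iff N).2 hu) hchange
  have hchange_top := (hchange'.trans_lt ENNReal.ofReal_lt_top).ne
  refine ⟨eventualColor F k₀, measurable_eventualColor (fun n => (hF n).measurableSet_fiber) k₀,
    ?_, ?_⟩
  · filter_upwards [ae_eventualColor_smul_ne hF k₀ hnone' hchange_top] with x hx
    rintro _ ⟨i, rfl | rfl⟩
    exacts [hx (i, true), hx (i, false)]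
  · exact (measure_eventualColor_eq_le hF₀ hnone' hchange_top).trans_lt
      (hchange'.trans_lt ((ENNReal.ofReal_lt_ofReal_iff hε).2 hN))

/-- Bernoulli shift form: for every ε > 0 there is a measurable map
`f : (FreeGroup (Fin 2) → ℝ) → Fin 4` which is a.e. a proper coloring of the Schreier
graph of the shift (i.e. `f (s • x) ≠ f x` for every generator or inverse generator `s`)
and whose color class `3` has measure less than ε. Here μ is the product over the group
of Lebesgue measure on [0,1], characterized by its finite marginals, and
`(γ • x) δ = x (γ⁻¹ * δ)`. -/
theorem bernoulli_shift_F2_approximate_four_coloring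
    (μ : Measure (FreeGroup (Fin 2) → ℝ)) [IsProbabilityMeasure μ]
    (hμ : ∀ s : Finset (FreeGroup (Fin 2)),
      Measure.map (fun (x : FreeGroup (Fin 2) → ℝ) (v : s) => x v) μ
        = Measure.pi (fun _ : s => volume.restrict (Set.Icc (0:ℝ) 1)))
    (ε : ℝ) (hε : 0 < ε) :
    ∃ f : (FreeGroup (Fin 2) → ℝ) → Fin 4,
      Measurable f ∧
      (∀ᵐ x ∂μ, ∀ s : FreeGroup (Fin 2),
        (∃ i : Fin 2, s = FreeGroup.of i ∨ s = (FreeGroup.of i)⁻¹) →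
          f (fun δ => x (s⁻¹ * δ)) ≠ f x) ∧
      μ {x | f x = 3} < ENNReal.ofReal ε := by
  let _ : MulAction (FreeGroup (Fin 2)) (FreeGroup (Fin 2) → ℝ) := arrowAction
  have : MeasurableConstSMul (FreeGroup (Fin 2)) (FreeGroup (Fin 2) → ℝ) :=
    TokenSliding.measurableConstSMul_arrow
  let ν : Measure ℝ := volume.restrict (Set.Icc 0 1)
  have : IsProbabilityMeasure ν := ⟨by simp [ν]⟩
  obtain rfl : μ = Measure.infinitePi fun _ => ν :=
    IsProjectiveLimit.unique hμ (Measure.isProjectiveLimit_infinitePi _)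
  have := TokenSliding.smulInvariantMeasure_infinitePi (G := FreeGroup (Fin 2))
    (ι := FreeGroup (Fin 2)) ν
  exact bernoulli_shift_F2_approximate_four_coloring_general _
    (fun γ hγ => TokenSliding.ae_smul_ne_infinitePi ν (i := 1) (by simpa using hγ)) (by simp) 3 hε
end
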